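/- arXiv:2508.01163 — 5 statements merged into one kernel-verified Lean document; each statement's English description precedes it below -/
import Mathlib

section
/- Suppose that every 2-connected finite simple graph H satisfies s(H) ≤ C(n⁻(H), 2). Then every finite simple graph G satisfies s(G) ≤ C(n⁻(G), 2). -/
/-!
Write `f n = n + C(n, 2)`; the bound to prove is `n⁺(G) ≤ f (n⁻(G))`, and `f` is monotone with
`f (a + b) ≥ f a + f b + a * b`.  The proof is by strong induction on the number of vertices.

* If `G` has a vertex `u` whose neighbours all lie in `{w}`, then either `u` is isolated and
  deleting it does not decrease `n⁺` nor increase `n⁻`, or `uw` is an edge and deleting both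
  vertices lowers `n⁺` by at most one and `n⁻` by at least one
  (`inertia_isolated`, `inertia_pendant`).
* Otherwise, if `G` is not 2-connected, there are nonempty disjoint vertex sets `S`, `T` with no
  edges between them that cover all vertices except perhaps one vertex `w`.  Then
  `n⁺(G) ≤ n⁺(S) + n⁺(T) + 1` and `n⁻(G) ≥ n⁻(S) + n⁻(T)` (`inertia_separation`).  If `n⁻(S)` and
  `n⁻(T)` are both positive, the term `a * b ≥ 1` absorbs the extra `1`.  If one of them vanishes,
  that part has no edges, so any of its vertices has all neighbours in `{w}`.

All inertia estimates are dimension counts with the quadratic form of the adjacency matrix: there is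
an `n⁻`-dimensional space on which the form is negative definite, and `n⁻` linear conditions which
force it to be nonnegative, and likewise for `n⁺`.
-/

open Matrix

/-- The adjacency matrix of a simple graph over `ℝ` is Hermitian. -/
theorem SimpleGraph.adjHerm {V : Type*} [Fintype V] [DecidableEq V] (G : SimpleGraph V)
    [DecidableRel G.Adj] : (G.adjMatrix ℝ).IsHermitian := by
  unfold Matrix.IsHermitian
  rw [conjTranspose_eq_transpose_of_trivial]
  exact G.isSymm_adjMatrix

/-- `n⁺(G)`: the number of positive eigenvalues of the adjacency matrix of `G`,
counted with multiplicity. -/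
noncomputable def SimpleGraph.posInertia {V : Type*} [Finite V] (G : SimpleGraph V) : ℕ :=
  letI := Fintype.ofFinite V
  letI := Classical.decEq V
  letI : DecidableRel G.Adj := Classical.decRel _
  Nat.card {v : V // 0 < G.adjHerm.eigenvalues v}

/-- `n⁻(G)`: the number of negative eigenvalues of the adjacency matrix of `G`,
counted with multiplicity. -/
noncomputable def SimpleGraph.negInertia {V : Type*} [Finite V] (G : SimpleGraph V) : ℕ :=
  letI := Fintype.ofFinite V
  letI := Classical.decEq V
  letI : DecidableRel G.Adj := Classical.decRel _
  Nat.card {v : V // G.adjHerm.eigenvalues v < 0}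
/-- The signature `s(G) = n⁺(G) - n⁻(G)` of a graph, as an integer. -/
noncomputable def SimpleGraph.signature {V : Type*} [Finite V] (G : SimpleGraph V) : ℤ :=
  (G.posInertia : ℤ) - (G.negInertia : ℤ)

/-- A finite simple graph is 2-connected if it is connected, has at least 3 vertices, and
remains connected after deleting any single vertex. -/
def SimpleGraph.IsTwoConnected {W : Type*} [Finite W] (H : SimpleGraph W) : Prop :=
  H.Connected ∧ 3 ≤ Nat.card W ∧ ∀ w : W, (H.induce ({w}ᶜ : Set W)).Connected

namespace SimpleGraph

/-! ### The adjacency form -/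

open Classical in
/-- The bilinear form `∑ x i * y j` over ordered pairs of adjacent vertices `(i, j)`. -/
noncomputable def adjForm {V : Type*} [Finite V] (G : SimpleGraph V) (x y : V → ℝ) : ℝ :=
  letI := Fintype.ofFinite V
  ∑ i, ∑ j, if G.Adj i j then x i * y j else 0

section Form

variable {V : Type*} [Finite V] (G : SimpleGraph V)

lemma adjForm_add_left (x y z : V → ℝ) :
    G.adjForm (x + y) z = G.adjForm x z + G.adjForm y z := by
  simp only [adjForm, ← Finset.sum_add_distrib]
  refine Finset.sum_congr rfl fun i _ => Finset.sum_congr rfl fun j _ => ?_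
  split_ifs <;> simp [add_mul]

lemma adjForm_comm (x y : V → ℝ) : G.adjForm x y = G.adjForm y x := by
  simp only [adjForm]
  rw [Finset.sum_comm]
  refine Finset.sum_congr rfl fun i _ => Finset.sum_congr rfl fun j _ => ?_
  rw [G.adj_comm]
  split_ifs <;> simp [mul_comm]

lemma adjForm_add_self (x y : V → ℝ) :
    G.adjForm (x + y) (x + y) = G.adjForm x x + 2 * G.adjForm x y + G.adjForm y y := by
  rw [adjForm_add_left, adjForm_comm G x, adjForm_comm G y, adjForm_add_left, adjForm_add_left,
    adjForm_comm G y x]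
  ring

lemma adjForm_eq_zero {x y : V → ℝ} (h : ∀ i j, G.Adj i j → x i = 0 ∨ y j = 0) :
    G.adjForm x y = 0 := by
  simp only [adjForm]
  refine Finset.sum_eq_zero fun i _ => Finset.sum_eq_zero fun j _ => ?_
  split_ifs with hij
  · rcases h i j hij with h | h <;> simp [h]
  · rfl

lemma adjForm_single_left [DecidableEq V] (u : V) (a : ℝ) (y : V → ℝ) :
    G.adjForm (Pi.single u a) y = a * G.adjForm (Pi.single u 1) y := by
  simp only [adjForm, Finset.mul_sum]
  refine Finset.sum_congr rfl fun i _ => Finset.sum_congr rfl fun j _ => ?_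
  split_ifs
  · rcases eq_or_ne i u with rfl | hi <;> simp [*]
  · simp

lemma adjForm_single_single [DecidableEq V] {u v : V} (h : G.Adj u v) :
    G.adjForm (Pi.single u 1) (Pi.single v 1) = 1 := by
  let _ := Fintype.ofFinite V
  simp only [adjForm]
  rw [Finset.sum_eq_single u, Finset.sum_eq_single v]
  · simp [h]
  · intro j _ hj
    simp [hj]
  · simp
  · intro j _ hj
    simp [hj]
  · simp

lemma adjForm_single_self [DecidableEq V] (u : V) (a b : ℝ) :
    G.adjForm (Pi.single u a) (Pi.single u b) = 0 := by
  refine adjForm_eq_zero G fun i j hij => ?_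
  rcases eq_or_ne i u with rfl | hi
  · right
    simp [hij.ne']
  · simp [hi]

lemma adjForm_induce (S : Set V) {x y : V → ℝ} (hx : ∀ i ∉ S, x i = 0) (hy : ∀ i ∉ S, y i = 0) :
    (G.induce S).adjForm (fun i => x i) (fun i => y i) = G.adjForm x y := by
  let _ := Fintype.ofFinite V
  let _ := Fintype.ofFinite S
  simp only [adjForm]
  refine Fintype.sum_of_injective (Subtype.val : S → V) Subtype.val_injective _ _ ?_ ?_
  · intro i hi
    have : x i = 0 := hx i (by simpa using hi)
    simp [this]
  · intro i
    refine Fintype.sum_of_injective (Subtype.val : S → V) Subtype.val_injective _ _ ?_ ?_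
    · intro j hj
      have : y j = 0 := hy j (by simpa using hj)
      simp [this]
    · intro j
      rfl

end Form

/-! ### Inertia indices as dimensions -/

/-- Spectral decomposition in coordinates: an orthogonal matrix `U` whose transpose turns the
quadratic form of `A` into the diagonal form of the eigenvalues. -/
lemma exists_diagonalization {V : Type*} [Fintype V] [DecidableEq V] {A : Matrix V V ℝ}
    (hA : A.IsHermitian) :
    ∃ U : Matrix V V ℝ, Uᵀ * U = 1 ∧
      ∀ x, x ⬝ᵥ A *ᵥ x = ∑ i, hA.eigenvalues i * ((Uᵀ *ᵥ x) i) ^ 2 := by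
  refine ⟨(hA.eigenvectorUnitary : Matrix V V ℝ), ?_, ?_⟩
  · have := (Matrix.mem_unitaryGroup_iff').1 hA.eigenvectorUnitary.2
    rwa [Matrix.star_eq_conjTranspose, conjTranspose_eq_transpose_of_trivial] at this
  · intro x
    set U : Matrix V V ℝ := (hA.eigenvectorUnitary : Matrix V V ℝ) with hU
    have h : A = U * diagonal hA.eigenvalues * Uᵀ := by
      have := hA.spectral_theorem
      rw [Unitary.conjStarAlgAut_apply, Matrix.star_eq_conjTranspose,
        conjTranspose_eq_transpose_of_trivial] at this
      exact this
    have h2 : x ⬝ᵥ A *ᵥ x = (Uᵀ *ᵥ x) ⬝ᵥ (diagonal hA.eigenvalues *ᵥ (Uᵀ *ᵥ x)) := by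
      conv_lhs => rw [h]
      rw [← Matrix.mulVec_mulVec, ← Matrix.mulVec_mulVec, Matrix.dotProduct_mulVec,
        Matrix.mulVec_transpose U x]
    rw [h2]
    simp only [dotProduct, mulVec_diagonal]
    exact Finset.sum_congr rfl fun i _ => by ring

/-- For a set `p` of eigenvalues: a parametrization of the sum of the eigenspaces in `p`, and the
coordinates on that sum. On the range of the first map only eigenvalues in `p` contribute to the
quadratic form, on the kernel of the second only those outside `p`. -/
lemma exists_spectral_maps {V : Type*} [Fintype V] [DecidableEq V] {A : Matrix V V ℝ}
    (hA : A.IsHermitian) (p : ℝ → Prop) (n : ℕ)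
    (hn : Nat.card {v : V // p (hA.eigenvalues v)} = n) :
    (∃ φ : (Fin n → ℝ) →ₗ[ℝ] (V → ℝ), ∀ c ≠ 0, ∃ y : V → ℝ, y ≠ 0 ∧
      (∀ i, ¬ p (hA.eigenvalues i) → y i = 0) ∧
      φ c ⬝ᵥ A *ᵥ φ c = ∑ i, hA.eigenvalues i * (y i) ^ 2) ∧
    (∃ ψ : (V → ℝ) →ₗ[ℝ] (Fin n → ℝ), ∀ x, ψ x = 0 → ∃ y : V → ℝ,
      (∀ i, p (hA.eigenvalues i) → y i = 0) ∧
      x ⬝ᵥ A *ᵥ x = ∑ i, hA.eigenvalues i * (y i) ^ 2) := by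
  obtain ⟨U, hU, hQ⟩ := exists_diagonalization hA
  subst hn
  let e : {v : V // p (hA.eigenvalues v)} ≃ Fin (Nat.card {v : V // p (hA.eigenvalues v)}) :=
    Finite.equivFin _
  constructor
  · refine ⟨U.mulVecLin ∘ₗ Function.ExtendByZero.linearMap ℝ Subtype.val ∘ₗ
      LinearMap.funLeft ℝ ℝ e, fun c hc => ?_⟩
    refine ⟨Function.extend Subtype.val (c ∘ e) 0, ?_, ?_, ?_⟩
    · intro h0
      apply hc
      funext k
      have := congrFun h0 (e.symm k).1
      rw [Subtype.val_injective.extend_apply] at this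
      simpa using this
    · intro i hi
      rw [Function.extend_apply']
      · rfl
      · rintro ⟨a, rfl⟩
        exact hi a.2
    · rw [hQ]
      have : Uᵀ *ᵥ ((U.mulVecLin ∘ₗ Function.ExtendByZero.linearMap ℝ Subtype.val ∘ₗ
          LinearMap.funLeft ℝ ℝ e) c) = Function.extend Subtype.val (c ∘ e) 0 := by
        change Uᵀ *ᵥ (U *ᵥ _) = _
        rw [Matrix.mulVec_mulVec, hU, Matrix.one_mulVec]
        rfl
      rw [this]
  · refine ⟨LinearMap.funLeft ℝ ℝ (fun k => (e.symm k).1) ∘ₗ Uᵀ.mulVecLin, fun x hx => ?_⟩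
    refine ⟨Uᵀ *ᵥ x, fun i hi => ?_, hQ x⟩
    have : (Uᵀ *ᵥ x) (e.symm (e ⟨i, hi⟩)).1 = 0 := congrFun hx (e ⟨i, hi⟩)
    rwa [Equiv.symm_apply_apply] at this

lemma adjForm_eq_dotProduct {V : Type*} [Fintype V] [DecidableEq V] (G : SimpleGraph V)
    [DecidableRel G.Adj] (x : V → ℝ) : G.adjForm x x = x ⬝ᵥ G.adjMatrix ℝ *ᵥ x := by
  simp only [adjForm, dotProduct, mulVec, Finset.mul_sum]
  refine Finset.sum_congr (by ext; simp) fun i _ => Finset.sum_congr (by ext; simp) fun j _ => ?_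
  simp only [adjMatrix_apply]
  split_ifs <;> simp

section Index

variable {V : Type*} [Finite V] (G : SimpleGraph V)

lemma exists_neg_param : ∃ φ : (Fin G.negInertia → ℝ) →ₗ[ℝ] (V → ℝ),
    ∀ c ≠ 0, G.adjForm (φ c) (φ c) < 0 := by
  let _ := Fintype.ofFinite V
  let _ := Classical.decEq V
  let _ : DecidableRel G.Adj := Classical.decRel _
  obtain ⟨φ, hφ⟩ := (exists_spectral_maps G.adjHerm (· < 0) G.negInertia rfl).1
  refine ⟨φ, fun c hc => ?_⟩
  obtain ⟨y, hy, h0, hs⟩ := hφ c hc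
  rw [adjForm_eq_dotProduct, hs]
  obtain ⟨k, hk⟩ := Function.ne_iff.1 hy
  change y k ≠ 0 at hk
  refine Finset.sum_neg' (fun i _ => ?_) ⟨k, Finset.mem_univ k, ?_⟩
  · by_cases hi : G.adjHerm.eigenvalues i < 0
    · exact mul_nonpos_of_nonpos_of_nonneg hi.le (sq_nonneg _)
    · simp [h0 i hi]
  · have hlt : G.adjHerm.eigenvalues k < 0 := by
      by_contra h
      exact hk (h0 k h)
    exact mul_neg_of_neg_of_pos hlt (by positivity)

lemma exists_pos_param : ∃ φ : (Fin G.posInertia → ℝ) →ₗ[ℝ] (V → ℝ),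
    ∀ c ≠ 0, 0 < G.adjForm (φ c) (φ c) := by
  let _ := Fintype.ofFinite V
  let _ := Classical.decEq V
  let _ : DecidableRel G.Adj := Classical.decRel _
  obtain ⟨φ, hφ⟩ := (exists_spectral_maps G.adjHerm (0 < ·) G.posInertia rfl).1
  refine ⟨φ, fun c hc => ?_⟩
  obtain ⟨y, hy, h0, hs⟩ := hφ c hc
  rw [adjForm_eq_dotProduct, hs]
  obtain ⟨k, hk⟩ := Function.ne_iff.1 hy
  change y k ≠ 0 at hk
  refine Finset.sum_pos' (fun i _ => ?_) ⟨k, Finset.mem_univ k, ?_⟩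
  · by_cases hi : 0 < G.adjHerm.eigenvalues i
    · exact mul_nonneg hi.le (sq_nonneg _)
    · simp [h0 i hi]
  · have hlt : 0 < G.adjHerm.eigenvalues k := by
      by_contra h
      exact hk (h0 k h)
    exact mul_pos hlt (by positivity)

lemma exists_neg_coords : ∃ ψ : (V → ℝ) →ₗ[ℝ] (Fin G.negInertia → ℝ),
    ∀ x, ψ x = 0 → 0 ≤ G.adjForm x x := by
  let _ := Fintype.ofFinite V
  let _ := Classical.decEq V
  let _ : DecidableRel G.Adj := Classical.decRel _
  obtain ⟨ψ, hψ⟩ := (exists_spectral_maps G.adjHerm (· < 0) G.negInertia rfl).2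
  refine ⟨ψ, fun x hx => ?_⟩
  obtain ⟨y, h0, hs⟩ := hψ x hx
  rw [adjForm_eq_dotProduct, hs]
  refine Finset.sum_nonneg fun i _ => ?_
  by_cases hi : G.adjHerm.eigenvalues i < 0
  · simp [h0 i hi]
  · exact mul_nonneg (not_lt.1 hi) (sq_nonneg _)

lemma exists_pos_coords : ∃ ψ : (V → ℝ) →ₗ[ℝ] (Fin G.posInertia → ℝ),
    ∀ x, ψ x = 0 → G.adjForm x x ≤ 0 := by
  let _ := Fintype.ofFinite V
  let _ := Classical.decEq V
  let _ : DecidableRel G.Adj := Classical.decRel _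
  obtain ⟨ψ, hψ⟩ := (exists_spectral_maps G.adjHerm (0 < ·) G.posInertia rfl).2
  refine ⟨ψ, fun x hx => ?_⟩
  obtain ⟨y, h0, hs⟩ := hψ x hx
  rw [adjForm_eq_dotProduct, hs]
  refine Finset.sum_nonpos fun i _ => ?_
  by_cases hi : 0 < G.adjHerm.eigenvalues i
  · simp [h0 i hi]
  · exact mul_nonpos_of_nonpos_of_nonneg (not_lt.1 hi) (sq_nonneg _)

lemma finrank_le_negInertia {W : Type*} [AddCommGroup W] [Module ℝ W] [FiniteDimensional ℝ W]
    (φ : W →ₗ[ℝ] (V → ℝ)) (hφ : ∀ c ≠ 0, G.adjForm (φ c) (φ c) < 0) :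
    Module.finrank ℝ W ≤ G.negInertia := by
  obtain ⟨ψ, hψ⟩ := G.exists_neg_coords
  have hinj : Function.Injective (ψ ∘ₗ φ) := by
    refine (injective_iff_map_eq_zero _).2 fun c hc => ?_
    by_contra h
    exact absurd (hφ c h) (not_lt.2 (hψ _ hc))
  simpa using LinearMap.finrank_le_finrank_of_injective hinj

lemma posInertia_le_finrank {W : Type*} [AddCommGroup W] [Module ℝ W] [FiniteDimensional ℝ W]
    (ψ : (V → ℝ) →ₗ[ℝ] W) (hψ : ∀ x, ψ x = 0 → G.adjForm x x ≤ 0) :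
    G.posInertia ≤ Module.finrank ℝ W := by
  obtain ⟨φ, hφ⟩ := G.exists_pos_param
  have hinj : Function.Injective (ψ ∘ₗ φ) := by
    refine (injective_iff_map_eq_zero _).2 fun c hc => ?_
    by_contra h
    exact absurd (hφ c h) (not_lt.2 (hψ _ hc))
  simpa using LinearMap.finrank_le_finrank_of_injective hinj

lemma exists_neg_param_induce (S : Set V) :
    ∃ φ : (Fin (G.induce S).negInertia → ℝ) →ₗ[ℝ] (V → ℝ),
      (∀ c, ∀ i ∉ S, φ c i = 0) ∧ ∀ c ≠ 0, G.adjForm (φ c) (φ c) < 0 := by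
  obtain ⟨φ, hφ⟩ := (G.induce S).exists_neg_param
  have h0 : ∀ c, ∀ i ∉ S, Function.extend (Subtype.val : S → V) (φ c) 0 i = 0 := by
    intro c i hi
    rw [Function.extend_apply']
    · rfl
    · rintro ⟨a, rfl⟩
      exact hi a.2
  refine ⟨Function.ExtendByZero.linearMap ℝ Subtype.val ∘ₗ φ, h0, fun c hc => ?_⟩
  have := adjForm_induce G S (h0 c) (h0 c)
  simp only [Subtype.val_injective.extend_apply] at this
  exact this ▸ hφ c hc

lemma exists_pos_coords_induce (S : Set V) :
    ∃ ψ : (V → ℝ) →ₗ[ℝ] (Fin (G.induce S).posInertia → ℝ),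
      ∀ x, ψ x = 0 → ∀ z : V → ℝ, (∀ i ∈ S, z i = x i) → (∀ i ∉ S, z i = 0) →
        G.adjForm z z ≤ 0 := by
  obtain ⟨ψ, hψ⟩ := (G.induce S).exists_pos_coords
  refine ⟨ψ ∘ₗ LinearMap.funLeft ℝ ℝ Subtype.val, fun x hx z hz hz0 => ?_⟩
  rw [← adjForm_induce G S hz0 hz0]
  apply hψ
  have : (fun i : S => z i) = LinearMap.funLeft ℝ ℝ Subtype.val x := by
    funext i
    exact hz i i.2
  rw [this]
  exact hx

/-! ### Deleting vertices -/

lemma not_adj_of_negInertia_eq_zero (h : G.negInertia = 0) (u v : V) : ¬ G.Adj u v := by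
  classical
  intro huv
  obtain ⟨ψ, hψ⟩ := G.exists_neg_coords
  have h1 := hψ (Pi.single u 1 + Pi.single v (-1)) (by
    funext k
    exact (Fin.cast h k).elim0)
  rw [adjForm_add_self, adjForm_single_self, adjForm_single_self, adjForm_comm,
    adjForm_single_left, adjForm_single_single G huv.symm] at h1
  norm_num at h1

lemma inertia_isolated (u : V) (hu : ∀ v, ¬ G.Adj u v) :
    G.posInertia ≤ (G.induce ({u}ᶜ : Set V)).posInertia ∧
      (G.induce ({u}ᶜ : Set V)).negInertia ≤ G.negInertia := by
  classical
  constructor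
  · obtain ⟨ψ, hψ⟩ := G.exists_pos_coords_induce {u}ᶜ
    have := G.posInertia_le_finrank ψ fun x hx => by
      have hz := hψ x hx (Function.update x u 0)
        (fun i hi => Function.update_of_ne (by simpa using hi) _ _)
        (fun i hi => by
          obtain rfl : i = u := by simpa using hi
          simp)
      have hsplit : x = Function.update x u 0 + Pi.single u (x u) := by
        funext i
        rcases eq_or_ne i u with rfl | hi <;> simp [*]
      rw [hsplit, adjForm_add_self, adjForm_single_self,
        adjForm_eq_zero G (x := Function.update x u 0) (y := Pi.single u (x u))]
      · simpa using hz
      · intro i j hij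
        right
        have : j ≠ u := by
          rintro rfl
          exact hu i hij.symm
        simp [this]
    simpa using this
  · obtain ⟨φ, -, hφ⟩ := G.exists_neg_param_induce {u}ᶜ
    simpa using G.finrank_le_negInertia φ hφ

/-- For a pendant edge `uv`, a negative definite space of `G - u - v` can be sheared along `u` to
become orthogonal to both `u` and `v`, and then extended by the negative vector `e_u - e_v`. -/
lemma inertia_pendant (u v : V) (huv : G.Adj u v) (hu : ∀ w, G.Adj u w → w = v) :
    G.posInertia ≤ (G.induce ({u, v}ᶜ : Set V)).posInertia + 1 ∧
      (G.induce ({u, v}ᶜ : Set V)).negInertia + 1 ≤ G.negInertia := by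
  classical
  have hne : u ≠ v := huv.ne
  constructor
  · obtain ⟨ψ, hψ⟩ := G.exists_pos_coords_induce {u, v}ᶜ
    have := G.posInertia_le_finrank (ψ.prod (LinearMap.proj v : (V → ℝ) →ₗ[ℝ] ℝ))
      fun x hx => by
        obtain ⟨hx1, hx2⟩ := Prod.mk.inj hx
        change x v = 0 at hx2
        have hz := hψ x hx1 (Function.update x u 0)
          (fun i hi => Function.update_of_ne (by
            rintro rfl
            simp at hi) _ _)
          (fun i hi => by
            have : i = u ∨ i = v := by simpa using (not_not.1 hi)
            rcases this with rfl | rfl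
            · simp
            · simp [hne.symm, hx2])
        have hsplit : x = Function.update x u 0 + Pi.single u (x u) := by
          funext i
          rcases eq_or_ne i u with rfl | hi <;> simp [*]
        rw [hsplit, adjForm_add_self, adjForm_single_self,
          adjForm_eq_zero G (x := Function.update x u 0) (y := Pi.single u (x u))]
        · simpa using hz
        · intro i j hij
          rcases eq_or_ne j u with rfl | hj
          · left
            rw [hu i hij.symm]
            simp [hne.symm, hx2]
          · simp [hj]
    simpa using this
  · obtain ⟨φ, hφ0, hφ⟩ := G.exists_neg_param_induce {u, v}ᶜ
    -- `ℓ` is the row of `v` in the adjacency matrix, as a linear functional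
    let ℓ : (V → ℝ) →ₗ[ℝ] ℝ :=
      { toFun := fun x => G.adjForm x (Pi.single v 1)
        map_add' := fun x y => adjForm_add_left G x y _
        map_smul' := fun a x => by
          simp only [adjForm, Finset.mul_sum, RingHom.id_apply, smul_eq_mul]
          refine Finset.sum_congr rfl fun i _ => Finset.sum_congr rfl fun j _ => ?_
          split_ifs <;> simp [mul_assoc] }
    let Φ : ((Fin (G.induce ({u, v}ᶜ : Set V)).negInertia → ℝ) × ℝ) →ₗ[ℝ] (V → ℝ) :=
      LinearMap.coprod (φ - (LinearMap.single ℝ (fun _ : V => ℝ) u) ∘ₗ ℓ ∘ₗ φ)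
        (LinearMap.toSpanSingleton ℝ (V → ℝ) (Pi.single u 1 + Pi.single v (-1)))
    have hval : ∀ c t, G.adjForm (Φ (c, t)) (Φ (c, t)) =
        G.adjForm (φ c) (φ c) - 2 * t ^ 2 := by
      intro c t
      have hΦ : Φ (c, t) = φ c + (Pi.single u (t - ℓ (φ c)) + Pi.single v (-t)) := by
        simp only [Φ, LinearMap.coprod_apply, LinearMap.toSpanSingleton_apply,
          LinearMap.sub_apply, LinearMap.comp_apply, LinearMap.single_apply]
        funext i
        rcases eq_or_ne i u with rfl | hi
        · simp [hne]; ring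
        · rcases eq_or_ne i v with rfl | hi'
          · simp [hi]
          · simp [hi, hi']
      have hu0 : G.adjForm (Pi.single u 1) (φ c) = 0 := by
        refine adjForm_eq_zero G fun i j hij => ?_
        rcases eq_or_ne i u with rfl | hi
        · right
          rw [hu j hij]
          exact hφ0 c v (by simp)
        · simp [hi]
      have hv0 : G.adjForm (Pi.single v 1) (φ c) = ℓ (φ c) := adjForm_comm G _ _
      have e1 : G.adjForm (Pi.single u (t - ℓ (φ c))) (Pi.single v (-t)) =
          (t - ℓ (φ c)) * (-t) := by
        rw [adjForm_single_left, adjForm_comm, adjForm_single_left, adjForm_comm,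
          adjForm_single_single G huv, mul_one]
      rw [hΦ, adjForm_add_self, adjForm_add_self, adjForm_single_self, adjForm_single_self, e1,
        adjForm_comm G (φ c) (_ + _), adjForm_add_left, adjForm_single_left, hu0,
        adjForm_single_left G v, hv0]
      ring
    have := G.finrank_le_negInertia Φ fun c hc => by
      obtain ⟨c, t⟩ := c
      rw [hval]
      rcases eq_or_ne c 0 with rfl | hc0
      · have ht : t ≠ 0 := by
          rintro rfl
          exact hc rfl
        have h0 : G.adjForm (φ 0) (φ 0) = 0 := adjForm_eq_zero G (by simp)
        have : 0 < t ^ 2 := by positivity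
        rw [h0]
        linarith
      · have := hφ c hc0
        have := sq_nonneg t
        linarith
    simpa using this

/-- Inertia bounds across a separation of `G` with at most one vertex `w` outside the two sides. -/
lemma inertia_separation (S T : Set V) (w : V) (hST : Disjoint S T)
    (hcov : ∀ x, x ∈ S ∨ x ∈ T ∨ x = w) (hno : ∀ x ∈ S, ∀ y ∈ T, ¬ G.Adj x y) :
    G.posInertia ≤ (G.induce S).posInertia + (G.induce T).posInertia + 1 ∧
      (G.induce S).negInertia + (G.induce T).negInertia ≤ G.negInertia := by
  classical
  have hcross : ∀ x y : V → ℝ, (∀ i ∉ S, x i = 0) → (∀ i ∉ T, y i = 0) → G.adjForm x y = 0 := by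
    intro x y hx hy
    refine adjForm_eq_zero G fun i j hij => ?_
    by_cases hi : i ∈ S
    · right
      exact hy j fun hj => hno i hi j hj hij
    · exact Or.inl (hx i hi)
  constructor
  · obtain ⟨ψ, hψ⟩ := G.exists_pos_coords_induce S
    obtain ⟨χ, hχ⟩ := G.exists_pos_coords_induce T
    have := G.posInertia_le_finrank
      ((ψ.prod χ).prod (LinearMap.proj w : (V → ℝ) →ₗ[ℝ] ℝ)) fun x hx => by
        obtain ⟨hx1, hxw⟩ := Prod.mk.inj hx
        obtain ⟨hxS, hxT⟩ := Prod.mk.inj hx1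
        change x w = 0 at hxw
        have hsplit : x = S.indicator x + T.indicator x := by
          funext i
          rcases hcov i with hi | hi | rfl
          · simp [hi, Set.disjoint_left.1 hST hi]
          · simp [hi, Set.disjoint_right.1 hST hi]
          · simp [Set.indicator_apply, hxw]
        have h1 := hψ x hxS (S.indicator x) (fun i hi => by simp [hi]) (fun i hi => by simp [hi])
        have h2 := hχ x hxT (T.indicator x) (fun i hi => by simp [hi]) (fun i hi => by simp [hi])
        rw [hsplit, adjForm_add_self,
          hcross (S.indicator x) (T.indicator x) (fun i hi => by simp [hi])
            (fun i hi => by simp [hi])]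
        linarith
    simpa using this
  · obtain ⟨φ, hφ0, hφ⟩ := G.exists_neg_param_induce S
    obtain ⟨χ, hχ0, hχ⟩ := G.exists_neg_param_induce T
    have := G.finrank_le_negInertia (φ.coprod χ) fun c hc => by
      obtain ⟨c, d⟩ := c
      rw [LinearMap.coprod_apply, adjForm_add_self, hcross _ _ (hφ0 c) (hχ0 d)]
      have hz1 : G.adjForm (φ 0) (φ 0) = 0 := adjForm_eq_zero G (by simp)
      have hz2 : G.adjForm (χ 0) (χ 0) = 0 := adjForm_eq_zero G (by simp)
      rcases eq_or_ne c 0 with rfl | hc0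
      · have hd0 : d ≠ 0 := by
          rintro rfl
          exact hc rfl
        have := hχ d hd0
        linarith
      · have := hφ c hc0
        rcases eq_or_ne d 0 with rfl | hd0
        · linarith
        · have := hχ d hd0
          linarith
    simpa using this

end Index

/-! ### Separations and the induction -/

lemma exists_split_of_not_connected {V : Type*} [Nonempty V] (G : SimpleGraph V)
    (h : ¬ G.Connected) :
    ∃ S : Set V, S.Nonempty ∧ Sᶜ.Nonempty ∧ ∀ x ∈ S, ∀ y ∈ Sᶜ, ¬ G.Adj x y := by
  have h' : ¬ G.Preconnected := fun hp => h ⟨hp⟩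
  simp only [Preconnected, not_forall] at h'
  obtain ⟨a, b, hab⟩ := h'
  refine ⟨{x | G.Reachable a x}, ⟨a, Reachable.refl a⟩, ⟨b, hab⟩, ?_⟩
  intro x hx y hy hxy
  exact hy (Reachable.trans hx hxy.reachable)

lemma exists_separation {V : Type*} [Finite V] (G : SimpleGraph V) (hcard : 3 ≤ Nat.card V)
    (h : ¬ G.IsTwoConnected) :
    ∃ (S T : Set V) (w : V), S.Nonempty ∧ T.Nonempty ∧ Disjoint S T ∧
      (∀ x, x ∈ S ∨ x ∈ T ∨ x = w) ∧ ∀ x ∈ S, ∀ y ∈ T, ¬ G.Adj x y := by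
  have : Nontrivial V := Finite.one_lt_card_iff_nontrivial.1 (by omega)
  by_cases hc : G.Connected
  · have h' : ∃ w, ¬ (G.induce ({w}ᶜ : Set V)).Connected := by
      by_contra hcon
      push Not at hcon
      exact h ⟨hc, hcard, hcon⟩
    obtain ⟨w, hw⟩ := h'
    obtain ⟨a, ha⟩ := exists_ne w
    have : Nonempty ({w}ᶜ : Set V) := ⟨⟨a, ha⟩⟩
    obtain ⟨S, hS, hT, hno⟩ := exists_split_of_not_connected _ hw
    refine ⟨Subtype.val '' S, Subtype.val '' Sᶜ, w, hS.image _, hT.image _, ?_, ?_, ?_⟩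
    · exact (Set.disjoint_image_iff Subtype.val_injective).2 disjoint_compl_right
    · intro x
      rcases eq_or_ne x w with rfl | hx
      · simp
      · by_cases hxS : (⟨x, hx⟩ : ({w}ᶜ : Set V)) ∈ S
        · exact Or.inl ⟨_, hxS, rfl⟩
        · exact Or.inr (Or.inl ⟨_, hxS, rfl⟩)
    · rintro _ ⟨x, hx, rfl⟩ _ ⟨y, hy, rfl⟩ hxy
      exact hno x hx y hy hxy
  · obtain ⟨S, hS, hT, hno⟩ := exists_split_of_not_connected _ hc
    obtain ⟨w, hw⟩ := hS
    refine ⟨S, Sᶜ, w, ⟨w, hw⟩, hT, disjoint_compl_right, fun x => ?_, hno⟩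
    by_cases hx : x ∈ S
    · exact Or.inl hx
    · exact Or.inr (Or.inl hx)

lemma add_choose_two_mul (a b : ℕ) :
    (a + b) + (a + b).choose 2 = (a + a.choose 2) + (b + b.choose 2) + a * b := by
  have h := Nat.add_choose_eq a b 2
  simp [Finset.Nat.antidiagonal_succ] at h
  omega

lemma add_choose_two_mono {a b : ℕ} (h : a ≤ b) : a + a.choose 2 ≤ b + b.choose 2 :=
  Nat.add_le_add h (Nat.choose_le_choose 2 h)

lemma posInertia_le_of_twoConnected
    (h2conn : ∀ (W : Type) [Finite W] (H : SimpleGraph W),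
      H.IsTwoConnected → H.posInertia ≤ H.negInertia + H.negInertia.choose 2) :
    ∀ (n : ℕ) (V : Type) [Finite V] (G : SimpleGraph V), Nat.card V = n →
      G.posInertia ≤ G.negInertia + G.negInertia.choose 2 := by
  intro n
  induction n using Nat.strong_induction_on with
  | _ n ih =>
  intro V _ G hV
  have ihS : ∀ (S : Set V) (a : V), a ∉ S → (G.induce S).posInertia ≤
      (G.induce S).negInertia + (G.induce S).negInertia.choose 2 := by
    intro S a ha
    refine ih (Nat.card S) ?_ S (G.induce S) rfl
    rw [← hV]
    exact Finite.card_subtype_lt (p := fun x => x ∈ S) ha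
  have leaf : ∀ u w : V, (∀ x, G.Adj u x → x = w) →
      G.posInertia ≤ G.negInertia + G.negInertia.choose 2 := by
    intro u w hu
    by_cases huw : G.Adj u w
    · obtain ⟨h1, h2⟩ := G.inertia_pendant u w huw hu
      have h3 := ihS {u, w}ᶜ u (by simp)
      have h4 := add_choose_two_mono h2
      have h5 := add_choose_two_mul (G.induce ({u, w}ᶜ : Set V)).negInertia 1
      omega
    · obtain ⟨h1, h2⟩ := G.inertia_isolated u fun x hx => huw (hu x hx ▸ hx)
      have h3 := ihS {u}ᶜ u (by simp)
      have h4 := add_choose_two_mono h2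
      omega
  by_cases hcard : 3 ≤ Nat.card V
  swap
  · rcases isEmpty_or_nonempty V with hemp | ⟨⟨u⟩⟩
    · have : G.posInertia = 0 := by
        unfold posInertia
        simp
      omega
    · by_cases hu : ∃ w, G.Adj u w
      · obtain ⟨w, hw⟩ := hu
        refine leaf u w fun x hx => ?_
        by_contra hxw
        classical
        let _ := Fintype.ofFinite V
        have h3 : ({u, w, x} : Finset V).card = 3 :=
          Finset.card_eq_three.2 ⟨u, w, x, hw.ne, hx.ne, Ne.symm hxw, rfl⟩
        have := Finset.card_le_univ ({u, w, x} : Finset V)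
        rw [Nat.card_eq_fintype_card] at hcard
        omega
      · exact leaf u u fun x hx => absurd ⟨x, hx⟩ hu
  by_cases h2 : G.IsTwoConnected
  · exact h2conn V G h2
  obtain ⟨S, T, w, ⟨s, hs⟩, ⟨t, ht⟩, hST, hcov, hno⟩ := exists_separation G hcard h2
  obtain ⟨h1, h3⟩ := G.inertia_separation S T w hST hcov hno
  by_cases hS0 : (G.induce S).negInertia = 0
  · refine leaf s w fun x hx => ?_
    rcases hcov x with h | h | h
    · exact absurd hx
        ((G.induce S).not_adj_of_negInertia_eq_zero hS0 ⟨s, hs⟩ ⟨x, h⟩)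
    · exact absurd hx (hno s hs x h)
    · exact h
  by_cases hT0 : (G.induce T).negInertia = 0
  · refine leaf t w fun x hx => ?_
    rcases hcov x with h | h | h
    · exact absurd hx.symm (hno x h t ht)
    · exact absurd hx
        ((G.induce T).not_adj_of_negInertia_eq_zero hT0 ⟨t, ht⟩ ⟨x, h⟩)
    · exact h
  have h4 := ihS S t (Set.disjoint_right.1 hST ht)
  have h5 := ihS T s (Set.disjoint_left.1 hST hs)
  have h6 := add_choose_two_mono h3
  have h7 := add_choose_two_mul (G.induce S).negInertia (G.induce T).negInertia
  have h8 := Nat.mul_pos (Nat.pos_of_ne_zero hS0) (Nat.pos_of_ne_zero hT0)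
  omega

end SimpleGraph

theorem stmt1
    (h2conn : ∀ (W : Type) [Finite W] (H : SimpleGraph W),
      H.IsTwoConnected → H.signature ≤ ((H.negInertia).choose 2 : ℤ)) :
    ∀ (V : Type) [Finite V] (G : SimpleGraph V),
      G.signature ≤ ((G.negInertia).choose 2 : ℤ) := by
  intro V _ G
  have h := SimpleGraph.posInertia_le_of_twoConnected (fun W _ H hH => by
    have := h2conn W H hH
    unfold SimpleGraph.signature at this
    omega) (Nat.card V) V G rfl
  unfold SimpleGraph.signature
  omega
end

section
/- Every finite simple graph G with chromatic number χ(G) ≤ 3 satisfies 2·n⁺(G) ≤ n⁻(G)·(n⁻(G) + 1). -/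
/-! Write `m = n⁻(G)`. The argument rests on `card_le_card_neg_eigenvalues`: if the quadratic form
of the adjacency matrix `A` is nonpositive on a subspace meeting `ker A` trivially, then that
subspace has dimension at most `m`. Choose vertices whose columns form a basis of the column space
of `A`; there are `n⁺ + m` of them. Each colour class among them spans a subspace on which the form
vanishes, so it has at most `m` elements, and `n⁺ + m ≤ 3m`, that is `n⁺ ≤ 2m`. This suffices for
`m = 0` and for `m ≥ 3`.

For `m = 1, 2` it remains to exclude `n⁺ = 2m`. In that case every class has exactly `m` chosen
vertices. Let `B`, `C` be the `0/1` adjacency matrices between class 1 and classes 2, 3. A finite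
check (`Certified`) gives a nonzero `(β, z)` with `Bβ + Cz = 0` and all `βᵢzⱼ ≤ 0`. The vector `w`
with entries `β` on class 2 and `z` on class 3 is then orthogonal, with respect to the form, to
class 1, and its square `2 ∑ Eᵢⱼβᵢzⱼ` is nonpositive whatever the adjacency `E` between classes 2
and 3 is. Together with class 1 it spans an `(m + 1)`-dimensional subspace on which the form is
nonpositive, a contradiction. -/

open Matrix

/-- On a subspace where the quadratic form of `A` is nonpositive and whose image under `A` has
full dimension, the projection to the negative eigenspaces is injective; so its dimension is at
most the number of negative eigenvalues. -/
theorem card_le_card_neg_eigenvalues {V J : Type*} [Fintype V] [DecidableEq V] [Fintype J]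
    {A : Matrix V V ℝ} (hA : A.IsHermitian) (p : J → V → ℝ)
    (hli : LinearIndependent ℝ fun j => A *ᵥ p j)
    (hq : ∀ g : J → ℝ, (∑ j, g j • p j) ⬝ᵥ A *ᵥ (∑ j, g j • p j) ≤ 0) :
    Fintype.card J ≤ Fintype.card {i // hA.eigenvalues i < 0} := by
  set U : Matrix V V ℝ := hA.eigenvectorUnitary.1 with hU
  have hspec : A = U * diagonal hA.eigenvalues * Uᵀ := by
    have h := hA.spectral_theorem
    rw [Unitary.conjStarAlgAut_apply] at h
    simpa [star_eq_conjTranspose, conjTranspose_eq_transpose_of_trivial] using h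
  let S : (J → ℝ) →ₗ[ℝ] (V → ℝ) := Fintype.linearCombination ℝ p
  let L : (J → ℝ) →ₗ[ℝ] ({i // hA.eigenvalues i < 0} → ℝ) :=
    (LinearMap.funLeft ℝ ℝ Subtype.val) ∘ₗ Uᵀ.mulVecLin ∘ₗ S
  have hL : Function.Injective L := by
    rw [← LinearMap.ker_eq_bot, LinearMap.ker_eq_bot']
    intro g hg
    have hneg : ∀ i, hA.eigenvalues i < 0 → (Uᵀ *ᵥ (∑ j, g j • p j)) i = 0 := fun i hi =>
      congrFun hg ⟨i, hi⟩
    set x := ∑ j, g j • p j with hx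
    have hAx : A *ᵥ x = U *ᵥ (diagonal hA.eigenvalues *ᵥ (Uᵀ *ᵥ x)) := by
      conv_lhs => rw [hspec]
      simp only [mulVec_mulVec, Matrix.mul_assoc]
    have hQ : x ⬝ᵥ A *ᵥ x = ∑ i, hA.eigenvalues i * (Uᵀ *ᵥ x) i ^ 2 := by
      rw [hAx, dotProduct_mulVec, ← mulVec_transpose]
      simp only [dotProduct, mulVec_diagonal]
      exact Finset.sum_congr rfl fun i _ => by ring
    have hnn : ∀ i ∈ Finset.univ, 0 ≤ hA.eigenvalues i * (Uᵀ *ᵥ x) i ^ 2 := by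
      intro i _
      rcases lt_or_ge (hA.eigenvalues i) 0 with h | h
      · simp [hneg i h]
      · positivity
    have hz := (Finset.sum_eq_zero_iff_of_nonneg hnn).1
      (le_antisymm (hQ ▸ hq g) (Finset.sum_nonneg hnn))
    have hD : diagonal hA.eigenvalues *ᵥ (Uᵀ *ᵥ x) = 0 := by
      funext i
      rw [mulVec_diagonal]
      simpa using hz i (Finset.mem_univ i)
    have h0 : ∑ j, g j • A *ᵥ p j = 0 := by
      rw [hD, mulVec_zero, hx] at hAx
      simpa only [mulVec_sum, mulVec_smul] using hAx
    exact funext (Fintype.linearIndependent_iff.1 hli g h0)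
  simpa using LinearMap.finrank_le_finrank_of_injective hL

/-- `Certified m`: for all `0/1` matrices `B`, `C` of size `m` there is a nonzero integer vector
`(β, z)` with `Bβ + Cz = 0` such that all products `βᵢzⱼ` are nonpositive. -/
def Certified (m : ℕ) : Prop :=
  ∀ B C : Fin m → Fin m → Bool, ∃ β z : Fin m → ℤ, (β ≠ 0 ∨ z ≠ 0) ∧
    (∀ i, ∑ j, (if B i j then 1 else 0) * β j + ∑ j, (if C i j then 1 else 0) * z j = 0) ∧
    ∀ i j, β i * z j ≤ 0

theorem certified_one : Certified 1 := by
  intro B C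
  have hone : (fun _ : Fin 1 => (1 : ℤ)) ≠ 0 := fun h => one_ne_zero (congrFun h 0)
  rcases hB : B 0 0 with _ | _
  · exact ⟨fun _ => 1, 0, Or.inl hone, by simp [Fin.forall_fin_one, hB], by simp⟩
  rcases hC : C 0 0 with _ | _
  · exact ⟨0, fun _ => 1, Or.inr hone, by simp [Fin.forall_fin_one, hC], by simp⟩
  refine ⟨fun _ => 1, fun _ => -1, Or.inl hone, ?_, by simp⟩
  simp only [Fin.forall_fin_one, Fin.sum_univ_one, hB, hC]
  norm_num

/-- Vectors `(β₀, β₁, z₀, z₁)` among which a certificate is found for every pair of `2 × 2`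
matrices. -/
def candidates : List (ℤ × ℤ × ℤ × ℤ) :=
  [(1, 0, 0, 0), (1, 0, 0, -1), (0, 0, 0, 1), (1, 0, -1, 0), (0, 0, 1, 0), (0, 0, 1, -1),
    (1, 0, -1, -1), (1, -1, 0, 0), (0, 1, 0, 0), (0, 1, 0, -1), (0, 1, -1, 0)]

/-- Exhaustive check over the entries of the two matrices. -/
theorem exists_candidate : ∀ b₀₀ b₀₁ b₁₀ b₁₁ c₀₀ c₀₁ c₁₀ c₁₁ : Bool,
    ∃ v ∈ candidates, (v.1 ≠ 0 ∨ v.2.1 ≠ 0 ∨ v.2.2.1 ≠ 0 ∨ v.2.2.2 ≠ 0) ∧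
      (((if b₀₀ then 1 else 0) * v.1 + (if b₀₁ then 1 else 0) * v.2.1) +
        ((if c₀₀ then 1 else 0) * v.2.2.1 + (if c₀₁ then 1 else 0) * v.2.2.2) = 0 ∧
      ((if b₁₀ then 1 else 0) * v.1 + (if b₁₁ then 1 else 0) * v.2.1) +
        ((if c₁₀ then 1 else 0) * v.2.2.1 + (if c₁₁ then 1 else 0) * v.2.2.2) = 0) ∧
      (v.1 * v.2.2.1 ≤ 0 ∧ v.1 * v.2.2.2 ≤ 0) ∧ v.2.1 * v.2.2.1 ≤ 0 ∧ v.2.1 * v.2.2.2 ≤ 0 := by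
  decide +kernel

theorem certified_two : Certified 2 := by
  intro B C
  obtain ⟨⟨β₀, β₁, z₀, z₁⟩, -, hne, hker, hsgn⟩ := exists_candidate
    (B 0 0) (B 0 1) (B 1 0) (B 1 1) (C 0 0) (C 0 1) (C 1 0) (C 1 1)
  refine ⟨![β₀, β₁], ![z₀, z₁], ?_, ?_, ?_⟩
  · by_contra! h
    have h1 := congrFun h.1 0
    have h2 := congrFun h.1 1
    have h3 := congrFun h.2 0
    have h4 := congrFun h.2 1
    simp at h1 h2 h3 h4
    simp [h1, h2, h3, h4] at hne
  · rw [Fin.forall_fin_two]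
    simp only [Fin.sum_univ_two, Matrix.cons_val_zero, Matrix.cons_val_one]
    exact hker
  · simp only [Fin.forall_fin_two, Matrix.cons_val_zero, Matrix.cons_val_one]
    exact hsgn

namespace SimpleGraph

variable {V : Type*} [Fintype V] [DecidableEq V] (G : SimpleGraph V) [DecidableRel G.Adj]

/-- Three independent sets of `m` vertices each, whose `3m` columns of the adjacency matrix are
linearly independent, cannot exist when there are only `m` negative eigenvalues and `m` is
certified: a certificate `(β, z)` gives a vector on the last two classes that is orthogonal to the
first and has nonpositive square, so it extends the first class to an `(m + 1)`-dimensional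
nonpositive subspace. -/
theorem card_neg_ne_of_tripartite {m : ℕ} (hm : Certified m) (a b c : Fin m → V)
    (ha : ∀ i j, ¬ G.Adj (a i) (a j)) (hb : ∀ i j, ¬ G.Adj (b i) (b j))
    (hc : ∀ i j, ¬ G.Adj (c i) (c j))
    (hli : LinearIndependent ℝ
      ((G.adjMatrix ℝ).col ∘ (Sum.elim a (Sum.elim b c) : Fin m ⊕ (Fin m ⊕ Fin m) → V))) :
    Fintype.card {i // G.adjHerm.eigenvalues i < 0} ≠ m := by
  intro hcard
  obtain ⟨β, z, hne, hker, hsgn⟩ := hm (fun i j => G.Adj (a i) (b j))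
    (fun i j => G.Adj (a i) (c j))
  set A := G.adjMatrix ℝ with hA
  let e : V → V → ℝ := fun v => Pi.single v 1
  let w : V → ℝ := ∑ j, (β j : ℝ) • e (b j) + ∑ j, (z j : ℝ) • e (c j)
  have hee : ∀ u v, e u ⬝ᵥ A *ᵥ e v = if G.Adj u v then 1 else 0 := by
    intro u v
    simp [e, hA, Matrix.col, G.adj_comm u v]
  have hsymm : ∀ x y, x ⬝ᵥ A *ᵥ y = y ⬝ᵥ A *ᵥ x := by
    intro x y
    rw [dotProduct_mulVec, ← mulVec_transpose, dotProduct_comm, hA, transpose_adjMatrix]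
  have haw : ∀ i, e (a i) ⬝ᵥ A *ᵥ w = 0 := by
    intro i
    simp only [w, mulVec_add, mulVec_sum, mulVec_smul, dotProduct_add, dotProduct_sum,
      dotProduct_smul, hee, smul_eq_mul]
    have h := congrArg (Int.cast : ℤ → ℝ) (hker i)
    push_cast at h
    simpa [mul_comm] using h
  have hww : w ⬝ᵥ A *ᵥ w ≤ 0 := by
    have h : ((∑ i, ∑ j, (if G.Adj (b i) (c j) then 1 else 0) * β i * z j : ℤ) : ℝ) ≤ 0 := by
      refine Int.cast_nonpos.2 (Finset.sum_nonpos fun i _ => Finset.sum_nonpos fun j _ => ?_)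
      split_ifs
      · simpa using hsgn i j
      · simp
    have hcb : ∀ i j, G.Adj (c i) (b j) ↔ G.Adj (b j) (c i) := fun i j => G.adj_comm _ _
    have h2 : w ⬝ᵥ A *ᵥ w =
        2 * ((∑ i, ∑ j, (if G.Adj (b i) (c j) then 1 else 0) * β i * z j : ℤ) : ℝ) := by
      simp only [w, mulVec_add, mulVec_sum, mulVec_smul, dotProduct_add, dotProduct_sum,
        dotProduct_smul, add_dotProduct, sum_dotProduct, smul_dotProduct, hee, smul_eq_mul, hb, hc,
        hcb, two_mul]
      push_cast
      simp only [mul_zero, Finset.sum_const_zero, add_zero, zero_add, Finset.mul_sum]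
      congr 1
      · exact Finset.sum_congr rfl fun i _ => Finset.sum_congr rfl fun j _ => by ring
      · rw [Finset.sum_comm]
        exact Finset.sum_congr rfl fun i _ => Finset.sum_congr rfl fun j _ => by ring
    linarith
  let p : Option (Fin m) → V → ℝ := fun o => o.elim w (fun i => e (a i))
  have hcol : ∀ v, A *ᵥ e v = A.col v := fun v => by simp [e]
  have hp : LinearIndependent ℝ fun o => A *ᵥ p o := by
    rw [Fintype.linearIndependent_iff] at hli ⊢
    intro g hg
    have h := hli (Sum.elim (fun i => g (some i))
      (Sum.elim (fun i => g none * β i) (fun i => g none * z i))) (by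
        rw [Fintype.sum_option] at hg
        simp only [p, w, Option.elim, mulVec_add, mulVec_sum, mulVec_smul, hcol, smul_add,
          Finset.smul_sum, smul_smul] at hg
        simp only [Fintype.sum_sum_type, Sum.elim_inl, Sum.elim_inr, Function.comp]
        rw [add_comm]
        exact hg)
    have h0 : g none = 0 := by
      by_contra h0
      rcases hne with hne | hne
      · refine hne (funext fun i => ?_)
        have := h (Sum.inr (Sum.inl i))
        simpa [h0] using this
      · refine hne (funext fun i => ?_)
        have := h (Sum.inr (Sum.inr i))
        simpa [h0] using this
    rintro (_ | i)
    · exact h0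
    · exact h (Sum.inl i)
  have hle := card_le_card_neg_eigenvalues G.adjHerm p hp (by
    intro g
    rw [Fintype.sum_option]
    have haw' : ∀ i, w ⬝ᵥ A *ᵥ e (a i) = 0 := fun i => (hsymm _ _).trans (haw i)
    simp only [p, Option.elim, mulVec_add, mulVec_sum, mulVec_smul, dotProduct_add,
      dotProduct_sum, dotProduct_smul, add_dotProduct, sum_dotProduct, smul_dotProduct, hee, ha,
      smul_eq_mul, ← hA, haw, haw']
    simp only [if_false, mul_zero, Finset.sum_const_zero, add_zero]
    nlinarith [mul_self_nonneg (g none)])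
  rw [hcard] at hle
  simp at hle

/-- The inequality for explicit instances. -/
theorem two_mul_card_pos_le (C : G.Coloring (Fin 3)) :
    2 * Fintype.card {i // 0 < G.adjHerm.eigenvalues i} ≤
      Fintype.card {i // G.adjHerm.eigenvalues i < 0} *
        (Fintype.card {i // G.adjHerm.eigenvalues i < 0} + 1) := by
  classical
  obtain ⟨κ, a, ha, hspan, hli⟩ := exists_linearIndependent' ℝ (G.adjMatrix ℝ).col
  have : Finite κ := Finite.of_injective a ha
  let : Fintype κ := Fintype.ofFinite κ
  set m := Fintype.card {i // G.adjHerm.eigenvalues i < 0} with hm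
  set n := Fintype.card {i // 0 < G.adjHerm.eigenvalues i} with hn
  have hrank : Fintype.card κ = n + m := by
    have h1 : Fintype.card κ = (G.adjMatrix ℝ).rank := by
      rw [rank_eq_finrank_span_cols, ← hspan, linearIndependent_iff_card_eq_finrank_span.1 hli,
        Set.finrank]
    rw [h1, G.adjHerm.rank_eq_card_non_zero_eigs, hn, hm, ← Fintype.card_subtype_or_disjoint]
    · exact Fintype.card_congr (Equiv.subtypeEquivRight fun i => by
        rw [ne_iff_lt_or_gt, or_comm])
    · rw [Pi.disjoint_iff]
      intro i
      simp only [Prop.disjoint_iff]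
      intro h
      exact lt_asymm h.1 h.2
  let K : Fin 3 → Type _ := fun c => {k : κ // C (a k) = c}
  have hind : ∀ c (k l : K c), ¬ G.Adj (a k) (a l) := fun c k l h =>
    C.valid h (k.2.trans l.2.symm)
  have hK : ∀ c, Fintype.card (K c) ≤ m := by
    intro c
    refine card_le_card_neg_eigenvalues G.adjHerm (fun k : K c => Pi.single (a k) 1) ?_ ?_
    · simp only [mulVec_single_one]
      exact hli.comp (Subtype.val : K c → κ) Subtype.val_injective
    · intro g
      refine le_of_eq ?_
      simp only [mulVec_sum, mulVec_smul, dotProduct_sum, dotProduct_smul, sum_dotProduct,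
        smul_dotProduct, mulVec_single_one, single_one_dotProduct, Matrix.col, transpose_apply,
        adjMatrix_apply, hind]
      simp
  have hsum : Fintype.card κ = Fintype.card (K 0) + Fintype.card (K 1) + Fintype.card (K 2) := by
    rw [← Fin.sum_univ_three (fun c => Fintype.card (K c)), ← Fintype.card_sigma]
    exact Fintype.card_congr (Equiv.sigmaFiberEquiv fun k => C (a k)).symm
  have h0 := hK 0
  have h1 := hK 1
  have h2 := hK 2
  -- Equality `n = 2m` forces all three classes to have exactly `m` elements.
  have key : Certified m → n ≠ 2 * m := by
    intro hcert hnm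
    have hK' : ∀ c, Fintype.card (K c) = m := by
      intro c
      fin_cases c
      · change Fintype.card (K 0) = m
        omega
      · change Fintype.card (K 1) = m
        omega
      · change Fintype.card (K 2) = m
        omega
    let f : ∀ c, Fin m ≃ K c := fun c => (Fintype.equivFinOfCardEq (hK' c)).symm
    refine G.card_neg_ne_of_tripartite hcert (fun i => a (f 0 i)) (fun i => a (f 1 i))
      (fun i => a (f 2 i)) (fun _ _ => hind _ _ _) (fun _ _ => hind _ _ _) (fun _ _ => hind _ _ _)
      ?_ rfl
    have hne : ∀ c d, c ≠ d → ∀ i j, (f c i : κ) ≠ f d j := fun c d hcd i j h =>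
      hcd ((f c i).2.symm.trans ((congrArg (fun k => C (a k)) h).trans (f d j).2))
    have hinj : ∀ c, Function.Injective fun i => (f c i : κ) := fun c =>
      Subtype.val_injective.comp (f c).injective
    have h := hli.comp (Sum.elim (fun i => (f 0 i : κ))
      (Sum.elim (fun i => (f 1 i : κ)) (fun i => (f 2 i : κ)))) (by
        refine (hinj 0).sumElim ((hinj 1).sumElim (hinj 2) (hne 1 2 (by decide))) ?_
        rintro i (j | j)
        · exact hne 0 1 (by decide) i j
        · exact hne 0 2 (by decide) i j)
    have hfun : Sum.elim (fun i => a (f 0 i)) (Sum.elim (fun i => a (f 1 i)) fun i => a (f 2 i)) =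
        a ∘ Sum.elim (fun i => (f 0 i : κ))
          (Sum.elim (fun i => (f 1 i : κ)) (fun i => (f 2 i : κ))) := by
      funext x
      rcases x with i | i | i <;> rfl
    rw [hfun]
    exact h
  have hle : n ≤ 2 * m := by omega
  clear_value m n
  obtain rfl | rfl | rfl | h3 : m = 0 ∨ m = 1 ∨ m = 2 ∨ 3 ≤ m := by omega
  · omega
  · have := key certified_one
    omega
  · have := key certified_two
    omega
  · nlinarith

end SimpleGraph

theorem stmt2 {V : Type*} [Finite V] (G : SimpleGraph V) (hχ : G.chromaticNumber ≤ 3) :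
    2 * G.posInertia ≤ G.negInertia * (G.negInertia + 1) := by
  let := Fintype.ofFinite V
  let := Classical.decEq V
  let : DecidableRel G.Adj := Classical.decRel _
  obtain ⟨C⟩ := SimpleGraph.chromaticNumber_le_iff_colorable.1 hχ
  unfold SimpleGraph.posInertia SimpleGraph.negInertia
  rw [Nat.card_eq_fintype_card, Nat.card_eq_fintype_card]
  exact G.two_mul_card_pos_le C
end

section
/- Let G be a connected finite simple graph of order n ≥ 2, let u be a vertex of G, and let H = G − N[u] be the induced subgraph obtained by deleting u and all its neighbours. Then n⁺(G) ≥ n⁺(H) + 1 and n⁻(G) ≥ n⁻(H) + 1. -/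
/-!
The inertia indices bound dimensions: if a finite family of vectors is orthogonal for the bilinear
form of a real symmetric matrix `A` and the form is positive (negative) on each member, then the
family is no larger than the number of positive (negative) eigenvalues of `A`
(`card_le_of_orthogonal_family`). Both signs are treated at once through a real factor `σ`, taken to
be `1` or `-1`.

Extend by zero the eigenvectors `w i` of `H = G - N[u]` whose eigenvalues `λ i` have the sign of
`σ`. They form such an orthogonal family for `G`, so it suffices to add one more vector. Pick a
neighbour `v` of `u` and let `z₀ = e_v - ∑ i, (B (w i) e_v / λ i) • w i`, which is orthogonal to
every `w i`. Since `u` has no neighbour in `H`, the vector `e_u` is orthogonal to every `w i` as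
well, and `B e_u e_u = 0`, `B z₀ e_u = 1`. Hence `z = z₀ + s • e_u` is orthogonal to the `w i` and
`B z z = B z₀ z₀ + 2 s`, which equals `σ` for a suitable `s`.
-/

open Matrix

/-- The quadratic form of a real symmetric matrix in an orthonormal eigenbasis. -/
lemma quadForm_eq_sum_eigenvalues {V : Type*} [Fintype V] [DecidableEq V] {A : Matrix V V ℝ}
    (hA : A.IsHermitian) (y : V → ℝ) :
    y ⬝ᵥ A *ᵥ y = ∑ j, hA.eigenvalues j *
      (((hA.eigenvectorUnitary : Matrix V V ℝ)ᵀ *ᵥ y) j) ^ 2 := by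
  set U : Matrix V V ℝ := (hA.eigenvectorUnitary : Matrix V V ℝ) with hU
  have h : A = U * diagonal hA.eigenvalues * Uᵀ := by
    have := hA.spectral_theorem
    rw [Unitary.conjStarAlgAut_apply] at this
    simpa [star_eq_conjTranspose, Function.comp_def, hU] using this
  conv_lhs => rw [h]
  rw [← mulVec_mulVec, ← mulVec_mulVec, dotProduct_mulVec, ← mulVec_transpose]
  simp only [dotProduct, mulVec_diagonal]
  exact Finset.sum_congr rfl fun j _ => by ring

/-- A family orthogonal for the form of `A`, on which `σ` times the form is positive, is no larger
than the number of eigenvalues of `A` of the sign of `σ`: otherwise a nontrivial combination of the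
family would have vanishing coordinates along all those eigenvectors. -/
lemma card_le_of_orthogonal_family {V ι : Type*} [Fintype V] [DecidableEq V] [Fintype ι]
    {A : Matrix V V ℝ} (hA : A.IsHermitian) (σ : ℝ) (x : ι → V → ℝ)
    (horth : ∀ i j, i ≠ j → toLinearMap₂' ℝ A (x i) (x j) = 0)
    (hpos : ∀ i, 0 < σ * toLinearMap₂' ℝ A (x i) (x i)) :
    Nat.card ι ≤ Nat.card {j : V // 0 < σ * hA.eigenvalues j} := by
  classical
  rw [Nat.card_eq_fintype_card, Nat.card_eq_fintype_card]
  by_contra! hlt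
  let Q := {j : V // 0 < σ * hA.eigenvalues j}
  let U : Matrix V V ℝ := (hA.eigenvectorUnitary : Matrix V V ℝ)
  let Φ : (ι → ℝ) →ₗ[ℝ] (Q → ℝ) :=
    LinearMap.funLeft ℝ ℝ (Subtype.val : Q → V) ∘ₗ Matrix.toLin' Uᵀ ∘ₗ Fintype.linearCombination ℝ x
  have hker : LinearMap.ker Φ ≠ ⊥ :=
    LinearMap.ker_ne_bot_of_finrank_lt (by simpa [Q] using hlt)
  obtain ⟨c, hc, hc0⟩ := (Submodule.ne_bot_iff _).1 hker
  set y : V → ℝ := ∑ i, c i • x i with hy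
  have hyQ : ∀ j : Q, (Uᵀ *ᵥ y) j = 0 := fun j => by
    have := congrFun (LinearMap.mem_ker.1 hc) j
    rw [hy, ← Fintype.linearCombination_apply]
    exact this
  have h1 : σ * toLinearMap₂' ℝ A y y ≤ 0 := by
    rw [toLinearMap₂'_apply', quadForm_eq_sum_eigenvalues hA, Finset.mul_sum]
    refine Finset.sum_nonpos fun j _ => ?_
    rw [← mul_assoc]
    by_cases hj : 0 < σ * hA.eigenvalues j
    · have := hyQ ⟨j, hj⟩
      simp only [U] at this
      simp [this]
    · exact mul_nonpos_of_nonpos_of_nonneg (not_lt.1 hj) (sq_nonneg _)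
  have h2 : σ * toLinearMap₂' ℝ A y y =
      ∑ i, c i ^ 2 * (σ * toLinearMap₂' ℝ A (x i) (x i)) := by
    have : toLinearMap₂' ℝ A y y = ∑ i, c i ^ 2 * toLinearMap₂' ℝ A (x i) (x i) := by
      simp only [hy, map_sum, LinearMap.sum_apply, map_smul, LinearMap.smul_apply, smul_eq_mul]
      refine Finset.sum_congr rfl fun i _ => ?_
      rw [Finset.sum_eq_single i]
      · ring
      · intro j _ hj
        simp [horth j i hj]
      · simp
    rw [this, Finset.mul_sum]
    exact Finset.sum_congr rfl fun i _ => by ring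
  obtain ⟨i, hi⟩ := Function.ne_iff.1 hc0
  have h3 : 0 < ∑ i, c i ^ 2 * (σ * toLinearMap₂' ℝ A (x i) (x i)) :=
    Finset.sum_pos' (fun i _ => mul_nonneg (sq_nonneg _) (hpos i).le)
      ⟨i, Finset.mem_univ _, mul_pos (sq_pos_of_ne_zero hi) (hpos i)⟩
  linarith

/-- Extension by zero of a real function on a subset. -/
noncomputable def extendZero {V : Type*} (S : Set V) (f : S → ℝ) : V → ℝ :=
  Function.extend Subtype.val f 0

lemma extendZero_dotProduct {V : Type*} [Fintype V] (S : Set V) [Fintype S] (f : S → ℝ)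
    (y : V → ℝ) : extendZero S f ⬝ᵥ y = f ⬝ᵥ (fun a : S => y a) := by
  classical
  have h0 : ∀ a ∉ S, extendZero S f a = 0 := fun a ha => by
    unfold extendZero
    rw [Function.extend_apply']
    · rfl
    · rintro ⟨b, rfl⟩
      exact ha b.2
  have h1 : ∀ a : S, extendZero S f a = f a := fun a => Subtype.val_injective.extend_apply _ _ _
  simp only [dotProduct]
  rw [← Finset.sum_subset (Finset.subset_univ (Finset.univ.map (Function.Embedding.subtype (· ∈ S))))]
  · simp [h1]
  · intro a _ ha
    rw [h0 a (by simpa using ha), zero_mul]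

/-- The inequality for both signs, with `S` any set of vertices not adjacent to `u`. -/
lemma card_induce_succ_le {V : Type*} [Fintype V] [DecidableEq V] (G : SimpleGraph V)
    [DecidableRel G.Adj] (S : Set V) [Fintype S] [DecidableEq S]
    [DecidableRel (G.induce S).Adj] {u v : V} (huv : G.Adj u v) (hS : ∀ a ∈ S, ¬ G.Adj u a)
    {σ : ℝ} (hσ : σ ≠ 0) :
    Nat.card {i : S // 0 < σ * (G.induce S).adjHerm.eigenvalues i} + 1 ≤
      Nat.card {j : V // 0 < σ * G.adjHerm.eigenvalues j} := by
  set hH := (G.induce S).adjHerm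
  let P := {i : S // 0 < σ * hH.eigenvalues i}
  set B : (V → ℝ) →ₗ[ℝ] (V → ℝ) →ₗ[ℝ] ℝ := toLinearMap₂' ℝ (G.adjMatrix ℝ) with hB
  let w : P → V → ℝ := fun i => extendZero S (hH.eigenvectorBasis i.1).ofLp
  let e : V → V → ℝ := fun a => Pi.single a 1
  have hsymm : ∀ x y, B x y = B y x := fun x y => by
    rw [hB, toLinearMap₂'_apply', toLinearMap₂'_apply', dotProduct_mulVec, ← mulVec_transpose,
      G.transpose_adjMatrix, dotProduct_comm]
  have hww : ∀ i j : P, B (w i) (w j) = if i = j then hH.eigenvalues i.1 else 0 := by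
    intro i j
    have hsub : (fun a : S => (G.adjMatrix ℝ *ᵥ w j) a) =
        (G.induce S).adjMatrix ℝ *ᵥ (hH.eigenvectorBasis j.1).ofLp := by
      funext a
      simp only [mulVec]
      rw [dotProduct_comm, extendZero_dotProduct, dotProduct_comm]
      congr 1
      funext b
      simp [SimpleGraph.adjMatrix_apply]
    rw [hB, toLinearMap₂'_apply', extendZero_dotProduct, hsub, hH.mulVec_eigenvectorBasis]
    have ho := (orthonormal_iff_ite.1 hH.eigenvectorBasis.orthonormal) j.1 i.1
    rw [EuclideanSpace.inner_eq_star_dotProduct, star_trivial] at ho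
    rw [dotProduct_smul, ho]
    by_cases h : i = j
    · simp [h]
    · simp [h, Subtype.ext_iff.not.1 (Ne.symm h)]
  have hee : ∀ a b, B (e a) (e b) = G.adjMatrix ℝ a b := fun a b => by
    simp [hB, e, toLinearMap₂'_apply']
  have hwu : ∀ i, B (w i) (e u) = 0 := fun i => by
    rw [hB, toLinearMap₂'_apply', extendZero_dotProduct]
    refine (congrArg _ (funext fun a => ?_)).trans (dotProduct_zero _)
    simp [e, G.adj_comm, hS a a.2]
  have hne : ∀ i : P, hH.eigenvalues i.1 ≠ 0 := fun i h => by
    have := i.2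
    simp [h] at this
  let z₀ : V → ℝ := e v - ∑ i : P, (B (w i) (e v) / hH.eigenvalues i.1) • w i
  have hwz₀ : ∀ j, B (w j) z₀ = 0 := fun j => by
    simp [z₀, map_sub, map_sum, hww, hne j]
  have hz₀u : B z₀ (e u) = 1 := by
    simp [z₀, map_sub, map_sum, hwu, hee, huv.symm]
  let s : ℝ := (σ - B z₀ z₀) / 2
  let z : V → ℝ := z₀ + s • e u
  have hwz : ∀ j, B (w j) z = 0 := fun j => by simp [z, hwz₀, hwu]
  have hzz : B z z = σ := by
    have huu : B (e u) (e u) = 0 := by simp [hee]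
    have huz : B (e u) z₀ = 1 := (hsymm _ _).trans hz₀u
    simp only [z, map_add, map_smul, LinearMap.add_apply, LinearMap.smul_apply, smul_eq_mul,
      huu, huz, hz₀u, s]
    ring
  have key := card_le_of_orthogonal_family G.adjHerm σ
    (fun o : Option P => o.elim z w) ?_ ?_
  · simpa [P, Finite.card_option] using key
  · rintro (_ | i) (_ | j) hij
    · exact absurd rfl hij
    · exact (hsymm _ _).trans (hwz j)
    · exact hwz i
    · have : i ≠ j := fun h => hij (congrArg some h)
      exact (hww i j).trans (if_neg this)
  · rintro (_ | i)
    · change 0 < σ * B z z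
      rw [hzz]
      exact mul_self_pos.2 hσ
    · change 0 < σ * B (w i) (w i)
      rw [hww, if_pos rfl]
      exact i.2

theorem stmt3 {V : Type*} [Finite V] (G : SimpleGraph V) (hconn : G.Connected)
    (hord : 2 ≤ Nat.card V) (u : V) :
    (G.induce ((insert u (G.neighborSet u))ᶜ : Set V)).posInertia + 1 ≤ G.posInertia ∧
    (G.induce ((insert u (G.neighborSet u))ᶜ : Set V)).negInertia + 1 ≤ G.negInertia := by
  have : Nontrivial V := Finite.one_lt_card_iff_nontrivial.1 hord
  obtain ⟨v, huv⟩ := hconn.preconnected.exists_adj_of_nontrivial u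
  have hS : ∀ a ∈ ((insert u (G.neighborSet u))ᶜ : Set V), ¬ G.Adj u a :=
    fun a ha h => ha (Or.inr h)
  let := Fintype.ofFinite V
  let := Classical.decEq V
  let : DecidableRel G.Adj := Classical.decRel _
  let := Fintype.ofFinite ((insert u (G.neighborSet u))ᶜ : Set V)
  let := Classical.decEq ((insert u (G.neighborSet u))ᶜ : Set V)
  let : DecidableRel (G.induce ((insert u (G.neighborSet u))ᶜ : Set V)).Adj :=
    Classical.decRel _
  constructor
  · have := card_induce_succ_le G _ huv hS (one_ne_zero (α := ℝ))
    simp only [one_mul] at this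
    exact this
  · have := card_induce_succ_le G _ huv hS (neg_ne_zero.2 (one_ne_zero (α := ℝ)))
    simp only [neg_mul, one_mul, Left.neg_pos_iff] at this
    exact this
end

section
/- Every finite simple graph G with maximum degree Δ(G) ≤ 4 satisfies 2·n⁺(G) ≤ n⁻(G)·(n⁻(G) + 1). -/
/-!
Write `p = n⁺`, `k = n⁻` and `f k = k (k + 1) / 2`. The bound `p ≤ f k` is proved for all induced
subgraphs `S`, with `p` and `k` described as maximal dimensions of definite subspaces.

The engine is the deletion of a closed neighbourhood `N[u]` of a vertex of degree `d ≥ 1`. It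
lowers `p` by at most `d`, because `u` is isolated once its `d` neighbours are gone
(`pos_le_closedNb`), and it lowers `k` by at least one (`neg_closedNb_lt`).

Let `S` be a minimal counterexample. A kernel vector would allow a vertex to be deleted without
lowering `p`, so the form is nondegenerate and `|S| = p + k`; in particular no vertex is isolated
and no two vertices have the same neighbourhood. Deleting one vertex shows `p = f k + 1`. Deleting
`N[u]` gives `f k + 1 ≤ d + f (k - 1)`, so every degree is at least `k + 1`. As degrees are at
most 4, `1 ≤ k ≤ 3`.

* `k = 1`: three vertices of degree 2, a triangle, which has `k = 2`.
* `k = 2`: six vertices of degree at least 3. On at least five vertices, a triangle extends to a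
  three-dimensional subspace on which the form is nonpositive, so `p ≤ |S| - 3`
  (`triangle_five`). Hence there is no triangle, and then the neighbours of any vertex are
  twins (`Nondeg.triangleFree_false`).
* `k = 3`: a 4-regular graph on ten vertices. For each `u`, the five vertices outside `N[u]` have
  `p = 3` and `k = 2`, and the same arguments show that they induce a 2-regular graph. Counting
  edges, every `u` lies in exactly one triangle, which is impossible as 3 does not divide 10
  (`no_ten`).
-/

open Matrix

namespace InertiaBound

open Module

set_option linter.unusedSectionVars false

variable {V : Type*} [Fintype V] [DecidableEq V] (G : SimpleGraph V) [DecidableRel G.Adj]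

/-! ### Inertia of induced subgraphs -/

/-- The symmetric bilinear form of the adjacency matrix. -/
noncomputable def B : LinearMap.BilinForm ℝ (V → ℝ) := Matrix.toBilin' (G.adjMatrix ℝ)

/-- The quadratic form of the adjacency matrix. -/
noncomputable def Q : QuadraticForm ℝ (V → ℝ) := (B G).toQuadraticMap

/-- The vectors supported on `S`; restricting `Q` to it gives the form of the subgraph induced
on `S`. -/
noncomputable abbrev E (S : Finset V) : Submodule ℝ (V → ℝ) := Pi.spanSubset ℝ (S : Set V)

/-- `n⁺` of the subgraph of `G` induced on `S`, as a maximal dimension. -/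
noncomputable def pos (S : Finset V) : ℕ := sigPos ((Q G).restrict (E S))

/-- `n⁻` of the subgraph of `G` induced on `S`, as a maximal dimension. -/
noncomputable def neg (S : Finset V) : ℕ := sigNeg ((Q G).restrict (E S))

/-- The neighbours of `u` inside `S`. -/
def nb (S : Finset V) (u : V) : Finset V := S.filter (G.Adj u)

/-- The unit vector at `v`. -/
abbrev e (v : V) : V → ℝ := Pi.single v 1

lemma mem_nb {S : Finset V} {u v : V} : v ∈ nb G S u ↔ v ∈ S ∧ G.Adj u v := by
  simp [nb]

lemma mem_E {S : Finset V} {x : V → ℝ} : x ∈ E S ↔ ∀ v ∉ S, x v = 0 := by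
  simp [Pi.mem_spanSubset_iff]

lemma e_mem {S : Finset V} {v : V} (h : v ∈ S) : e v ∈ E S := by
  rw [mem_E]; intro w hw; exact Pi.single_eq_of_ne (by rintro rfl; exact hw h) _

lemma E_mono {S T : Finset V} (h : S ⊆ T) : E S ≤ E T := by
  intro x hx; rw [mem_E] at *; intro v hv; exact hx v (fun h' => hv (h h'))

lemma finrank_E (S : Finset V) : finrank ℝ (E S) = S.card := by
  rw [Pi.dim_spanSubset, Set.ncard_coe_finset]

lemma B_apply (x y : V → ℝ) :
    B G x y = ∑ v, ∑ w, x v * (if G.Adj v w then 1 else 0) * y w := by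
  simp [B, Matrix.toBilin'_apply, SimpleGraph.adjMatrix_apply]

lemma B_comm (x y : V → ℝ) : B G x y = B G y x := by
  rw [B_apply, B_apply, Finset.sum_comm]
  refine Finset.sum_congr rfl fun v _ => Finset.sum_congr rfl fun w _ => ?_
  simp only [G.adj_comm]; ring

lemma B_single (u v : V) : B G (e u) (e v) = if G.Adj u v then 1 else 0 := by
  simp [B, SimpleGraph.adjMatrix_apply]

lemma B_single_left (u : V) (x : V → ℝ) : B G (e u) x = ∑ w, if G.Adj u w then x w else 0 := by
  rw [B_apply, Finset.sum_eq_single u]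
  · simp
  · intro b _ hb; simp [hb]
  · simp

lemma Q_apply (x : V → ℝ) : Q G x = B G x x := rfl

lemma Q_add (x y : V → ℝ) : Q G (x + y) = Q G x + 2 * B G x y + Q G y := by
  simp only [Q_apply, map_add, LinearMap.add_apply, B_comm G y x]; ring

lemma Q_sub (x y : V → ℝ) : Q G (x - y) = Q G x - 2 * B G x y + Q G y := by
  simp only [Q_apply, map_sub, LinearMap.sub_apply, B_comm G y x]; ring

lemma Q_smul (c : ℝ) (x : V → ℝ) : Q G (c • x) = c ^ 2 * Q G x := by
  simp only [Q_apply, map_smul, LinearMap.smul_apply, smul_eq_mul]; ring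

lemma Q_single (u : V) : Q G (e u) = 0 := by simp [Q_apply, B_single]

lemma pos_of_map {N : Type*} [AddCommGroup N] [Module ℝ N] [FiniteDimensional ℝ N]
    {S : Finset V} (φ : N →ₗ[ℝ] (V → ℝ)) (h1 : ∀ n, φ n ∈ E S)
    (h2 : ∀ n, n ≠ 0 → 0 < Q G (φ n)) : finrank ℝ N ≤ pos G S := by
  let ψ : N →ₗ[ℝ] E S := φ.codRestrict (E S) h1
  have hinj : Function.Injective ψ := by
    rw [← LinearMap.ker_eq_bot, LinearMap.ker_eq_bot']
    intro n hn
    by_contra h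
    have := h2 n h
    have h3 : φ n = 0 := congrArg Subtype.val hn
    rw [h3, map_zero] at this
    exact lt_irrefl _ this
  rw [← LinearMap.finrank_range_of_inj hinj]
  apply le_sigPos_of_posDef
  rintro ⟨_, n, rfl⟩ hx
  exact h2 n (by rintro rfl; simp at hx)

lemma neg_of_map {N : Type*} [AddCommGroup N] [Module ℝ N] [FiniteDimensional ℝ N]
    {S : Finset V} (φ : N →ₗ[ℝ] (V → ℝ)) (h1 : ∀ n, φ n ∈ E S)
    (h2 : ∀ n, n ≠ 0 → Q G (φ n) < 0) : finrank ℝ N ≤ neg G S := by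
  let ψ : N →ₗ[ℝ] E S := φ.codRestrict (E S) h1
  have hinj : Function.Injective ψ := by
    rw [← LinearMap.ker_eq_bot, LinearMap.ker_eq_bot']
    intro n hn
    by_contra h
    have := h2 n h
    have h3 : φ n = 0 := congrArg Subtype.val hn
    rw [h3, map_zero] at this
    exact lt_irrefl _ this
  rw [← LinearMap.finrank_range_of_inj hinj]
  apply le_sigNeg_of_negDef
  rintro ⟨_, n, rfl⟩ hx
  have := h2 n (by rintro rfl; simp at hx)
  change 0 < - (Q G (φ n))
  linarith

lemma exists_pos (S : Finset V) : ∃ W : Submodule ℝ (V → ℝ), W ≤ E S ∧ finrank ℝ W = pos G S ∧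
    ∀ x ∈ W, x ≠ 0 → 0 < Q G x := by
  obtain ⟨W, h1, h2⟩ := exists_finrank_eq_sigPos_and_posDef ((Q G).restrict (E S))
  refine ⟨W.map (E S).subtype, Submodule.map_subtype_le _ _, ?_, ?_⟩
  · rw [Submodule.finrank_map_subtype_eq]; exact h1
  · rintro _ ⟨x, hx, rfl⟩ h0
    exact h2 ⟨x, hx⟩ (by rintro h; apply h0; simpa using h)

lemma exists_neg (S : Finset V) : ∃ W : Submodule ℝ (V → ℝ), W ≤ E S ∧ finrank ℝ W = neg G S ∧
    ∀ x ∈ W, x ≠ 0 → Q G x < 0 := by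
  obtain ⟨W, h1, h2⟩ := exists_finrank_eq_sigNeg_and_negDef ((Q G).restrict (E S))
  refine ⟨W.map (E S).subtype, Submodule.map_subtype_le _ _, ?_, ?_⟩
  · rw [Submodule.finrank_map_subtype_eq]; exact h1
  · rintro _ ⟨x, hx, rfl⟩ h0
    have : 0 < -(Q G x) := h2 ⟨x, hx⟩ (by rintro h; apply h0; simpa using h)
    simpa using this

lemma pos_add_le_of_nonpos {N : Type*} [AddCommGroup N] [Module ℝ N] [FiniteDimensional ℝ N]
    {S : Finset V} (φ : N →ₗ[ℝ] (V → ℝ)) (h1 : ∀ n, φ n ∈ E S)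
    (h2 : ∀ n, Q G (φ n) ≤ 0) (h3 : ∀ n, φ n = 0 → n = 0) :
    pos G S + finrank ℝ N ≤ S.card := by
  let ψ : N →ₗ[ℝ] E S := φ.codRestrict (E S) h1
  have hinj : Function.Injective ψ := by
    rw [← LinearMap.ker_eq_bot, LinearMap.ker_eq_bot']
    exact fun n hn => h3 n (congrArg Subtype.val hn)
  rw [← LinearMap.finrank_range_of_inj hinj, ← finrank_E S]
  apply QuadraticForm.sigPos_add_finrank_le_of_nonpos
  rintro _ ⟨n, rfl⟩
  exact h2 n

/-- The adjacency form restricted to `S` has trivial kernel. -/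
def Nondeg (S : Finset V) : Prop := ∀ x ∈ E S, (∀ v ∈ S, B G (e v) x = 0) → x = 0

lemma B_eq_zero {S : Finset V} {x y : V → ℝ} (hx : ∀ v ∈ S, B G (e v) x = 0) (hy : y ∈ E S) :
    B G y x = 0 := by
  have : y = ∑ v, y v • e v := by
    ext w; simp [Finset.sum_apply, Pi.single_apply]
  rw [this]
  simp only [map_sum, map_smul, LinearMap.sum_apply, LinearMap.smul_apply, smul_eq_mul]
  refine Finset.sum_eq_zero fun v _ => ?_
  by_cases hv : v ∈ S
  · rw [hx v hv, mul_zero]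
  · rw [mem_E.1 hy v hv, zero_mul]

lemma mem_radical {S : Finset V} (x : E S) :
    x ∈ ((Q G).restrict (E S)).radical ↔ ∀ v ∈ S, B G (e v) x = 0 := by
  rw [QuadraticMap.mem_radical_iff']
  constructor
  · rintro ⟨h1, h2⟩ v hv
    have h3 : Q G (x + e v) = Q G (e v) := h2 ⟨e v, e_mem hv⟩
    have h1' : Q G x = 0 := h1
    rw [Q_add, h1', B_comm] at h3
    linarith
  · intro h
    refine ⟨B_eq_zero G h x.2, fun n => ?_⟩
    change Q G (x + n) = Q G n
    have h1 : Q G x = 0 := B_eq_zero G h x.2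
    rw [Q_add, h1, B_comm, B_eq_zero G h n.2]; ring

lemma nondeg_iff (S : Finset V) : Nondeg G S ↔ pos G S + neg G S = S.card := by
  have h := QuadraticForm.sigPos_add_sigNeg_add_radical (Q := (Q G).restrict (E S))
  rw [finrank_E] at h
  change pos G S + neg G S + _ = _ at h
  have : Nondeg G S ↔ finrank ℝ ((Q G).restrict (E S)).radical = 0 := by
    rw [Submodule.finrank_eq_zero, Submodule.eq_bot_iff]
    constructor
    · intro hn x hx
      exact Subtype.ext (hn x x.2 ((mem_radical G x).1 hx))
    · intro hn x hx h0
      exact congrArg Subtype.val (hn ⟨x, hx⟩ ((mem_radical G ⟨x, hx⟩).2 h0))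
  rw [this]; omega

lemma neg_mono {S T : Finset V} (h : S ⊆ T) : neg G S ≤ neg G T := by
  obtain ⟨W, h1, h2, h3⟩ := exists_neg G S
  rw [← h2]
  exact neg_of_map G W.subtype (fun n => E_mono h (h1 n.2))
    (fun n hn => h3 n n.2 (by simpa using hn))

/-! ### Effect of vertex deletions -/

/-- A coordinate at which some kernel vector does not vanish can be deleted without lowering
`n⁺`: reduce modulo the kernel vector. -/
lemma pos_le_erase {S : Finset V} {x : V → ℝ} (hx : x ∈ E S) (h0 : ∀ v ∈ S, B G (e v) x = 0)
    {v : V} (hv : x v ≠ 0) : pos G S ≤ pos G (S.erase v) := by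
  obtain ⟨W, h1, h2, h3⟩ := exists_pos G S
  rw [← h2]
  let φ : (V → ℝ) →ₗ[ℝ] (V → ℝ) :=
    LinearMap.id - ((x v)⁻¹ • (LinearMap.proj v : (V → ℝ) →ₗ[ℝ] ℝ)).smulRight x
  have hφ (y : V → ℝ) : φ y = y - ((x v)⁻¹ * y v) • x := rfl
  refine pos_of_map G (φ ∘ₗ W.subtype) (fun n => ?_) (fun n hn => ?_)
  · rw [mem_E]
    intro w hw
    rw [LinearMap.comp_apply, hφ]
    by_cases hwv : w = v
    · subst hwv; simp [field]
    · have hwS : w ∉ S := fun h => hw (Finset.mem_erase.2 ⟨hwv, h⟩)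
      simp [mem_E.1 hx w hwS, mem_E.1 (h1 n.2) w hwS]
  · rw [LinearMap.comp_apply, hφ, Q_sub, Q_smul, map_smul, smul_eq_mul]
    have h4 : B G (n : V → ℝ) x = 0 := B_eq_zero G h0 (h1 n.2)
    have h5 : Q G x = 0 := B_eq_zero G h0 hx
    have := h3 n n.2 (by simpa using hn)
    simp only [Submodule.subtype_apply, h4, h5]
    linarith

/-- Deleting `T` lowers `n⁺` by at most `|T|`; if afterwards the vertices of `R` are isolated,
they can be dropped as well. -/
lemma pos_le_sdiff {S T R : Finset V} (hR : ∀ u ∈ R, ∀ v ∈ S, v ∉ T → ¬ G.Adj u v) :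
    pos G S ≤ T.card + pos G ((S \ T) \ R) := by
  obtain ⟨W, h1, h2, h3⟩ := exists_pos G S
  let r : W →ₗ[ℝ] (T → ℝ) := (LinearMap.funLeft ℝ ℝ (Subtype.val : T → V)) ∘ₗ W.subtype
  have hr := LinearMap.finrank_range_add_finrank_ker r
  have hr2 : finrank ℝ (LinearMap.range r) ≤ T.card := by
    have := Submodule.finrank_le (LinearMap.range r)
    simpa using this
  let φ : (V → ℝ) →ₗ[ℝ] (V → ℝ) :=
    LinearMap.pi fun v => if v ∈ R then 0 else LinearMap.proj v
  have hφ (y : V → ℝ) (v : V) : φ y v = if v ∈ R then 0 else y v := by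
    simp only [φ, LinearMap.pi_apply]; split_ifs <;> rfl
  have key : finrank ℝ (LinearMap.ker r) ≤ pos G ((S \ T) \ R) := by
    have hk (n : LinearMap.ker r) (v : V) (hv : v ∈ T) : (n : W).1 v = 0 :=
      congrFun (LinearMap.mem_ker.1 n.2) ⟨v, hv⟩
    refine pos_of_map G (N := LinearMap.ker r) (φ ∘ₗ W.subtype ∘ₗ (LinearMap.ker r).subtype) (fun n => ?_)
      (fun n hn => ?_)
    · rw [mem_E]
      intro v hv
      simp only [LinearMap.comp_apply, hφ, Submodule.subtype_apply]
      split_ifs with h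
      · rfl
      · by_cases hvT : v ∈ T
        · exact hk n v hvT
        · exact mem_E.1 (h1 n.1.2) v (fun hS => hv (by simp [h, hvT, hS]))
    · have hp := h3 n.1 n.1.2 (by simpa using hn)
      have : Q G (φ n.1.1) = Q G n.1.1 := by
        rw [Q_apply, Q_apply, B_apply, B_apply]
        refine Finset.sum_congr rfl fun v _ => Finset.sum_congr rfl fun w _ => ?_
        rw [hφ, hφ]
        have hz (w : V) (h : ¬ (w ∈ S ∧ w ∉ T)) : n.1.1 w = 0 := by
          by_cases hS : w ∈ S
          · exact hk n w (by tauto)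
          · exact mem_E.1 (h1 n.1.2) w hS
        by_cases hv : v ∈ R
        · by_cases hw : w ∈ S ∧ w ∉ T
          · simp [hR v hv w hw.1 hw.2]
          · simp [hz w hw]
        · by_cases hw : w ∈ R
          · by_cases hv : v ∈ S ∧ v ∉ T
            · have : ¬ G.Adj v w := fun h => hR w hw v hv.1 hv.2 h.symm
              simp [this]
            · simp [hz v hv]
          · simp [hv, hw]
      change 0 < Q G (φ n.1.1)
      rw [this]; exact hp
  omega

/-- Deleting the closed neighbourhood of `u` lowers `n⁺` by at most the degree of `u`, since
`u` is isolated once its neighbours are gone. -/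
lemma pos_le_closedNb (S : Finset V) (u : V) :
    pos G S ≤ (nb G S u).card + pos G ((S \ nb G S u).erase u) := by
  rw [Finset.erase_eq]
  apply pos_le_sdiff
  intro w hw v hv hv'
  obtain rfl := Finset.mem_singleton.1 hw
  exact fun h => hv' ((mem_nb G).2 ⟨hv, h⟩)

/-- Deleting the closed neighbourhood of a non-isolated vertex `u` lowers `n⁻` by at least one:
for a neighbour `v` of `u`, a negative definite space of the remainder, sheared along `e u` to be
orthogonal to `e v`, can be extended by `e v - e u`. -/
lemma neg_closedNb_lt {S : Finset V} {u v : V} (hu : u ∈ S) (hv : v ∈ nb G S u) :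
    neg G ((S \ nb G S u).erase u) + 1 ≤ neg G S := by
  set S' := (S \ nb G S u).erase u with hS'
  obtain ⟨W, h1, h2, h3⟩ := exists_neg G S'
  have hsub : S' ⊆ S := (Finset.erase_subset _ _).trans Finset.sdiff_subset
  obtain ⟨hvS, huv⟩ := (mem_nb G).1 hv
  let φ : (W × ℝ) →ₗ[ℝ] (V → ℝ) :=
    (W.subtype - ((B G (e v)) ∘ₗ W.subtype).smulRight (e u)) ∘ₗ LinearMap.fst ℝ W ℝ
      + (LinearMap.snd ℝ W ℝ).smulRight (e v - e u)
  have hφ (n : W × ℝ) : φ n = (n.1.1 - (B G (e v) n.1.1) • e u) + n.2 • (e v - e u) := rfl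
  have := neg_of_map G (S := S) φ (fun n => ?_) (fun n hn => ?_)
  · simpa [h2] using this
  · rw [hφ]
    exact Submodule.add_mem _ (Submodule.sub_mem _ (E_mono hsub (h1 n.1.2))
      (Submodule.smul_mem _ _ (e_mem hu)))
      (Submodule.smul_mem _ _ (Submodule.sub_mem _ (e_mem hvS) (e_mem hu)))
  · have hz : B G (e u) n.1.1 = 0 := by
      rw [B_single_left]
      refine Finset.sum_eq_zero fun w _ => ?_
      split_ifs with hw
      · refine mem_E.1 (h1 n.1.2) w fun hw' => ?_
        simp only [hS', Finset.mem_erase, Finset.mem_sdiff, mem_nb] at hw'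
        tauto
      · rfl
    have hq : Q G (φ n) = Q G n.1.1 - 2 * n.2 ^ 2 := by
      rw [hφ]
      simp only [Q_apply, map_add, map_sub, map_smul, LinearMap.add_apply, LinearMap.sub_apply,
        LinearMap.smul_apply, smul_eq_mul, B_single, B_comm G n.1.1, hz, huv, huv.symm,
        SimpleGraph.irrefl, if_true, if_false]
      ring
    rw [hq]
    by_cases hn1 : n.1 = 0
    · have : n.2 ≠ 0 := fun h => hn (Prod.ext hn1 h)
      have : 0 < n.2 ^ 2 := by positivity
      rw [hn1]; simp only [Submodule.coe_zero, map_zero]; linarith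
    · have := h3 n.1.1 n.1.2 (by simpa using hn1)
      nlinarith [sq_nonneg n.2]

/-! ### Nondegenerate graphs and triangles -/

lemma Nondeg.nb_nonempty {S : Finset V} (h : Nondeg G S) {u : V} (hu : u ∈ S) :
    (nb G S u).Nonempty := by
  by_contra hne
  rw [Finset.not_nonempty_iff_eq_empty] at hne
  have := h (e u) (e_mem hu) (fun v hv => by
    rw [B_single, if_neg]
    intro hvu
    have : v ∈ nb G S u := (mem_nb G).2 ⟨hv, hvu.symm⟩
    simp [hne] at this)
  simpa using congrFun this u

lemma Nondeg.twin {S : Finset V} (h : Nondeg G S) {u v : V} (hu : u ∈ S) (hv : v ∈ S)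
    (huv : nb G S u = nb G S v) : u = v := by
  by_contra hne
  have := h (e u - e v) (Submodule.sub_mem _ (e_mem hu) (e_mem hv)) (fun w hw => by
    have h1 : G.Adj w u ↔ G.Adj w v := by
      have := Finset.ext_iff.1 huv w
      simp only [mem_nb, hw, true_and] at this
      rw [G.adj_comm w u, G.adj_comm w v, this]
    rw [map_sub, B_single, B_single]
    simp [h1])
  have := congrFun this u
  simp [hne] at this

/-- In a triangle-free nondegenerate graph the neighbours of a vertex `w` with
`|S| - deg w ≤ δ` would all have neighbourhood `S \ N(w)`, so they would be twins. -/
lemma Nondeg.triangleFree_false {S : Finset V} (h : Nondeg G S) {δ : ℕ}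
    (hδ : ∀ u ∈ S, δ ≤ (nb G S u).card)
    (htf : ∀ a ∈ S, ∀ b ∈ S, ∀ c ∈ S, G.Adj a b → G.Adj a c → ¬ G.Adj b c)
    {w : V} (hw : w ∈ S) (hw2 : 2 ≤ (nb G S w).card) (hc : S.card ≤ (nb G S w).card + δ) :
    False := by
  obtain ⟨a, ha, b, hb, hab⟩ := Finset.one_lt_card.1 hw2
  have key (v : V) (hv : v ∈ nb G S w) : nb G S v = S \ nb G S w := by
    obtain ⟨hvS, hwv⟩ := (mem_nb G).1 hv
    apply Finset.eq_of_subset_of_card_le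
    · intro z hz
      obtain ⟨hzS, hvz⟩ := (mem_nb G).1 hz
      rw [Finset.mem_sdiff, mem_nb]
      exact ⟨hzS, fun h' => htf w hw v hvS z hzS hwv h'.2 hvz⟩
    · have h1 := hδ v hvS
      have h2 := Finset.card_sdiff_of_subset (show nb G S w ⊆ S from Finset.filter_subset _ _)
      omega
  exact hab (h.twin G ((mem_nb G).1 ha).1 ((mem_nb G).1 hb).1 ((key a ha).trans (key b hb).symm))

/-- A triangle carries a two-dimensional negative definite space (the vectors of sum zero), which
meets no positive definite space. -/
lemma triangle_two {S : Finset V} {a b c : V} (ha : a ∈ S) (hb : b ∈ S) (hc : c ∈ S)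
    (hab : G.Adj a b) (hac : G.Adj a c) (hbc : G.Adj b c) : pos G S + 2 ≤ S.card := by
  let φ : (ℝ × ℝ) →ₗ[ℝ] (V → ℝ) :=
    (LinearMap.fst ℝ ℝ ℝ).smulRight (e a - e b) + (LinearMap.snd ℝ ℝ ℝ).smulRight (e b - e c)
  have hφ (n : ℝ × ℝ) : φ n = n.1 • (e a - e b) + n.2 • (e b - e c) := rfl
  have := pos_add_le_of_nonpos G (S := S) φ (fun n => ?_) (fun n => ?_) (fun n hn => ?_)
  · simpa using this
  · rw [hφ]
    exact Submodule.add_mem _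
      (Submodule.smul_mem _ _ (Submodule.sub_mem _ (e_mem ha) (e_mem hb)))
      (Submodule.smul_mem _ _ (Submodule.sub_mem _ (e_mem hb) (e_mem hc)))
  · rw [hφ]
    simp only [Q_apply, map_add, map_sub, map_smul, LinearMap.add_apply, LinearMap.sub_apply,
        LinearMap.smul_apply, smul_eq_mul, B_single, hab, hac, hbc, hab.symm, hac.symm, hbc.symm,
        SimpleGraph.irrefl, if_true, if_false]
    nlinarith [sq_nonneg (n.1 - n.2), sq_nonneg n.1, sq_nonneg n.2]
  · rw [hφ] at hn
    have h1 := congrFun hn a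
    have h2 := congrFun hn c
    simp [hab.ne, hac.ne, hac.ne.symm, hbc.ne.symm] at h1 h2
    exact Prod.ext h1 h2

/-- If `t` is orthogonal to the sum-zero vectors of a triangle, `Q t ≤ 0`, and `t` is not
supported on the triangle, then `t` and those vectors span a three-dimensional nonpositive space. -/
lemma triangle_three {S : Finset V} {a b c : V} (ha : a ∈ S) (hb : b ∈ S) (hc : c ∈ S)
    (hab : G.Adj a b) (hac : G.Adj a c) (hbc : G.Adj b c) {t : V → ℝ} (ht : t ∈ E S)
    (h1 : B G (e a) t = B G (e b) t) (h2 : B G (e b) t = B G (e c) t) (hq : Q G t ≤ 0)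
    {y : V} (hya : y ≠ a) (hyb : y ≠ b) (hyc : y ≠ c) (hy : t y ≠ 0) :
    pos G S + 3 ≤ S.card := by
  let φ : (ℝ × ℝ × ℝ) →ₗ[ℝ] (V → ℝ) :=
    (LinearMap.fst ℝ ℝ (ℝ × ℝ)).smulRight (e a - e b)
      + ((LinearMap.fst ℝ ℝ ℝ) ∘ₗ (LinearMap.snd ℝ ℝ (ℝ × ℝ))).smulRight (e b - e c)
      + ((LinearMap.snd ℝ ℝ ℝ) ∘ₗ (LinearMap.snd ℝ ℝ (ℝ × ℝ))).smulRight t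
  have hφ (n : ℝ × ℝ × ℝ) : φ n = n.1 • (e a - e b) + n.2.1 • (e b - e c) + n.2.2 • t := rfl
  have := pos_add_le_of_nonpos G (S := S) φ (fun n => ?_) (fun n => ?_) (fun n hn => ?_)
  · simpa using this
  · rw [hφ]
    exact Submodule.add_mem _ (Submodule.add_mem _
      (Submodule.smul_mem _ _ (Submodule.sub_mem _ (e_mem ha) (e_mem hb)))
      (Submodule.smul_mem _ _ (Submodule.sub_mem _ (e_mem hb) (e_mem hc))))
      (Submodule.smul_mem _ _ ht)
  · rw [hφ]
    have hq' : B G t t ≤ 0 := hq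
    simp only [Q_apply, map_add, map_sub, map_smul, LinearMap.add_apply, LinearMap.sub_apply,
        LinearMap.smul_apply, smul_eq_mul, B_single, hab, hac, hbc, hab.symm, hac.symm, hbc.symm,
        SimpleGraph.irrefl, if_true, if_false, B_comm G t, h1, h2]
    nlinarith [sq_nonneg (n.1 - n.2.1), sq_nonneg n.1, sq_nonneg n.2.1,
      mul_nonneg (sq_nonneg n.2.2) (neg_nonneg.2 hq')]
  · rw [hφ] at hn
    have h3 := congrFun hn y
    simp [hya, hyb, hyc, hy] at h3
    have h1 := congrFun hn a
    have h2 := congrFun hn c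
    simp [hab.ne, hac.ne, hac.ne.symm, hbc.ne.symm, h3] at h1 h2
    exact Prod.ext h1 (Prod.ext h2 h3)

/-- The nonpositive space for two vertices `x`, `y` outside a triangle whose only neighbour in it is
the same vertex `a`; the extra vector is `e x - e y`. -/
lemma triangle_same {S : Finset V} {a b c x y : V} (ha : a ∈ S) (hb : b ∈ S) (hc : c ∈ S)
    (hab : G.Adj a b) (hac : G.Adj a c) (hbc : G.Adj b c) (hx : x ∈ S) (hy : y ∈ S)
    (hxy : x ≠ y) (hxa : G.Adj x a) (hxb : ¬ G.Adj x b) (hxc : ¬ G.Adj x c)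
    (hya : G.Adj y a) (hyb : ¬ G.Adj y b) (hyc : ¬ G.Adj y c) : pos G S + 3 ≤ S.card := by
  have hne1 : x ≠ b := by rintro rfl; exact hxc hbc
  have hne2 : x ≠ c := by rintro rfl; exact hxb hbc.symm
  have hxb' : ¬ G.Adj b x := fun h => hxb (G.adj_symm h)
  have hxc' : ¬ G.Adj c x := fun h => hxc (G.adj_symm h)
  have hyb' : ¬ G.Adj b y := fun h => hyb (G.adj_symm h)
  have hyc' : ¬ G.Adj c y := fun h => hyc (G.adj_symm h)
  refine triangle_three G ha hb hc hab hac hbc (t := e x - e y) (y := x)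
    (Submodule.sub_mem _ (e_mem hx) (e_mem hy)) ?_ ?_ ?_ hxa.ne hne1 hne2 (by simp [hxy])
  · simp [B_single, hxa.symm, hya.symm, hxb', hyb']
  · simp [B_single, hxb', hyb', hxc', hyc']
  · rw [Q_sub, Q_single, Q_single, B_single]
    split_ifs <;> norm_num

/-- The nonpositive space for two vertices `x`, `y` outside a triangle with different single
neighbours `a`, `b` in it. The extra vector is a kernel vector of the five-vertex graph. -/
lemma triangle_diff {S : Finset V} {a b c x y : V} (ha : a ∈ S) (hb : b ∈ S) (hc : c ∈ S)
    (hab : G.Adj a b) (hac : G.Adj a c) (hbc : G.Adj b c) (hx : x ∈ S) (hy : y ∈ S)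
    (hxa : G.Adj x a) (hxb : ¬ G.Adj x b) (hxc : ¬ G.Adj x c)
    (hya : ¬ G.Adj y a) (hyb : G.Adj y b) (hyc : ¬ G.Adj y c) : pos G S + 3 ≤ S.card := by
  have hne1 : x ≠ b := by rintro rfl; exact hxc hbc
  have hne2 : x ≠ c := by rintro rfl; exact hxb hbc.symm
  have hxy : x ≠ y := by rintro rfl; exact hxb hyb
  have hxb' : ¬ G.Adj b x := fun h => hxb (G.adj_symm h)
  have hxc' : ¬ G.Adj c x := fun h => hxc (G.adj_symm h)
  have hya' : ¬ G.Adj a y := fun h => hya (G.adj_symm h)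
  have hyc' : ¬ G.Adj c y := fun h => hyc (G.adj_symm h)
  by_cases hadj : G.Adj x y
  · refine triangle_three G ha hb hc hab hac hbc (t := e x - e y + e a - e b) (y := x)
      (Submodule.sub_mem _ (Submodule.add_mem _ (Submodule.sub_mem _ (e_mem hx) (e_mem hy))
        (e_mem ha)) (e_mem hb)) ?_ ?_ ?_ hxa.ne hne1 hne2 (by simp [hxy, hxa.ne, hne1])
    · simp [B_single, hxa.symm, hyb.symm, hxb', hya', hab, hab.symm]
    · simp [B_single, hyb.symm, hxb', hxc', hyc', hab.symm, hbc.symm, hac.symm]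
    · simp [Q_apply, B_single, hxa.symm, hyb.symm, hxb', hya', hab, hab.symm, hxa, hyb, hxb, hya,
        hadj, hadj.symm]
  · have hadj' : ¬ G.Adj y x := fun h => hadj (G.adj_symm h)
    refine triangle_three G ha hb hc hab hac hbc (t := e x + e y - e c) (y := x)
      (Submodule.sub_mem _ (Submodule.add_mem _ (e_mem hx) (e_mem hy))
        (e_mem hc)) ?_ ?_ ?_ hxa.ne hne1 hne2 (by simp [hxy, hne2])
    · simp [B_single, hxa.symm, hyb.symm, hxb', hya', hac, hbc]
    · simp [B_single, hyb.symm, hxb', hxc', hyc', hbc]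
    · simp [Q_apply, B_single, hxc, hyc, hxc', hyc', hadj, hadj']

/-- The nonpositive space for a vertex `y` outside a triangle with zero, two or three neighbours in
it; in the case of two neighbours these are `a` and `b`. -/
lemma triangle_one {S : Finset V} {a b c y : V} (ha : a ∈ S) (hb : b ∈ S) (hc : c ∈ S)
    (hab : G.Adj a b) (hac : G.Adj a c) (hbc : G.Adj b c) (hy : y ∈ S)
    (hya : y ≠ a) (hyb : y ≠ b) (hyc : y ≠ c) (h1 : G.Adj y a ↔ G.Adj y b)
    (h2 : G.Adj y c → G.Adj y a) : pos G S + 3 ≤ S.card := by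
  have h1' : G.Adj a y ↔ G.Adj b y := by rw [G.adj_comm a, G.adj_comm b, h1]
  by_cases h : G.Adj y a ∧ ¬ G.Adj y c
  · obtain ⟨h, h'⟩ := h
    have h3 : ¬ G.Adj c y := fun h4 => h' h4.symm
    refine triangle_three G ha hb hc hab hac hbc (t := e y - e c) (y := y)
      (Submodule.sub_mem _ (e_mem hy) (e_mem hc)) ?_ ?_ ?_ hya hyb hyc (by simp [hyc])
    · simp [B_single, h.symm, (h1.1 h).symm, hac, hbc]
    · simp [B_single, (h1.1 h).symm, h3, hbc]
    · simp [Q_apply, B_single, h', h3]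
  · have h3 : G.Adj b y ↔ G.Adj c y := by
      rw [G.adj_comm b, G.adj_comm c, ← h1]; tauto
    refine triangle_three G ha hb hc hab hac hbc (t := e y) (y := y) (e_mem hy) ?_ ?_
      (Q_single G y).le hya hyb hyc (by simp)
    · simp [B_single, h1']
    · simp [B_single, h3]

/-- A graph on at least five vertices that contains a triangle has a three-dimensional
nonpositive space, hence `n⁺ ≤ |S| - 3`. -/
lemma triangle_five {S : Finset V} (hS : 5 ≤ S.card) {a b c : V} (ha : a ∈ S) (hb : b ∈ S)
    (hc : c ∈ S) (hab : G.Adj a b) (hac : G.Adj a c) (hbc : G.Adj b c) :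
    pos G S + 3 ≤ S.card := by
  have hcard : 1 < (S \ {a, b, c}).card := by
    have h1 := Finset.le_card_sdiff {a, b, c} S
    have h2 : ({a, b, c} : Finset V).card ≤ 3 := Finset.card_le_three
    omega
  obtain ⟨x, hx, y, hy, hxy⟩ := Finset.one_lt_card.1 hcard
  simp only [Finset.mem_sdiff, Finset.mem_insert, Finset.mem_singleton, not_or] at hx hy
  obtain ⟨hx, hxa, hxb, hxc⟩ := hx
  obtain ⟨hy, hya, hyb, hyc⟩ := hy
  -- Unless one further vertex suffices, each has exactly one neighbour in the triangle.
  have attach (z : V) (hz : z ∈ S) (hza : z ≠ a) (hzb : z ≠ b) (hzc : z ≠ c) :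
      pos G S + 3 ≤ S.card ∨ (G.Adj z a ∧ ¬ G.Adj z b ∧ ¬ G.Adj z c) ∨
        (¬ G.Adj z a ∧ G.Adj z b ∧ ¬ G.Adj z c) ∨ (¬ G.Adj z a ∧ ¬ G.Adj z b ∧ G.Adj z c) := by
    have i1 := triangle_one G ha hb hc hab hac hbc hz hza hzb hzc
    have i2 := triangle_one G hb hc ha hbc hab.symm hac.symm hz hzb hzc hza
    have i3 := triangle_one G hc ha hb hac.symm hbc.symm hab hz hzc hza hzb
    tauto
  rcases attach x hx hxa hxb hxc with h | ⟨x1, x2, x3⟩ | ⟨x1, x2, x3⟩ | ⟨x1, x2, x3⟩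
  · exact h
  all_goals
    rcases attach y hy hya hyb hyc with h | ⟨y1, y2, y3⟩ | ⟨y1, y2, y3⟩ | ⟨y1, y2, y3⟩
    · exact h
  · exact triangle_same G ha hb hc hab hac hbc hx hy hxy x1 x2 x3 y1 y2 y3
  · exact triangle_diff G ha hb hc hab hac hbc hx hy x1 x2 x3 y1 y2 y3
  · exact triangle_diff G ha hc hb hac hab hbc.symm hx hy x1 x3 x2 y1 y3 y2
  · exact triangle_diff G ha hb hc hab hac hbc hy hx y1 y2 y3 x1 x2 x3
  · exact triangle_same G hb ha hc hab.symm hbc hac hx hy hxy x2 x1 x3 y2 y1 y3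
  · exact triangle_diff G hb hc ha hbc hab.symm hac.symm hx hy x2 x3 x1 y2 y3 y1
  · exact triangle_diff G ha hc hb hac hab hbc.symm hy hx y1 y3 y2 x1 x3 x2
  · exact triangle_diff G hb hc ha hbc hab.symm hac.symm hy hx y2 y3 y1 x2 x3 x1
  · exact triangle_same G hc ha hb hac.symm hbc.symm hab hx hy hxy x3 x1 x2 y3 y1 y2

/-! ### Closed neighbourhoods and degree counts -/

/-- What remains of `S` after deleting the closed neighbourhood of `u`. -/
abbrev rest (S : Finset V) (u : V) : Finset V := (S \ nb G S u).erase u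

lemma mem_rest {S : Finset V} {u w : V} :
    w ∈ rest G S u ↔ w ≠ u ∧ w ∈ S ∧ ¬ G.Adj u w := by
  simp only [rest, Finset.mem_erase, Finset.mem_sdiff, mem_nb]; tauto

lemma rest_ssubset {S : Finset V} {u : V} (hu : u ∈ S) : rest G S u ⊂ S :=
  lt_of_le_of_lt (Finset.erase_subset_erase u Finset.sdiff_subset) (Finset.erase_ssubset hu)

lemma sum_split {M : Type*} [AddCommMonoid M] {S : Finset V} {u : V} (hu : u ∈ S) (f : V → M) :
    ∑ w ∈ S, f w = ∑ w ∈ nb G S u, f w + (f u + ∑ w ∈ rest G S u, f w) := by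
  rw [Finset.add_sum_erase _ f (by simp [hu, mem_nb]), add_comm,
    Finset.sum_sdiff (show nb G S u ⊆ S from Finset.filter_subset _ _)]

lemma card_rest {S : Finset V} {u : V} (hu : u ∈ S) :
    (nb G S u).card + (1 + (rest G S u).card) = S.card := by
  simp only [Finset.card_eq_sum_ones]
  exact (sum_split G hu (fun _ => 1)).symm

lemma card_nb (S : Finset V) (v : V) :
    (nb G S v).card = ∑ w ∈ S, if G.Adj v w then 1 else 0 := by
  rw [nb, Finset.card_filter]

/-! ### The 4-regular case on ten vertices -/

/-- If `S` induces a 4-regular graph on ten vertices and the non-neighbours of `u` induce a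
2-regular graph, then `u` lies in exactly one triangle; the sum counts it twice. -/
lemma link_count {S : Finset V} (hS : S.card = 10) (h4 : ∀ u ∈ S, (nb G S u).card = 4)
    {u : V} (hu : u ∈ S) (h2 : ∀ w ∈ rest G S u, (nb G (rest G S u) w).card = 2) :
    ∑ v ∈ nb G S u, (nb G (nb G S u) v).card = 2 := by
  have hr := card_rest G hu
  rw [h4 u hu, hS] at hr
  have e1 : ∑ v ∈ nb G S u, ((nb G (nb G S u) v).card + (1 + (nb G (rest G S u) v).card)) =
      ∑ v ∈ nb G S u, 4 := by
    refine Finset.sum_congr rfl fun v hv => ?_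
    obtain ⟨hvS, huv⟩ := (mem_nb G).1 hv
    have := sum_split G hu (fun w => if G.Adj v w then 1 else 0)
    rw [← card_nb, ← card_nb, ← card_nb, if_pos huv.symm, h4 v hvS] at this
    exact this.symm
  have e2 : ∑ w ∈ rest G S u, (nb G (nb G S u) w).card = ∑ w ∈ rest G S u, 2 := by
    refine Finset.sum_congr rfl fun w hw => ?_
    obtain ⟨_, hwS, huw⟩ := (mem_rest G).1 hw
    have := sum_split G hu (fun z => if G.Adj w z then 1 else 0)
    rw [← card_nb, ← card_nb, ← card_nb, if_neg (fun h => huw h.symm), h4 w hwS, h2 w hw] at this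
    omega
  have e3 : ∑ v ∈ nb G S u, (nb G (rest G S u) v).card =
      ∑ w ∈ rest G S u, (nb G (nb G S u) w).card := by
    simp only [card_nb]
    rw [Finset.sum_comm]
    simp only [G.adj_comm]
  rw [Finset.sum_add_distrib, Finset.sum_add_distrib, e3, e2] at e1
  simp only [Finset.sum_const, smul_eq_mul, h4 u hu] at e1
  omega

/-- Ten vertices cannot be partitioned into triangles. The count is taken as the trace of the
cube of the adjacency matrix modulo 3, which vanishes because `tr (M ^ 3) = (tr M) ^ 3`. -/
lemma no_ten {S : Finset V} (hS : S.card = 10) (h4 : ∀ u ∈ S, (nb G S u).card = 4)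
    (h2 : ∀ u ∈ S, ∀ w ∈ rest G S u, (nb G (rest G S u) w).card = 2) : False := by
  have twenty_ne : (20 : ZMod 3) ≠ 0 := by decide
  let M : Matrix V V (ZMod 3) := fun v w => if v ∈ S ∧ w ∈ S ∧ G.Adj v w then 1 else 0
  have : Fact (Nat.Prime 3) := ⟨Nat.prime_three⟩
  have h0 : trace M = 0 := Finset.sum_eq_zero fun v _ => by
    change (if v ∈ S ∧ v ∈ S ∧ G.Adj v v then (1 : ZMod 3) else 0) = 0
    simp
  have ht := ZMod.trace_pow_card M
  rw [h0, zero_pow (by norm_num)] at ht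
  have hd (u : V) : (M ^ 3) u u = if u ∈ S then 2 else 0 := by
    rw [pow_succ', pow_two, Matrix.mul_apply]
    simp only [Matrix.mul_apply]
    split_ifs with hu
    · have hc := congrArg (Nat.cast : ℕ → ZMod 3) (link_count G hS h4 hu (h2 u hu))
      simp only [card_nb] at hc
      simp only [nb, Finset.sum_filter, Nat.cast_sum, Nat.cast_ofNat] at hc
      rw [← hc, ← Finset.sum_subset (Finset.subset_univ S)]
      · refine Finset.sum_congr rfl fun v hv => ?_
        rw [← Finset.sum_subset (Finset.subset_univ S)]
        · by_cases huv : G.Adj u v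
          · simp only [huv, if_true, Nat.cast_sum]
            simp only [M, hu, hv, huv, true_and, if_true, one_mul]
            refine Finset.sum_congr rfl fun w hw => ?_
            simp only [hw, true_and, G.adj_comm w u]
            split_ifs <;> simp
          · simp [M, huv]
        · intro w _ hw; simp [M, hw]
      · intro v _ hv; simp [M, hv]
    · simp [M, hu]
  have h3 : trace (M ^ 3) = 20 := by
    simp only [trace, diag_apply, hd]
    rw [Finset.sum_ite_mem, Finset.univ_inter, Finset.sum_const, hS]
    norm_num
  exact twenty_ne (h3.symm.trans ht)

/-! ### The induction -/

/-- The bound for all induced subgraphs, by induction on the vertex set. -/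
theorem bound (hΔ : ∀ (S : Finset V) (u : V), (nb G S u).card ≤ 4) (S : Finset V) :
    2 * pos G S ≤ neg G S * (neg G S + 1) := by
  induction S using Finset.strongInduction with
  | H S ih =>
  by_contra hcon
  push Not at hcon
  have hnd : Nondeg G S := by
    intro x hx h0
    by_contra hne
    obtain ⟨v, hv⟩ := Function.ne_iff.1 hne
    have hvS : v ∈ S := by
      by_contra h
      exact hv (mem_E.1 hx v h)
    have h1 := pos_le_erase G hx h0 hv
    have h2 := ih _ (Finset.erase_ssubset hvS)
    have h3 := neg_mono G (Finset.erase_subset v S)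
    have h4 := Nat.mul_le_mul h3 (Nat.add_le_add_right h3 1)
    omega
  have hcard := (nondeg_iff G S).1 hnd
  have hne : S.Nonempty := by
    rw [← Finset.card_pos]
    have : 0 < pos G S := by
      by_contra h
      have : pos G S = 0 := by omega
      simp [this] at hcon
    omega
  -- minimality pins down the value of `n⁺`
  have hpos : 2 * pos G S ≤ neg G S * (neg G S + 1) + 2 := by
    obtain ⟨v, hv⟩ := hne
    have h1 : pos G S ≤ _ := pos_le_sdiff G (S := S) (T := {v}) (R := ∅) (by simp)
    rw [Finset.sdiff_empty, ← Finset.erase_eq, Finset.card_singleton] at h1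
    have h2 := ih _ (Finset.erase_ssubset hv)
    have h3 := neg_mono G (Finset.erase_subset v S)
    have h4 := Nat.mul_le_mul h3 (Nat.add_le_add_right h3 1)
    omega
  -- removing closed neighbourhoods bounds all degrees below
  have hrest (u : V) (hu : u ∈ S) : pos G S ≤ (nb G S u).card + pos G (rest G S u) ∧
      neg G (rest G S u) + 1 ≤ neg G S ∧
      2 * pos G (rest G S u) ≤ neg G (rest G S u) * (neg G (rest G S u) + 1) := by
    obtain ⟨v, hv⟩ := hnd.nb_nonempty G hu
    exact ⟨pos_le_closedNb G S u, neg_closedNb_lt G hu hv, ih _ (rest_ssubset G hu)⟩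
  have hdeg (u : V) (hu : u ∈ S) : neg G S + 1 ≤ (nb G S u).card := by
    obtain ⟨h1, h2, h3⟩ := hrest u hu
    nlinarith
  have hk : neg G S ≤ 3 := by
    obtain ⟨u, hu⟩ := hne
    have := hdeg u hu
    have := hΔ S u
    omega
  have hk0 : 1 ≤ neg G S := by
    obtain ⟨u, hu⟩ := hne
    have := (hrest u hu).2.1
    omega
  obtain hk | hk | hk : neg G S = 1 ∨ neg G S = 2 ∨ neg G S = 3 := by omega
  all_goals rw [hk] at hcon hpos hcard hdeg
  · -- three vertices of degree two: a triangle
    obtain ⟨a, ha⟩ := hne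
    obtain ⟨b, hb, c, hc, hbc⟩ := Finset.one_lt_card.1 (hdeg a ha)
    obtain ⟨hbS, hab⟩ := (mem_nb G).1 hb
    obtain ⟨hcS, hac⟩ := (mem_nb G).1 hc
    have hsub : nb G S b ⊆ {a, c} := by
      intro z hz
      obtain ⟨hzS, hbz⟩ := (mem_nb G).1 hz
      have h3 : ({a, b, c} : Finset V) = S := by
        apply Finset.eq_of_subset_of_card_le
        · intro x hx
          simp only [Finset.mem_insert, Finset.mem_singleton] at hx
          rcases hx with rfl | rfl | rfl <;> assumption
        · rw [Finset.card_eq_three.2 ⟨a, b, c, hab.ne, hac.ne, hbc, rfl⟩]; omega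
      rw [← h3] at hzS
      simp only [Finset.mem_insert, Finset.mem_singleton] at hzS ⊢
      rcases hzS with h | h | h
      · exact Or.inl h
      · exact absurd h hbz.ne.symm
      · exact Or.inr h
    have heq := Finset.eq_of_subset_of_card_le hsub
      (Finset.card_le_two.trans (hdeg b hbS))
    have hbc' : G.Adj b c := by
      have : c ∈ nb G S b := by rw [heq]; simp
      exact ((mem_nb G).1 this).2
    have := triangle_two G ha hbS hcS hab hac hbc'
    omega
  · -- six vertices of degree at least three
    obtain ⟨w, hw⟩ := hne
    refine hnd.triangleFree_false G hdeg (fun a ha b hb c hc hab hac hbc => ?_) hw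
      (by have := hdeg w hw; omega) (by have := hdeg w hw; omega)
    have := triangle_five G (by omega) ha hb hc hab hac hbc
    omega
  · -- ten vertices of degree four
    have h4 (u : V) (hu : u ∈ S) : (nb G S u).card = 4 := le_antisymm (hΔ S u) (hdeg u hu)
    refine no_ten G (by omega) h4 (fun u hu w hw => ?_)
    obtain ⟨h1, h2, h3⟩ := hrest u hu
    have hc := card_rest G hu
    rw [h4 u hu] at h1 hc
    have hn : neg G (rest G S u) = 2 := by
      have : neg G (rest G S u) ≤ 2 := by omega
      interval_cases neg G (rest G S u) <;> omega
    rw [hn] at h3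
    have hnd' : Nondeg G (rest G S u) := (nondeg_iff G _).2 (by omega)
    have hdeg' (z : V) (hz : z ∈ rest G S u) : 2 ≤ (nb G (rest G S u) z).card := by
      obtain ⟨v, hv⟩ := hnd'.nb_nonempty G hz
      have i1 : pos G (rest G S u) ≤ _ := pos_le_closedNb G (rest G S u) z
      have i2 := neg_closedNb_lt G hz hv
      have i3 := ih _ ((rest_ssubset G hz).trans (rest_ssubset G hu))
      have : neg G (rest G (rest G S u) z) ≤ 1 := by change neg G (rest G _ z) + 1 ≤ _ at i2; omega
      have : neg G (rest G (rest G S u) z) * (neg G (rest G (rest G S u) z) + 1) ≤ 1 * (1 + 1) :=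
        Nat.mul_le_mul this (by omega)
      change _ ≤ _ + pos G (rest G _ z) at i1
      omega
    by_contra hne2
    have hd3 := hdeg' w hw
    refine hnd'.triangleFree_false G hdeg' (fun a ha b hb c hc hab hac hbc => ?_) hw hd3 (by omega)
    have := triangle_five G (by omega) ha hb hc hab hac hbc
    omega

/-! ### Comparison with the eigenvalue counts -/

/-- The adjacency form is diagonalised by the eigenvector basis. -/
lemma equivalent_eigenvalues :
    QuadraticMap.Equivalent (Q G) (QuadraticMap.weightedSumSquares ℝ G.adjHerm.eigenvalues) := by
  let b : Basis V ℝ (V → ℝ) :=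
    G.adjHerm.eigenvectorBasis.toBasis.map (WithLp.linearEquiv 2 ℝ (V → ℝ))
  have hb (i j : V) : B G (b i) (b j) = if i = j then G.adjHerm.eigenvalues j else 0 := by
    have h1 : B G (b i) (b j) = b i ⬝ᵥ (G.adjMatrix ℝ *ᵥ b j) := by
      simp [B, Matrix.toBilin'_apply']
    have h2 : G.adjMatrix ℝ *ᵥ b j = G.adjHerm.eigenvalues j • b j := by
      simpa [b] using G.adjHerm.mulVec_eigenvectorBasis j
    have h3 : b i ⬝ᵥ b j = if i = j then 1 else 0 := by
      have := orthonormal_iff_ite.1 G.adjHerm.eigenvectorBasis.orthonormal i j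
      rw [← this, EuclideanSpace.inner_eq_star_dotProduct]
      simp [b, dotProduct_comm]
    rw [h1, h2, dotProduct_smul, h3]; simp
  have ho : (QuadraticMap.associated (R := ℝ) (Q G)).IsOrthoᵢ b := by
    intro i j hij
    change QuadraticMap.associated (R := ℝ) (Q G) (b i) (b j) = 0
    rw [QuadraticMap.associated_apply, Q_add, hb i j, if_neg hij]
    simp
  have := QuadraticMap.basisRepr_eq_of_iIsOrtho (Q G) b ho
  have hw : (fun i => Q G (b i)) = G.adjHerm.eigenvalues := by
    funext i; rw [Q_apply, hb, if_pos rfl]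
  rw [hw] at this
  rw [← this]
  exact ⟨QuadraticMap.isometryEquivBasisRepr (Q G) b⟩

lemma le_pos_univ : Nat.card {v : V // 0 < G.adjHerm.eigenvalues v} ≤ pos G Finset.univ := by
  have h := QuadraticForm.sigPos_of_equiv_weightedSumSquares (equivalent_eigenvalues G)
  have h' : Nat.card {v : V // 0 < G.adjHerm.eigenvalues v} = sigPos (Q G) := by
    rw [h]; rfl
  obtain ⟨W, h1, h2⟩ := exists_finrank_eq_sigPos_and_posDef (Q G)
  rw [h', ← h1]
  exact pos_of_map G W.subtype (fun n => by rw [mem_E]; simp) (fun n hn => h2 n hn)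

lemma neg_univ_le : neg G Finset.univ ≤ Nat.card {v : V // G.adjHerm.eigenvalues v < 0} := by
  have h := QuadraticForm.sigNeg_of_equiv_weightedSumSquares (equivalent_eigenvalues G)
  have h' : Nat.card {v : V // G.adjHerm.eigenvalues v < 0} = sigNeg (Q G) := by
    rw [h]; rfl
  obtain ⟨W, h1, h2, h3⟩ := exists_neg G Finset.univ
  rw [h', ← h2]
  apply le_sigNeg_of_negDef
  intro x hx
  have := h3 x x.2 (by simpa using hx)
  change 0 < -(Q G x)
  linarith

end InertiaBound

theorem stmt4 {V : Type*} [Fintype V] (G : SimpleGraph V) [DecidableRel G.Adj]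
    (hΔ : G.maxDegree ≤ 4) :
    2 * G.posInertia ≤ G.negInertia * (G.negInertia + 1) := by
  have hdeg : ∀ v, (G.neighborSet v).ncard ≤ 4 := fun v => by
    rw [Set.ncard_eq_toFinset_card', ← SimpleGraph.neighborFinset]
    exact (G.degree_le_maxDegree v).trans hΔ
  -- switch to the instances used in the definition of the inertia
  let := Fintype.ofFinite V
  let := Classical.decEq V
  let : DecidableRel G.Adj := Classical.decRel _
  have hb := InertiaBound.bound G (fun S u => by
    refine le_trans ?_ (hdeg u)
    rw [← Set.ncard_coe_finset]
    refine Set.ncard_le_ncard (fun v hv => ?_) (Set.toFinite _)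
    exact ((InertiaBound.mem_nb G).1 hv).2) Finset.univ
  have h1 : G.posInertia ≤ _ := InertiaBound.le_pos_univ G
  have h2 : _ ≤ G.negInertia := InertiaBound.neg_univ_le G
  have h3 := Nat.mul_le_mul h2 (Nat.add_le_add_right h2 1)
  omega
end

section
/- If G is a planar finite simple graph with n⁻(G) ≤ 3, then n⁺(G) ≤ 5. -/
/-!
Suppose `n⁻ ≤ 3` and `n⁺ ≥ 6`. Let `B` be the quadratic form of the adjacency matrix, and choose a
vertex set `S`, minimal for inclusion, such that `B` is positive definite on a six-dimensional
space of vectors supported on `S`. Minimality forces `B` to be nondegenerate on the vectors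
supported on `S` and to have no larger positive definite subspace there; hence `|S| ≤ 9`, and a
nonpositive subspace supported on `S` has dimension at most `|S| - 6 ≤ 3`
(`exists_small_coordSubspace`, `SimpleGraph.exists_nonposCodim`).

Independent sets of vertices, and differences `w - w'` of adjacent vertices, produce nonpositive
subspaces. This rules out `|S| ≤ 8` (`SimpleGraph.NonposCodim.eight_lt`) and, for `|S| = 9`,
yields an independent triple `x, y, z` in `S` (`SimpleGraph.NonposCodim.exists_triple`). Then
`B u u > 0` for every `u` supported on `S`, orthogonal to `x, y, z` and nonzero outside the triple.
Applied to `w`, `w - w'`, `w₁ + w₂ - w₃` and `w₁ + w₂ - w₃ - w₄`, this says that the six remaining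
vertices have distinct nonempty neighbourhoods in the triple, so that exactly one of the seven
possible neighbourhoods is missing, and it determines enough edges among the six vertices to
exhibit a subdivision of `K₃,₃`, whichever neighbourhood is missing.

That a planar graph contains no such subdivision is proved with winding angles in place of the
Jordan curve theorem. For disjoint arcs `α`, `β`, the map `(s, t) ↦ α s - β t` from the square to
`ℂ \ {0}` has a continuous logarithm, so its argument returns to its initial value around the
boundary of the square. Counting half turns modulo 2 turns this into a linear equation over
`ZMod 2` for each pair of vertex-disjoint edges (`SimpleGraph.IsPlanar.exists_cochain`), and for a
subdivided `K₃,₃` these equations add up to `1 = 0` (`SimpleGraph.IsPlanar.no_subdivided_K33`).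
-/

open Matrix

/-- A simple graph is planar if it admits a drawing in the plane: an injective placement of
vertices together with a simple arc for each edge joining the images of its endpoints, such
that no arc passes through the image of any vertex other than its endpoints, and arcs of
distinct edges meet only at images of common endpoints. -/
def SimpleGraph.IsPlanar {V : Type*} (G : SimpleGraph V) : Prop :=
  ∃ (f : V → ℝ × ℝ) (γ : ∀ u v : V, G.Adj u v → unitInterval → ℝ × ℝ),
    Function.Injective f ∧
    (∀ u v (h : G.Adj u v), Continuous (γ u v h)) ∧
    (∀ u v (h : G.Adj u v), Function.Injective (γ u v h)) ∧
    (∀ u v (h : G.Adj u v), γ u v h 0 = f u ∧ γ u v h 1 = f v) ∧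
    (∀ u v (h : G.Adj u v) (t : unitInterval) (w : V), γ u v h t = f w → w = u ∨ w = v) ∧
    (∀ u v (h : G.Adj u v) (u' v' : V) (h' : G.Adj u' v') (t t' : unitInterval),
      s(u, v) ≠ s(u', v') → γ u v h t = γ u' v' h' t' →
      ∃ w : V, (w = u ∨ w = v) ∧ (w = u' ∨ w = v') ∧ γ u v h t = f w)

/-! ### Continuous logarithms and the winding of arcs -/

/-- A homotopy of nowhere vanishing functions on a compact space which starts at a constant ends
at a function with a continuous logarithm: over short times, the quotient of two stages stays in
the disc of radius `1` around `1`, where the principal logarithm is continuous. -/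
lemma exists_log_of_homotopy {X : Type*} [MetricSpace X] [CompactSpace X]
    (H : unitInterval × X → ℂ) (hc : Continuous H) (h0 : ∀ p, H p ≠ 0) (c : ℂ)
    (hconst : ∀ x, H (0, x) = c) :
    ∃ g : X → ℂ, Continuous g ∧ ∀ x, Complex.exp (g x) = H (1, x) := by
  rcases isEmpty_or_nonempty X with hX | ⟨⟨x₀⟩⟩
  · exact ⟨fun _ => 0, continuous_const, fun x => (hX.false x).elim⟩
  obtain ⟨p₀, -, hp₀⟩ := isCompact_univ.exists_isMinOn (s := (Set.univ : Set (unitInterval × X)))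
    ⟨(0, x₀), trivial⟩ (f := fun p => ‖H p‖) hc.norm.continuousOn
  have hmin : ∀ p, ‖H p₀‖ ≤ ‖H p‖ := fun p => hp₀ (Set.mem_univ p)
  have hpos : 0 < ‖H p₀‖ := norm_pos_iff.2 (h0 p₀)
  obtain ⟨δ, hδ, hδ'⟩ := Metric.uniformContinuous_iff.1
    (CompactSpace.uniformContinuous_of_continuous hc) _ hpos
  obtain ⟨N, hN⟩ := exists_nat_one_div_lt hδ
  have hN0 : (0 : ℝ) < N + 1 := by positivity
  let τ : ℕ → unitInterval := fun n => Set.projIcc 0 1 zero_le_one ((n : ℝ) / (N + 1))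
  have hτ : ∀ n, dist (τ (n + 1)) (τ n) < δ := by
    intro n
    refine lt_of_le_of_lt ?_ hN
    have h := abs_max_sub_max_le_abs (min 1 (((n + 1 : ℕ) : ℝ) / (N + 1)))
      (min 1 ((n : ℝ) / (N + 1))) 0
    have h' := abs_min_sub_min_le_max 1 (((n + 1 : ℕ) : ℝ) / (N + 1)) 1 ((n : ℝ) / (N + 1))
    have e : (((n + 1 : ℕ) : ℝ) / (N + 1)) - ((n : ℝ) / (N + 1)) = 1 / (N + 1) := by
      push_cast; field_simp; ring
    rw [e, sub_self, abs_zero, max_eq_right (abs_nonneg _),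
      abs_of_pos (by positivity : (0 : ℝ) < 1 / (N + 1))] at h'
    simp only [τ, Subtype.dist_eq, Real.dist_eq, Set.coe_projIcc]
    rw [max_comm 0, max_comm 0]
    exact h.trans h'
  have key : ∀ n, ∃ g : X → ℂ, Continuous g ∧ ∀ x, Complex.exp (g x) = H (τ n, x) := by
    intro n
    induction n with
    | zero =>
      refine ⟨fun _ => Complex.log c, continuous_const, fun x => ?_⟩
      have : τ 0 = 0 := by simp [τ]
      rw [this, hconst, Complex.exp_log]
      rw [← hconst x₀]; exact h0 _
    | succ n ih =>
      obtain ⟨g, hg, hge⟩ := ih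
      have hslit : ∀ x, H (τ (n + 1), x) / H (τ n, x) ∈ Complex.slitPlane := by
        intro x
        apply Complex.ball_one_subset_slitPlane
        rw [mem_ball_iff_norm, div_sub_one (h0 _), norm_div, div_lt_one (norm_pos_iff.2 (h0 _)),
          ← dist_eq_norm]
        refine lt_of_lt_of_le (hδ' ?_) (hmin _)
        rw [Prod.dist_eq]
        simpa using hτ n
      refine ⟨fun x => g x + Complex.log (H (τ (n + 1), x) / H (τ n, x)), ?_, fun x => ?_⟩
      · refine hg.add (Continuous.clog ?_ hslit)
        exact (hc.comp (by fun_prop)).div (hc.comp (by fun_prop)) fun x => h0 _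
      · rw [Complex.exp_add, hge, Complex.exp_log (Complex.slitPlane_ne_zero (hslit x)),
          mul_div_cancel₀ _ (h0 _)]
  obtain ⟨g, hg, hge⟩ := key (N + 1)
  refine ⟨g, hg, fun x => ?_⟩
  have : τ (N + 1) = 1 := by
    simp only [τ]; push_cast; rw [div_self hN0.ne']; simp
  rw [hge, this]

lemma exists_log_square (F : unitInterval × unitInterval → ℂ) (hc : Continuous F)
    (h0 : ∀ p, F p ≠ 0) :
    ∃ g : unitInterval × unitInterval → ℂ, Continuous g ∧ ∀ p, Complex.exp (g p) = F p := by
  obtain ⟨g, hg, hge⟩ := exists_log_of_homotopy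
    (fun q : unitInterval × (unitInterval × unitInterval) => F (q.1 * q.2.1, q.1 * q.2.2))
    (hc.comp (by fun_prop)) (fun _ => h0 _) (F (0, 0)) (by simp)
  exact ⟨g, hg, fun p => by simpa using hge p⟩

lemma exp_lift_unique {g h : unitInterval → ℂ} (hg : Continuous g) (hh : Continuous h)
    (H : ∀ t, Complex.exp (g t) = Complex.exp (h t)) : g 1 - g 0 = h 1 - h 0 := by
  choose n hn using fun t => Complex.exp_eq_exp_iff_exists_int.1 (H t)
  have hre : ∀ t, ((n t : ℤ) : ℝ) = (g t - h t).im / (2 * Real.pi) := by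
    intro t
    rw [hn t]
    have := Real.pi_pos.ne'
    simp [this]
  have hcont : Continuous n := by
    rw [Int.isClosedEmbedding_coe_real.isEmbedding.continuous_iff]
    have : (Int.cast ∘ n : unitInterval → ℝ) = fun t => (g t - h t).im / (2 * Real.pi) :=
      funext hre
    rw [this]
    exact (Complex.continuous_im.comp (hg.sub hh)).div_const _
  have := PreconnectedSpace.constant (inferInstance : PreconnectedSpace unitInterval) hcont
    (x := 0) (y := 1)
  rw [hn 1, hn 0, this]; ring

/-- The total change of the argument along a path `p` in `ℂ \ {0}`, read off a continuous
logarithm of `p`; the junk value for paths without one is `0`. -/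
noncomputable def windAngle (p : unitInterval → ℂ) : ℝ :=
  open Classical in
  if h : ∃ g : unitInterval → ℂ, Continuous g ∧ ∀ t, Complex.exp (g t) = p t
  then (h.choose 1 - h.choose 0).im else 0

lemma windAngle_eq {p g : unitInterval → ℂ} (hg : Continuous g)
    (h : ∀ t, Complex.exp (g t) = p t) : windAngle p = (g 1 - g 0).im := by
  have hex : ∃ g : unitInterval → ℂ, Continuous g ∧ ∀ t, Complex.exp (g t) = p t := ⟨g, hg, h⟩
  rw [windAngle, dif_pos hex]
  rw [exp_lift_unique hex.choose_spec.1 hg fun t => by rw [hex.choose_spec.2 t, h t]]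

/-- Total argument change modulo `2π` is the difference of the arguments of the end points. -/
lemma exists_windAngle_eq {p : unitInterval → ℂ} (hc : Continuous p) (h0 : ∀ t, p t ≠ 0) :
    ∃ n : ℤ, windAngle p = (p 1).arg - (p 0).arg + 2 * Real.pi * n := by
  obtain ⟨g, hg, hge⟩ := exists_log_square (fun q => p q.1) (by fun_prop) (fun _ => h0 _)
  have hw := windAngle_eq (p := p) (g := fun t => g (t, 0)) (by fun_prop) (fun t => hge (t, 0))
  have im : ∀ t, ∃ n : ℤ, (g (t, 0)).im = (p t).arg + n * (2 * Real.pi) := by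
    intro t
    have : Complex.exp (g (t, 0)) = Complex.exp (Complex.log (p t)) := by
      rw [hge, Complex.exp_log (h0 t)]
    obtain ⟨n, hn⟩ := Complex.exp_eq_exp_iff_exists_int.1 this
    exact ⟨n, by rw [hn]; simp [Complex.log_im]⟩
  obtain ⟨n, hn⟩ := im 1
  obtain ⟨m, hm⟩ := im 0
  refine ⟨n - m, ?_⟩
  rw [hw, Complex.sub_im, hn, hm]; push_cast; ring

lemma windAngle_neg (p : unitInterval → ℂ) (hc : Continuous p) (h0 : ∀ t, p t ≠ 0) :
    windAngle (fun t => - p t) = windAngle p := by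
  obtain ⟨g, hg, hge⟩ := exists_log_square (fun q => p q.1) (by fun_prop) (fun _ => h0 _)
  rw [windAngle_eq (p := p) (g := fun t => g (t, 0)) (by fun_prop) (fun t => hge (t, 0)),
    windAngle_eq (p := fun t => - p t) (g := fun t => g (t, 0) + Real.pi * Complex.I)
      (by fun_prop) (fun t => by rw [Complex.exp_add, hge, Complex.exp_pi_mul_I]; ring)]
  congr 1; ring

/-- Going once around the square `[0, 1]²`, the vector `α s - β t` between two disjoint arcs does
not wind around the origin. -/
lemma windAngle_square (α β : unitInterval → ℂ) (hα : Continuous α) (hβ : Continuous β)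
    (h : ∀ s t, α s ≠ β t) :
    windAngle (fun s => α s - β 0) + windAngle (fun t => β t - α 1) =
      windAngle (fun s => α s - β 1) + windAngle (fun t => β t - α 0) := by
  obtain ⟨g, hg, hge⟩ := exists_log_square (fun q => α q.1 - β q.2) (by fun_prop)
    (fun _ => sub_ne_zero.2 (h _ _))
  have e : ∀ a, windAngle (fun t => β t - α a) = windAngle (fun t => α a - β t) := by
    intro a
    rw [← windAngle_neg _ (by fun_prop) fun t => sub_ne_zero.2 (h a t)]
    simp
  rw [e, e,
    windAngle_eq (p := fun s => α s - β 0) (g := fun s => g (s, 0)) (by fun_prop)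
      (fun s => hge (s, 0)),
    windAngle_eq (p := fun s => α s - β 1) (g := fun s => g (s, 1)) (by fun_prop)
      (fun s => hge (s, 1)),
    windAngle_eq (p := fun t => α 0 - β t) (g := fun t => g (0, t)) (by fun_prop)
      (fun t => hge (0, t)),
    windAngle_eq (p := fun t => α 1 - β t) (g := fun t => g (1, t)) (by fun_prop)
      (fun t => hge (1, t))]
  simp only [Complex.sub_im]; ring

lemma exists_arg_sub (z : ℂ) (hz : z ≠ 0) :
    ∃ n : ℤ, z.arg - (-z).arg = Real.pi * (1 + 2 * n) := by
  have : Complex.exp (Complex.log z) = Complex.exp (Complex.log (-z) + Real.pi * Complex.I) := by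
    rw [Complex.exp_add, Complex.exp_pi_mul_I, Complex.exp_log hz,
      Complex.exp_log (neg_ne_zero.2 hz)]; ring
  obtain ⟨n, hn⟩ := Complex.exp_eq_exp_iff_exists_int.1 this
  refine ⟨n, ?_⟩
  have := congrArg Complex.im hn
  simp [Complex.log_im] at this
  linarith

/-! ### A mod 2 obstruction to planarity -/

/-- The algebraic shadow of a drawing. Here `k a b w` is the number of extra full turns (mod 2)
made by the vector from `w` to a point running along the arc of `ab`, compared with principal
arguments, and `d x y` is, mod 2, the integer `n` for which the principal arguments of `x - y` and
`y - x` differ by `(1 + 2n)π`. The equation says that the arcs of two vertex-disjoint edges do not wind around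
each other. -/
lemma SimpleGraph.IsPlanar.exists_cochain {V : Type*} {G : SimpleGraph V} (hG : G.IsPlanar) :
    ∃ (d : V → V → ZMod 2) (k : V → V → V → ZMod 2),
      (∀ x y, x ≠ y → d y x = d x y + 1) ∧
      ∀ a b c e, G.Adj a b → G.Adj c e → a ≠ c → a ≠ e → b ≠ c → b ≠ e →
        d b c + d c a + d a e + d e b + k a b c + k a b e + k c e a + k c e b = 0 := by
  classical
  obtain ⟨f, γ, hf, hγ, -, hend, hvert, hcross⟩ := hG
  let ι : ℝ × ℝ → ℂ := Complex.equivRealProdCLM.symm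
  have hι : Continuous ι := Complex.equivRealProdCLM.symm.continuous
  have hιi : Function.Injective ι := Complex.equivRealProdCLM.symm.injective
  let φ : V → ℂ := fun v => ι (f v)
  have hφ : ∀ x y, x ≠ y → φ x - φ y ≠ 0 := fun x y h h' =>
    h (hf (hιi (sub_eq_zero.1 h')))
  have hδ : ∀ x y, ∃ n : ℤ, x ≠ y →
      (φ x - φ y).arg - (φ y - φ x).arg = Real.pi * (1 + 2 * n) := by
    intro x y
    by_cases h : x = y
    · exact ⟨0, fun h' => (h' h).elim⟩
    · obtain ⟨n, hn⟩ := exists_arg_sub _ (hφ x y h)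
      exact ⟨n, fun _ => by simpa using hn⟩
  choose δ hδ using hδ
  let arc : ∀ u v, G.Adj u v → unitInterval → ℂ := fun u v h t => ι (γ u v h t)
  have harc : ∀ u v h, Continuous (arc u v h) := fun u v h => hι.comp (hγ u v h)
  have harc0 : ∀ u v h, arc u v h 0 = φ u := fun u v h => by simp [arc, φ, (hend u v h).1]
  have harc1 : ∀ u v h, arc u v h 1 = φ v := fun u v h => by simp [arc, φ, (hend u v h).2]
  have hK : ∀ a b w, ∃ n : ℤ, ∀ h : G.Adj a b, a ≠ w → b ≠ w →
      windAngle (fun t => arc a b h t - φ w) =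
        (φ b - φ w).arg - (φ a - φ w).arg + 2 * Real.pi * n := by
    intro a b w
    by_cases h : G.Adj a b ∧ a ≠ w ∧ b ≠ w
    · obtain ⟨h, haw, hbw⟩ := h
      obtain ⟨n, hn⟩ := exists_windAngle_eq (p := fun t => arc a b h t - φ w)
        ((harc a b h).sub continuous_const) (fun t ht => by
          rcases hvert a b h t w (hιi (sub_eq_zero.1 ht)) with h' | h'
          · exact haw h'.symm
          · exact hbw h'.symm)
      refine ⟨n, fun _ _ _ => ?_⟩
      rw [hn, harc0, harc1]
    · exact ⟨0, fun h1 h2 h3 => (h ⟨h1, h2, h3⟩).elim⟩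
  choose K hK using hK
  refine ⟨fun x y => δ x y, fun a b w => K a b w, fun x y h => ?_, ?_⟩
  · have h1 := hδ x y h
    have h2 := hδ y x h.symm
    have h3 : Real.pi * (2 + 2 * (δ x y : ℝ) + 2 * (δ y x : ℝ)) = 0 := by linear_combination -h1 - h2
    have h4 := (mul_eq_zero.1 h3).resolve_left Real.pi_pos.ne'
    have h5 : δ y x = - δ x y - 1 := by
      have : (2 : ℤ) + 2 * δ x y + 2 * δ y x = 0 := by exact_mod_cast h4
      omega
    simp only [h5]
    push_cast
    generalize (δ x y : ZMod 2) = u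
    revert u; decide
  · intro a b c e hab hce hac hae hbc hbe
    have hdis : ∀ s t, arc a b hab s ≠ arc c e hce t := by
      intro s t hst
      obtain ⟨w, h1, h2, -⟩ := hcross a b hab c e hce s t (by
        intro h
        rcases Sym2.eq_iff.1 h with h | h
        · exact hac h.1
        · exact hae h.1) (hιi hst)
      rcases h1 with rfl | rfl <;> rcases h2 with h2 | h2 <;> contradiction
    have hsq := windAngle_square _ _ (harc a b hab) (harc c e hce) hdis
    simp only [harc0, harc1] at hsq
    rw [hK a b c hab hac hbc, hK a b e hab hae hbe, hK c e a hce hac.symm hae.symm,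
      hK c e b hce hbc.symm hbe.symm] at hsq
    have h1 := hδ b c hbc
    have h2 := hδ c a hac.symm
    have h3 := hδ a e hae
    have h4 := hδ e b hbe.symm
    have h5 : 2 * Real.pi * ((2 : ℝ) + δ b c + δ c a + δ a e + δ e b + K a b c - K a b e
        - K c e a + K c e b) = 0 := by linear_combination hsq - h1 - h2 - h3 - h4
    have h6 := (mul_eq_zero.1 h5).resolve_left (by positivity)
    have h7 : (2 : ℤ) + δ b c + δ c a + δ a e + δ e b + K a b c - K a b e
        - K c e a + K c e b = 0 := by exact_mod_cast h6
    have h8 := congrArg (Int.cast : ℤ → ZMod 2) h7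
    push_cast at h8
    have e2 : (2 : ZMod 2) = 0 := rfl
    rw [CharTwo.sub_eq_add, CharTwo.sub_eq_add, e2, zero_add] at h8
    exact h8

/-- A planar graph contains no copy of `K₃,₃` with parts `p₁ p₂ p₃` and `q₁ q₂ q₃` in which the
edge `p₂q₁` is subdivided by `s` and the edge `p₃q₂` by `t`. The equations of
`SimpleGraph.IsPlanar.exists_cochain`, summed over all pairs of edges lying on vertex-disjoint
edges of `K₃,₃`, add up to `1 = 0`: every `k` occurs an even number of times, and so does every
`d` up to the rule `d y x = d x y + 1`, which contributes the `1`. -/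
lemma SimpleGraph.IsPlanar.no_subdivided_K33 {V : Type*} {G : SimpleGraph V} (hG : G.IsPlanar)
    (p1 p2 p3 q1 q2 q3 s t : V) (hnd : [p1, p2, p3, q1, q2, q3, s, t].Nodup)
    (hp1q1 : G.Adj p1 q1)
    (hp1q2 : G.Adj p1 q2)
    (hp1q3 : G.Adj p1 q3)
    (hp2s : G.Adj p2 s)
    (hsq1 : G.Adj s q1)
    (hp2q2 : G.Adj p2 q2)
    (hp2q3 : G.Adj p2 q3)
    (hp3q1 : G.Adj p3 q1)
    (hp3t : G.Adj p3 t)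
    (htq2 : G.Adj t q2)
    (hp3q3 : G.Adj p3 q3) : False := by
  obtain ⟨d, k, hd, hk⟩ := hG.exists_cochain
  simp only [List.nodup_cons, List.mem_cons, List.not_mem_nil, or_false, not_or,
    not_false_eq_true, List.nodup_nil, and_true] at hnd
  obtain ⟨⟨np1p2, np1p3, np1q1, np1q2, np1q3, np1s, np1t⟩,
    ⟨np2p3, np2q1, np2q2, np2q3, np2s, np2t⟩,
    ⟨np3q1, np3q2, np3q3, np3s, np3t⟩,
    ⟨nq1q2, nq1q3, nq1s, nq1t⟩,
    ⟨nq2q3, nq2s, nq2t⟩,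
    ⟨nq3s, nq3t⟩,
    nst⟩ := hnd
  have e0 := hk p1 q1 p2 q2 hp1q1 hp2q2 np1p2 np1q2 (Ne.symm np2q1) nq1q2
  have e1 := hk p1 q1 p2 q3 hp1q1 hp2q3 np1p2 np1q3 (Ne.symm np2q1) nq1q3
  have e2 := hk p1 q1 p3 t hp1q1 hp3t np1p3 np1t (Ne.symm np3q1) nq1t
  have e3 := hk p1 q1 t q2 hp1q1 htq2 np1t np1q2 nq1t nq1q2
  have e4 := hk p1 q1 p3 q3 hp1q1 hp3q3 np1p3 np1q3 (Ne.symm np3q1) nq1q3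
  have e5 := hk p1 q2 p2 s hp1q2 hp2s np1p2 np1s (Ne.symm np2q2) nq2s
  have e6 := hk p1 q2 s q1 hp1q2 hsq1 np1s np1q1 nq2s (Ne.symm nq1q2)
  have e7 := hk p1 q2 p2 q3 hp1q2 hp2q3 np1p2 np1q3 (Ne.symm np2q2) nq2q3
  have e8 := hk p1 q2 p3 q1 hp1q2 hp3q1 np1p3 np1q1 (Ne.symm np3q2) (Ne.symm nq1q2)
  have e9 := hk p1 q2 p3 q3 hp1q2 hp3q3 np1p3 np1q3 (Ne.symm np3q2) nq2q3
  have e10 := hk p1 q3 p2 s hp1q3 hp2s np1p2 np1s (Ne.symm np2q3) nq3s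
  have e11 := hk p1 q3 s q1 hp1q3 hsq1 np1s np1q1 nq3s (Ne.symm nq1q3)
  have e12 := hk p1 q3 p2 q2 hp1q3 hp2q2 np1p2 np1q2 (Ne.symm np2q3) (Ne.symm nq2q3)
  have e13 := hk p1 q3 p3 q1 hp1q3 hp3q1 np1p3 np1q1 (Ne.symm np3q3) (Ne.symm nq1q3)
  have e14 := hk p1 q3 p3 t hp1q3 hp3t np1p3 np1t (Ne.symm np3q3) nq3t
  have e15 := hk p1 q3 t q2 hp1q3 htq2 np1t np1q2 nq3t (Ne.symm nq2q3)
  have e16 := hk p2 s p3 t hp2s hp3t np2p3 np2t (Ne.symm np3s) nst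
  have e17 := hk p2 s t q2 hp2s htq2 np2t np2q2 nst (Ne.symm nq2s)
  have e18 := hk s q1 p3 t hsq1 hp3t (Ne.symm np3s) nst (Ne.symm np3q1) nq1t
  have e19 := hk s q1 t q2 hsq1 htq2 nst (Ne.symm nq2s) nq1t nq1q2
  have e20 := hk p2 s p3 q3 hp2s hp3q3 np2p3 np2q3 (Ne.symm np3s) (Ne.symm nq3s)
  have e21 := hk s q1 p3 q3 hsq1 hp3q3 (Ne.symm np3s) (Ne.symm nq3s) (Ne.symm np3q1) nq1q3
  have e22 := hk p2 q2 p3 q1 hp2q2 hp3q1 np2p3 np2q1 (Ne.symm np3q2) (Ne.symm nq1q2)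
  have e23 := hk p2 q2 p3 q3 hp2q2 hp3q3 np2p3 np2q3 (Ne.symm np3q2) nq2q3
  have e24 := hk p2 q3 p3 q1 hp2q3 hp3q1 np2p3 np2q1 (Ne.symm np3q3) (Ne.symm nq1q3)
  have e25 := hk p2 q3 p3 t hp2q3 hp3t np2p3 np2t (Ne.symm np3q3) nq3t
  have e26 := hk p2 q3 t q2 hp2q3 htq2 np2t np2q2 nq3t (Ne.symm nq2q3)
  simp only [hd p1 p2 np1p2, hd p1 p3 np1p3, hd p1 s np1s, hd p1 t np1t, hd p2 p3 np2p3, hd p2 q1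
    np2q1, hd p2 q2 np2q2, hd p2 q3 np2q3, hd p2 t np2t, hd p3 q1 np3q1, hd p3 q2 np3q2, hd p3 q3
    np3q3, hd p3 s np3s, hd q1 q2 nq1q2, hd q1 q3 nq1q3, hd q1 t nq1t, hd q2 q3 nq2q3, hd q2 s
    nq2s, hd q3 s nq3s, hd q3 t nq3t, hd s t nst]
    at e0 e1 e2 e3 e4 e5 e6 e7 e8 e9 e10 e11 e12 e13
      e14 e15 e16 e17 e18 e19 e20 e21 e22 e23 e24 e25 e26
  have : (1 : ZMod 2) = 0 := by
    linear_combination (norm := (ring_nf; reduce_mod_char)) e0 + e1 + e2 + e3 + e4 + e5 + e6 + e7 +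
      e8 + e9 + e10 + e11 + e12 + e13 + e14 + e15 + e16 + e17 + e18 + e19 + e20 + e21 + e22 + e23 +
      e24 + e25 + e26
  exact one_ne_zero this

/-! ### Reduction to a small coordinate subspace -/

/-- The coordinate subspace of vectors in `V → ℝ` supported on `S`. -/
def coordSubspace {V : Type*} (S : Finset V) : Submodule ℝ (V → ℝ) :=
  ⨅ i ∈ ((S : Set V)ᶜ : Set V), LinearMap.ker (LinearMap.proj i : (V → ℝ) →ₗ[ℝ] ℝ)

lemma mem_coordSubspace {V : Type*} {S : Finset V} {x : V → ℝ} :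
    x ∈ coordSubspace S ↔ ∀ i ∉ S, x i = 0 := by
  simp [coordSubspace]

lemma single_mem_coordSubspace {V : Type*} [DecidableEq V] {S : Finset V} {w : V} (hw : w ∈ S) :
    (Pi.single w 1 : V → ℝ) ∈ coordSubspace S :=
  mem_coordSubspace.2 fun i hi => by
    rw [Pi.single_apply, if_neg]
    rintro rfl
    exact hi hw

lemma finrank_coordSubspace {V : Type*} (S : Finset V) :
    Module.finrank ℝ (coordSubspace S) = S.card := by
  classical
  have e := LinearMap.iInfKerProjEquiv ℝ (fun _ : V => ℝ) (I := (S : Set V)) (J := (S : Set V)ᶜ)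
    disjoint_compl_right (by simp)
  rw [coordSubspace, e.finrank_eq]
  simp

lemma Submodule.finrank_add_le_finrank_inf {V : Type*} [Fintype V] (P Q : Submodule ℝ (V → ℝ)) :
    Module.finrank ℝ P + Module.finrank ℝ Q ≤
      Module.finrank ℝ (P ⊓ Q : Submodule ℝ (V → ℝ)) + Fintype.card V := by
  have h1 := Submodule.finrank_sup_add_finrank_inf_eq P Q
  have h2 := Submodule.finrank_le (P ⊔ Q)
  rw [Module.finrank_fintype_fun_eq_card] at h2
  omega

/-- A hyperplane section lowers the dimension by at most one; here the hyperplane is `x v = 0`,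
and the section is supported on `S.erase v`. -/
lemma exists_le_coordSubspace_erase {V : Type*} [Fintype V] [DecidableEq V] {S : Finset V}
    {W : Submodule ℝ (V → ℝ)} (hW : W ≤ coordSubspace S) (v : V) :
    ∃ P ≤ W, P ≤ coordSubspace (S.erase v) ∧
      Module.finrank ℝ W ≤ Module.finrank ℝ P + 1 := by
  refine ⟨W ⊓ coordSubspace (Finset.univ.erase v), inf_le_left, ?_, ?_⟩
  · rintro x ⟨hx1, hx2⟩
    have hx1 := mem_coordSubspace.1 (hW hx1)
    have hx2 := mem_coordSubspace.1 hx2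
    refine mem_coordSubspace.2 fun i hi => ?_
    by_cases h : i = v
    · exact hx2 i (by simp [h])
    · exact hx1 i (by simpa [h] using hi)
  · have := Submodule.finrank_add_le_finrank_inf W (coordSubspace (Finset.univ.erase v))
    rw [finrank_coordSubspace, Finset.card_erase_of_mem (Finset.mem_univ v),
      Finset.card_univ] at this
    have : 0 < Fintype.card V := Fintype.card_pos_iff.2 ⟨v⟩
    omega

/-- If a symmetric form is positive definite on a subspace of dimension `p` and nonnegative on a
subspace of codimension `q`, then some coordinate subspace of dimension at most `p + q` still
carries a `p`-dimensional positive definite subspace, so that its nonpositive subspaces have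
codimension at least `p`. The coordinate set is chosen minimal for inclusion: then the form is
nondegenerate on the coordinate subspace and has no `(p + 1)`-dimensional positive definite
subspace there. -/
lemma exists_small_coordSubspace {V : Type*} [Fintype V] (B : LinearMap.BilinForm ℝ (V → ℝ))
    (hB : B.IsSymm) {p q : ℕ} (W₀ N : Submodule ℝ (V → ℝ)) (hp : p ≤ Module.finrank ℝ W₀)
    (hW₀ : ∀ x ∈ W₀, x ≠ 0 → 0 < B x x) (hq : Fintype.card V ≤ Module.finrank ℝ N + q)
    (hN : ∀ x ∈ N, 0 ≤ B x x) :
    ∃ S : Finset V, p ≤ S.card ∧ S.card ≤ p + q ∧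
      ∀ U ≤ coordSubspace S, (∀ u ∈ U, B u u ≤ 0) → Module.finrank ℝ U + p ≤ S.card := by
  classical
  let good : Finset V → Prop := fun S => ∃ W ≤ coordSubspace S, p ≤ Module.finrank ℝ W ∧
    ∀ x ∈ W, x ≠ 0 → 0 < B x x
  have hex : ∃ S, good S :=
    ⟨Finset.univ, W₀, fun x _ => mem_coordSubspace.2 (by simp), hp, hW₀⟩
  obtain ⟨S, ⟨W, hWS, hWp, hW⟩, hmin⟩ :=
    exists_minimal_of_wellFoundedLT good hex
  have herase : ∀ v ∈ S, ¬ good (S.erase v) := fun v hv h =>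
    Finset.notMem_erase v S (hmin h (Finset.erase_subset v S) hv)
  have hmax : ∀ P ≤ coordSubspace S, (∀ x ∈ P, x ≠ 0 → 0 < B x x) →
      Module.finrank ℝ P ≤ p := by
    intro P hPS hP
    by_contra! hlt
    have hcard := Submodule.finrank_mono hPS
    rw [finrank_coordSubspace] at hcard
    obtain ⟨v, hv⟩ := Finset.card_pos.1 (by omega : 0 < S.card)
    obtain ⟨Q, hQP, hQS, hQ⟩ := exists_le_coordSubspace_erase hPS v
    exact herase v hv ⟨Q, hQS, by omega, fun x hx => hP x (hQP hx)⟩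
  have hrad : ∀ r ∈ coordSubspace S, (∀ x ∈ coordSubspace S, B r x = 0) → r = 0 := by
    intro r hr hr0
    by_contra hne
    obtain ⟨v, hv⟩ := Function.ne_iff.1 hne
    have hv : r v ≠ 0 := hv
    have hvS : v ∈ S := by
      by_contra h
      exact hv (mem_coordSubspace.1 hr v h)
    -- translating along the radical to kill the coordinate `v` preserves the form
    let T : (V → ℝ) →ₗ[ℝ] (V → ℝ) :=
      LinearMap.id - (LinearMap.toSpanSingleton ℝ (V → ℝ) r).comp
        ((r v)⁻¹ • (LinearMap.proj v : (V → ℝ) →ₗ[ℝ] ℝ))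
    have hT : ∀ x, T x = x - ((r v)⁻¹ * x v) • r := fun x => by simp [T]
    have hBT : ∀ x ∈ coordSubspace S, B (T x) (T x) = B x x := by
      intro x hx
      rw [hT]
      simp [hr0 x hx, hr0 r hr, hB.eq x r]
    have hinj : ∀ x ∈ W, T x = 0 → x = 0 := by
      intro x hx hx0
      by_contra hne
      have := hW x hx hne
      rw [← hBT x (hWS hx), hx0] at this
      simp at this
    refine herase v hvS ⟨W.map T, ?_, ?_, ?_⟩
    · rintro _ ⟨x, hx, rfl⟩
      rw [hT]
      refine mem_coordSubspace.2 fun i hi => ?_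
      by_cases h : i = v
      · subst h
        simp only [Pi.sub_apply, Pi.smul_apply, smul_eq_mul]
        field_simp
        simp
      · have hiS : i ∉ S := by simpa [h] using hi
        simp [mem_coordSubspace.1 (hWS hx) i hiS, mem_coordSubspace.1 hr i hiS]
    · refine hWp.trans (le_of_eq ?_)
      have hinj' : Function.Injective (T.domRestrict W) := by
        rw [injective_iff_map_eq_zero]
        exact fun x hx => Subtype.ext (hinj x x.2 hx)
      rw [← LinearMap.finrank_range_of_inj hinj', LinearMap.range_domRestrict]
    · rintro _ ⟨x, hx, rfl⟩ hne
      rw [hBT x (hWS hx)]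
      refine hW x hx fun h => hne ?_
      rw [h, map_zero]
  have hWdim : Module.finrank ℝ W = p := le_antisymm (hmax W hWS hW) hWp
  have horth : ∀ w ∈ W, ∀ u ∈ B.orthogonal W, B w u = 0 := fun w hw u hu => hu w hw
  have hnonpos : ∀ u ∈ coordSubspace S ⊓ B.orthogonal W, B u u ≤ 0 := by
    rintro u ⟨huS, huW⟩
    by_contra! hpos
    have hP : ∀ x ∈ W ⊔ Submodule.span ℝ {u}, x ≠ 0 → 0 < B x x := by
      intro x hx hne
      obtain ⟨w, hw, y, hy, rfl⟩ := Submodule.mem_sup.1 hx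
      obtain ⟨c, rfl⟩ := Submodule.mem_span_singleton.1 hy
      have h0 : B w u = 0 := horth w hw u huW
      have h1 : B (w + c • u) (w + c • u) = B w w + c ^ 2 * B u u := by
        simp [h0, hB.eq u w]
        ring
      rw [h1]
      by_cases hw0 : w = 0
      · have hc : c ≠ 0 := fun hc => hne (by simp [hc, hw0])
        subst hw0
        simp only [map_zero, zero_add]
        positivity
      · have := hW w hw hw0
        positivity
    have hle : W ⊔ Submodule.span ℝ {u} ≤ coordSubspace S :=
      sup_le hWS ((Submodule.span_singleton_le_iff_mem _ _).2 huS)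
    have h1 := hmax _ hle hP
    have h2 : u ∉ W := fun h => by
      have := horth u h u huW
      linarith
    have h3 : W < W ⊔ Submodule.span ℝ {u} := by
      refine lt_of_le_of_ne le_sup_left fun h => h2 ?_
      rw [h]
      exact Submodule.mem_sup_right (Submodule.mem_span_singleton_self u)
    have := Submodule.finrank_lt_finrank_of_lt h3
    omega
  refine ⟨S, ?_, ?_, ?_⟩
  · have := Submodule.finrank_mono hWS
    rw [finrank_coordSubspace] at this
    omega
  · by_contra! hlt
    have h1 := LinearMap.BilinForm.finrank_add_finrank_orthogonal hB.isRefl W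
    rw [Module.finrank_fintype_fun_eq_card] at h1
    have h2 := Submodule.finrank_add_le_finrank_inf (coordSubspace S) (B.orthogonal W)
    rw [finrank_coordSubspace] at h2
    have h3 := Submodule.finrank_add_le_finrank_inf (coordSubspace S ⊓ B.orthogonal W) N
    have hpos : 0 < Module.finrank ℝ
        (coordSubspace S ⊓ B.orthogonal W ⊓ N : Submodule ℝ (V → ℝ)) := by omega
    have hnb : coordSubspace S ⊓ B.orthogonal W ⊓ N ≠ ⊥ := by
      intro h
      rw [h] at hpos
      simp at hpos
    obtain ⟨u, ⟨hu, huN⟩, hu0⟩ := Submodule.exists_mem_ne_zero_of_ne_bot hnb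
    have huu : B u u = 0 := le_antisymm (hnonpos u hu) (hN u huN)
    -- an isotropic vector of a semidefinite form lies in its radical
    have huy : ∀ y ∈ coordSubspace S ⊓ B.orthogonal W, B u y = 0 := by
      intro y hy
      have hyy := hnonpos y hy
      by_contra hne
      have hd : 0 < 1 - B y y := by linarith
      have h := hnonpos (u + (B u y / (1 - B y y)) • y) (add_mem hu (Submodule.smul_mem _ _ hy))
      have h4 : B (u + (B u y / (1 - B y y)) • y) (u + (B u y / (1 - B y y)) • y) =
          (B u y) ^ 2 * (2 - B y y) / (1 - B y y) ^ 2 := by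
        simp [huu, hB.eq y u]
        field_simp
        ring
      rw [h4] at h
      have h5 : 0 < 2 - B y y := by linarith
      have : 0 < (B u y) ^ 2 * (2 - B y y) / (1 - B y y) ^ 2 := by positivity
      linarith
    have hcompl : IsCompl W (B.orthogonal W) := by
      rw [LinearMap.BilinForm.isCompl_orthogonal_iff_disjoint hB.isRefl, Submodule.disjoint_def]
      intro x hx hx'
      by_contra hne
      have := hW x hx hne
      rw [horth x hx x hx'] at this
      exact lt_irrefl _ this
    refine hu0 (hrad u hu.1 fun x hx => ?_)
    obtain ⟨w, hw, y, hy, rfl⟩ := Submodule.mem_sup.1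
      (hcompl.sup_eq_top ▸ Submodule.mem_top : x ∈ W ⊔ B.orthogonal W)
    have hyS : y ∈ coordSubspace S := by
      have := Submodule.sub_mem _ hx (hWS hw)
      simpa using this
    rw [map_add, huy y ⟨hyS, hy⟩, hB.eq u w, horth w hw u hu.2, add_zero]
  · intro U hUS hU
    have hdis : Disjoint U W := by
      rw [Submodule.disjoint_def]
      intro x hxU hxW
      by_contra hne
      have h1 := hU x hxU
      have h2 := hW x hxW hne
      linarith
    have h1 := Submodule.finrank_sup_add_finrank_inf_eq U W
    rw [hdis.eq_bot, finrank_bot] at h1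
    have h2 := Submodule.finrank_mono (sup_le hUS hWS)
    rw [finrank_coordSubspace] at h2
    omega

/-! ### The adjacency form -/

/-- The quadratic form of the adjacency matrix, as a bilinear form. -/
noncomputable def SimpleGraph.adjForm_s5 {V : Type*} [Fintype V] [DecidableEq V] (G : SimpleGraph V)
    [DecidableRel G.Adj] : LinearMap.BilinForm ℝ (V → ℝ) :=
  Matrix.toBilin' (G.adjMatrix ℝ)

section adjForm_s5

variable {V : Type*} [Fintype V] [DecidableEq V] {G : SimpleGraph V} [DecidableRel G.Adj]

lemma SimpleGraph.adjForm_isSymm : G.adjForm_s5.IsSymm := by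
  refine ⟨fun x y => ?_⟩
  rw [adjForm_s5, Matrix.toBilin'_apply', Matrix.toBilin'_apply', Matrix.dotProduct_mulVec,
    dotProduct_comm, ← Matrix.mulVec_transpose, G.transpose_adjMatrix]

lemma SimpleGraph.adjForm_single (v w : V) :
    G.adjForm_s5 (Pi.single v 1) (Pi.single w 1) = if G.Adj v w then 1 else 0 := by
  rw [adjForm_s5, Matrix.toBilin'_single, G.adjMatrix_apply]

/-- Every nonpositive subspace for the adjacency form inside `coordSubspace S` has codimension
at least `p` there. -/
def SimpleGraph.NonposCodim (G : SimpleGraph V) [DecidableRel G.Adj] (S : Finset V) (p : ℕ) :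
    Prop :=
  ∀ U ≤ coordSubspace S, (∀ u ∈ U, G.adjForm_s5 u u ≤ 0) → Module.finrank ℝ U + p ≤ S.card

/-- An orthogonal change of coordinates diagonalizes the adjacency form. -/
lemma SimpleGraph.exists_diagonalization_s5 :
    ∃ E : (V → ℝ) ≃ₗ[ℝ] (V → ℝ), ∀ c,
      G.adjForm_s5 (E c) (E c) = ∑ v, G.adjHerm.eigenvalues v * c v ^ 2 := by
  have hA := G.adjHerm
  have hU := hA.eigenvectorUnitary.2
  set U : Matrix V V ℝ := (hA.eigenvectorUnitary : Matrix V V ℝ) with hUdef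
  have h1 : star U * U = 1 := Unitary.star_mul_self_of_mem hU
  have h2 : U * star U = 1 := Unitary.mul_star_self_of_mem hU
  have hst : star U = Uᵀ := by
    rw [Matrix.star_eq_conjTranspose, Matrix.conjTranspose_eq_transpose_of_trivial]
  have hspec : G.adjMatrix ℝ = U * diagonal hA.eigenvalues * star U := by
    have := hA.spectral_theorem
    simpa [Unitary.conjStarAlgAut_apply, hUdef] using this
  refine ⟨Matrix.toLin'OfInv h1 h2, fun c => ?_⟩
  change Matrix.toBilin' (G.adjMatrix ℝ) (U *ᵥ c) (U *ᵥ c) = _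
  rw [Matrix.toBilin'_apply']
  have h3 : G.adjMatrix ℝ *ᵥ U *ᵥ c = U *ᵥ (diagonal hA.eigenvalues *ᵥ c) := by
    refine (congrArg (· *ᵥ U *ᵥ c) hspec).trans ?_
    simp only [Matrix.mulVec_mulVec, Matrix.mul_assoc, h1, Matrix.mul_one]
  rw [h3, Matrix.dotProduct_mulVec, ← Matrix.mulVec_transpose, Matrix.mulVec_mulVec, ← hst, h1,
    Matrix.one_mulVec]
  simp only [dotProduct, Matrix.mulVec_diagonal]
  exact Finset.sum_congr rfl fun v _ => by ring

/-- Sylvester's law of inertia together with `exists_small_coordSubspace`: a graph with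
`p ≤ n⁺` and `n⁻ ≤ q` has an induced subgraph on between `p` and `p + q` vertices whose
nonpositive subspaces have codimension at least `p`. -/
lemma SimpleGraph.exists_nonposCodim {p q : ℕ}
    (hp : p ≤ Nat.card {v : V // 0 < G.adjHerm.eigenvalues v})
    (hq : Nat.card {v : V // G.adjHerm.eigenvalues v < 0} ≤ q) :
    ∃ S : Finset V, p ≤ S.card ∧ S.card ≤ p + q ∧ G.NonposCodim S p := by
  obtain ⟨E, hE⟩ := SimpleGraph.exists_diagonalization_s5 (G := G)
  let P : Finset V := {v | 0 < G.adjHerm.eigenvalues v}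
  let Q : Finset V := {v | ¬ G.adjHerm.eigenvalues v < 0}
  refine exists_small_coordSubspace G.adjForm_s5 SimpleGraph.adjForm_isSymm
    ((coordSubspace P).map (E : (V → ℝ) →ₗ[ℝ] (V → ℝ)))
    ((coordSubspace Q).map (E : (V → ℝ) →ₗ[ℝ] (V → ℝ))) ?_ ?_ ?_ ?_
  · rw [LinearEquiv.finrank_map_eq, finrank_coordSubspace]
    rwa [Nat.card_eq_fintype_card, Fintype.card_subtype] at hp
  · rintro _ ⟨c, hc, rfl⟩ hne
    have hc := mem_coordSubspace.1 hc
    have hnn : ∀ v, 0 ≤ G.adjHerm.eigenvalues v * c v ^ 2 := fun v => by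
      by_cases hv : v ∈ P
      · have : 0 < G.adjHerm.eigenvalues v := by simpa [P] using hv
        positivity
      · simp [hc v hv]
    change 0 < G.adjForm_s5 (E c) (E c)
    rw [hE]
    have hc0 : c ≠ 0 := fun h => hne (by simp [h])
    obtain ⟨v, hv⟩ := Function.ne_iff.1 hc0
    have hv : c v ≠ 0 := hv
    refine Finset.sum_pos' (fun v _ => hnn v) ⟨v, Finset.mem_univ v, ?_⟩
    have hvP : v ∈ P := by
      by_contra h
      exact hv (hc v h)
    have : 0 < G.adjHerm.eigenvalues v := by simpa [P] using hvP
    positivity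
  · rw [LinearEquiv.finrank_map_eq, finrank_coordSubspace]
    rw [Nat.card_eq_fintype_card, Fintype.card_subtype] at hq
    have := Finset.card_filter_add_card_filter_not (s := (Finset.univ : Finset V))
      (fun v => G.adjHerm.eigenvalues v < 0)
    rw [Finset.card_univ] at this
    change _ ≤ (Finset.filter (fun v => ¬ G.adjHerm.eigenvalues v < 0) Finset.univ).card + q
    omega
  · rintro _ ⟨c, hc, rfl⟩
    have hc := mem_coordSubspace.1 hc
    change 0 ≤ G.adjForm_s5 (E c) (E c)
    rw [hE]
    refine Finset.sum_nonneg fun v _ => ?_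
    by_cases hv : v ∈ Q
    · have : 0 ≤ G.adjHerm.eigenvalues v := by simpa [Q] using hv
      positivity
    · simp [hc v hv]

/-- The standard source of nonpositive subspaces: an independent set `I` and vectors `u j`
orthogonal to it, spanning a nonpositive subspace. The pivots `b` make the `u j` independent
modulo the vectors supported on `I`. -/
lemma SimpleGraph.NonposCodim.card_le {S I : Finset V} {p k : ℕ} (h : G.NonposCodim S p)
    (hIS : I ⊆ S) (hI : ∀ x ∈ I, ∀ y ∈ I, ¬ G.Adj x y) (u : Fin k → V → ℝ) (b : Fin k → V)
    (hb : ∀ i, b i ∉ I) (hub : ∀ i j, u j (b i) = if i = j then 1 else 0)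
    (hu : ∀ j, u j ∈ coordSubspace S)
    (hIu : ∀ x ∈ I, ∀ j, G.adjForm_s5 (Pi.single x 1) (u j) = 0)
    (hneg : ∀ c : Fin k → ℝ, G.adjForm_s5 (∑ j, c j • u j) (∑ j, c j • u j) ≤ 0) :
    I.card + k + p ≤ S.card := by
  have hsum : ∀ x ∈ coordSubspace I, x = ∑ i ∈ I, x i • (Pi.single i 1 : V → ℝ) := by
    intro x hx
    ext v
    rw [Finset.sum_apply]
    simp only [Pi.smul_apply, Pi.single_apply, smul_eq_mul, mul_ite, mul_one, mul_zero,
      Finset.sum_ite_eq]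
    split_ifs with hv
    · rfl
    · exact mem_coordSubspace.1 hx v hv
  have hpiv : ∀ (c : Fin k → ℝ) i, (∑ j, c j • u j) (b i) = c i := by
    intro c i
    simp [Finset.sum_apply, hub]
  have hli : LinearIndependent ℝ u := by
    rw [Fintype.linearIndependent_iff]
    intro c hc i
    rw [← hpiv c i, hc]
    rfl
  have hdis : coordSubspace I ⊓ Submodule.span ℝ (Set.range u) = ⊥ := by
    rw [eq_bot_iff]
    rintro x ⟨hxI, hxu⟩
    obtain ⟨c, rfl⟩ := (Submodule.mem_span_range_iff_exists_fun ℝ).1 hxu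
    have : ∀ i, c i = 0 := fun i => by
      rw [← hpiv c i]
      exact mem_coordSubspace.1 hxI _ (hb i)
    simp [this]
  have hle : coordSubspace I ⊔ Submodule.span ℝ (Set.range u) ≤ coordSubspace S := by
    refine sup_le (fun x hx => mem_coordSubspace.2 fun v hv => ?_)
      (Submodule.span_le.2 (Set.range_subset_iff.2 hu))
    exact mem_coordSubspace.1 hx v fun h => hv (hIS h)
  have h1 := Submodule.finrank_sup_add_finrank_inf_eq (coordSubspace I)
    (Submodule.span ℝ (Set.range u))
  rw [hdis, finrank_bot, finrank_coordSubspace, finrank_span_eq_card hli, Fintype.card_fin] at h1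
  have h2 := h _ hle ?_
  · omega
  intro z hz
  obtain ⟨x, hx, y, hy, rfl⟩ := Submodule.mem_sup.1 hz
  obtain ⟨c, rfl⟩ := (Submodule.mem_span_range_iff_exists_fun ℝ).1 hy
  have hxx : G.adjForm_s5 x x = 0 := by
    rw [hsum x hx]
    simp only [map_sum, LinearMap.sum_apply, map_smul, LinearMap.smul_apply, adjForm_single]
    refine Finset.sum_eq_zero fun i hi => ?_
    rw [Finset.sum_eq_zero fun j hj => by simp [hI j hj i hi], smul_zero]
  have hxy : G.adjForm_s5 x (∑ j, c j • u j) = 0 := by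
    rw [hsum x hx]
    simp only [map_sum, LinearMap.sum_apply, map_smul, LinearMap.smul_apply]
    refine Finset.sum_eq_zero fun j _ => ?_
    rw [Finset.sum_eq_zero fun i hi => by rw [hIu i hi j, smul_zero], smul_zero]
  have hyx := (adjForm_isSymm (G := G)).eq (∑ j, c j • u j) x
  have := hneg c
  rw [hxy] at hyx
  rw [map_add, map_add, LinearMap.add_apply, LinearMap.add_apply, hxx, hxy, hyx]
  linarith

/-! ### Induced subgraphs without large nonpositive subspaces -/

namespace SimpleGraph.NonposCodim

/-- The case of a single vector in `SimpleGraph.NonposCodim.card_le`. -/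
lemma pos {S I : Finset V} {p : ℕ} (h : G.NonposCodim S p) (hIS : I ⊆ S)
    (hI : ∀ x ∈ I, ∀ y ∈ I, ¬ G.Adj x y) (hcard : S.card < I.card + 1 + p) {u : V → ℝ} {b : V}
    (hb : b ∉ I) (hub : u b = 1) (hu : u ∈ coordSubspace S)
    (hIu : ∀ x ∈ I, G.adjForm_s5 (Pi.single x 1) u = 0) : 0 < G.adjForm_s5 u u := by
  by_contra! hneg
  refine hcard.not_ge (h.card_le hIS hI (fun _ : Fin 1 => u) (fun _ => b) (fun _ => hb)
    (fun i j => by simp [hub, Subsingleton.elim i j]) (fun _ => hu) (fun x hx _ => hIu x hx) ?_)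
  intro c
  simp only [Finset.univ_unique, Finset.sum_singleton, map_smul, LinearMap.smul_apply, smul_eq_mul]
  nlinarith [mul_self_nonneg (c default)]

lemma exists_adj {S I : Finset V} {p : ℕ} (h : G.NonposCodim S p) (hIS : I ⊆ S)
    (hI : ∀ x ∈ I, ∀ y ∈ I, ¬ G.Adj x y) (hcard : S.card < I.card + 1 + p) {w : V} (hw : w ∈ S)
    (hwI : w ∉ I) : ∃ x ∈ I, G.Adj x w := by
  by_contra! hno
  have := h.pos hIS hI hcard (u := Pi.single w 1) hwI (by simp) (single_mem_coordSubspace hw)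
    (fun x hx => by simp [adjForm_single, hno x hx])
  simp [adjForm_single] at this

/-- Distinct vertices with the same neighbours in `I` would give the vector `w - w'`. -/
lemma exists_not_iff {S I : Finset V} {p : ℕ} (h : G.NonposCodim S p) (hIS : I ⊆ S)
    (hI : ∀ x ∈ I, ∀ y ∈ I, ¬ G.Adj x y) (hcard : S.card < I.card + 1 + p) {w w' : V} (hw : w ∈ S)
    (hwI : w ∉ I) (hw' : w' ∈ S) (hne : w ≠ w') : ∃ x ∈ I, ¬ (G.Adj x w ↔ G.Adj x w') := by
  by_contra! hno
  have := h.pos hIS hI hcard (u := Pi.single w 1 - Pi.single w' 1) hwI (by simp [hne])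
    (sub_mem (single_mem_coordSubspace hw) (single_mem_coordSubspace hw'))
    (fun x hx => by simp [adjForm_single, hno x hx])
  simp only [map_sub, LinearMap.sub_apply, adjForm_single, G.adj_comm w' w] at this
  split_ifs at this <;> simp_all <;> linarith

/-- If the neighbourhood of `w₃` in `I` is the disjoint union of those of `w₁` and `w₂`, the
vector `w₁ + w₂ - w₃` determines the edges between the three vertices. -/
lemma adj_of_add_eq {S I : Finset V} {p : ℕ} (h : G.NonposCodim S p) (hIS : I ⊆ S)
    (hI : ∀ x ∈ I, ∀ y ∈ I, ¬ G.Adj x y) (hcard : S.card < I.card + 1 + p) {w₁ w₂ w₃ : V}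
    (hw₁ : w₁ ∈ S) (hw₁I : w₁ ∉ I) (hw₂ : w₂ ∈ S) (hw₃ : w₃ ∈ S) (h₁₂ : w₁ ≠ w₂) (h₁₃ : w₁ ≠ w₃)
    (hadd : ∀ x ∈ I, ((if G.Adj x w₁ then 1 else 0) + (if G.Adj x w₂ then 1 else 0) : ℝ) =
      if G.Adj x w₃ then 1 else 0) : G.Adj w₁ w₂ := by
  have := h.pos hIS hI hcard (u := Pi.single w₁ 1 + Pi.single w₂ 1 - Pi.single w₃ 1) hw₁I
    (by simp [h₁₂, h₁₃]) (sub_mem (add_mem (single_mem_coordSubspace hw₁)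
      (single_mem_coordSubspace hw₂)) (single_mem_coordSubspace hw₃))
    (fun x hx => by
      simp only [map_sub, map_add, adjForm_single]
      linarith [hadd x hx])
  by_contra hno
  have hno' : ¬ G.Adj w₂ w₁ := fun h => hno h.symm
  simp only [map_sub, map_add, LinearMap.sub_apply, LinearMap.add_apply, adjForm_single,
    G.adj_comm w₃ w₁, G.adj_comm w₃ w₂, hno, hno', G.irrefl, if_false] at this
  split_ifs at this <;> linarith

/-- The analogue of `adj_of_add_eq` for the vector `w₁ + w₂ - w₃ - w₄`. -/
lemma adj_of_add_eq_add {S I : Finset V} {p : ℕ} (h : G.NonposCodim S p) (hIS : I ⊆ S)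
    (hI : ∀ x ∈ I, ∀ y ∈ I, ¬ G.Adj x y) (hcard : S.card < I.card + 1 + p) {w₁ w₂ w₃ w₄ : V}
    (hw₁ : w₁ ∈ S) (hw₁I : w₁ ∉ I) (hw₂ : w₂ ∈ S) (hw₃ : w₃ ∈ S) (hw₄ : w₄ ∈ S) (h₁₂ : w₁ ≠ w₂)
    (h₁₃ : w₁ ≠ w₃) (h₁₄ : w₁ ≠ w₄) (hadj : G.Adj w₂ w₄)
    (hadd : ∀ x ∈ I, ((if G.Adj x w₁ then 1 else 0) + (if G.Adj x w₂ then 1 else 0) : ℝ) =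
      (if G.Adj x w₃ then 1 else 0) + (if G.Adj x w₄ then 1 else 0)) :
    G.Adj w₁ w₂ ∧ G.Adj w₃ w₄ := by
  have := h.pos hIS hI hcard
    (u := Pi.single w₁ 1 + Pi.single w₂ 1 - Pi.single w₃ 1 - Pi.single w₄ 1) hw₁I
    (by simp [h₁₂, h₁₃, h₁₄]) (sub_mem (sub_mem (add_mem (single_mem_coordSubspace hw₁)
      (single_mem_coordSubspace hw₂)) (single_mem_coordSubspace hw₃))
      (single_mem_coordSubspace hw₄))
    (fun x hx => by
      simp only [map_sub, map_add, adjForm_single]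
      linarith [hadd x hx])
  simp only [map_sub, map_add, LinearMap.sub_apply, LinearMap.add_apply, adjForm_single,
    G.adj_comm w₃ w₁, G.adj_comm w₃ w₂, G.adj_comm w₂ w₁, G.adj_comm w₄ w₁, G.adj_comm w₄ w₂,
    G.adj_comm w₄ w₃, hadj, G.irrefl, if_false, if_true] at this
  have a13 : (0 : ℝ) ≤ if G.Adj w₁ w₃ then 1 else 0 := by split_ifs <;> norm_num
  have a14 : (0 : ℝ) ≤ if G.Adj w₁ w₄ then 1 else 0 := by split_ifs <;> norm_num
  have a23 : (0 : ℝ) ≤ if G.Adj w₂ w₃ then 1 else 0 := by split_ifs <;> norm_num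
  by_cases h12 : G.Adj w₁ w₂ <;> by_cases h34 : G.Adj w₃ w₄ <;>
    simp only [h12, h34, if_true, if_false] at this <;>
    first | exact ⟨h12, h34⟩ | linarith

/-- Disjoint edges of a clique give orthogonal vectors `w - w'` of norm `-2`. -/
lemma exists_not_adj {S : Finset V} {p k : ℕ} (h : G.NonposCodim S p) (h2 : 2 * k ≤ S.card)
    (hcard : S.card < k + p) : ∃ x ∈ S, ∃ y ∈ S, x ≠ y ∧ ¬ G.Adj x y := by
  by_contra! hcomplete
  obtain ⟨T, hTS, hT⟩ := Finset.exists_subset_card_eq h2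
  let f : Fin k × Bool ≃ T := Fintype.equivOfCardEq (by simp [hT, mul_comm])
  have hfS : ∀ i, (f i : V) ∈ S := fun i => hTS (f i).2
  have hfne : ∀ i j, i ≠ j → (f i : V) ≠ f j := fun i j hij h => hij (f.injective (Subtype.ext h))
  have hform : ∀ i j, G.adjForm_s5 (Pi.single (f i : V) 1) (Pi.single (f j : V) 1) =
      if i = j then 0 else 1 := by
    intro i j
    rw [adjForm_single]
    by_cases hij : i = j
    · simp [hij]
    · rw [if_pos (hcomplete _ (hfS i) _ (hfS j) (hfne i j hij)), if_neg hij]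
  let u : Fin k → V → ℝ := fun i => Pi.single (f (i, true) : V) 1 - Pi.single (f (i, false) : V) 1
  have hu : ∀ i j, G.adjForm_s5 (u i) (u j) = if i = j then -2 else 0 := by
    intro i j
    simp only [u, map_sub, LinearMap.sub_apply, hform, Prod.mk.injEq]
    by_cases hij : i = j <;> simp [hij]
    norm_num
  have := h.card_le (I := ∅) (by simp) (by simp) u (fun i => f (i, true)) (by simp) ?_
    (fun j => sub_mem (single_mem_coordSubspace (hfS _)) (single_mem_coordSubspace (hfS _)))
    (by simp) ?_
  · simp at this
    omega
  · intro i j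
    have : (f (i, true) : V) ≠ f (j, false) := hfne _ _ (by simp)
    by_cases hij : i = j
    · subst hij
      simp [u, this]
    · have h3 : (f (i, true) : V) ≠ f (j, true) := hfne _ _ (by simp [hij])
      simp [u, this, h3, hij]
  · intro c
    simp only [map_sum, LinearMap.sum_apply, map_smul, LinearMap.smul_apply, hu, smul_eq_mul]
    refine Finset.sum_nonpos fun i _ => ?_
    simp only [mul_ite, mul_zero, Finset.sum_ite_eq', Finset.mem_univ, if_true]
    nlinarith [mul_self_nonneg (c i)]

end SimpleGraph.NonposCodim

/-- With at most eight vertices, two nonadjacent vertices leave only three possible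
neighbourhoods for the at least four others. -/
lemma SimpleGraph.NonposCodim.eight_lt {S : Finset V} (h : G.NonposCodim S 6)
    (hS : 6 ≤ S.card) : 8 < S.card := by
  by_contra! hle
  obtain ⟨x, hx, y, hy, hxy, hadj⟩ := h.exists_not_adj (k := 3) (by omega) (by omega)
  have hIS : ({x, y} : Finset V) ⊆ S := by
    intro v hv
    simp only [Finset.mem_insert, Finset.mem_singleton] at hv
    rcases hv with rfl | rfl <;> assumption
  have hI : ∀ a ∈ ({x, y} : Finset V), ∀ b ∈ ({x, y} : Finset V), ¬ G.Adj a b := by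
    simp [hadj, G.adj_comm y x]
  have hIc : ({x, y} : Finset V).card = 2 := Finset.card_pair hxy
  have hcard : S.card < ({x, y} : Finset V).card + 1 + 6 := by omega
  let f : V → Bool × Bool := fun w => (decide (G.Adj x w), decide (G.Adj y w))
  have hinj : Set.InjOn f (S \ {x, y} : Finset V) := by
    intro w hw w' hw' heq
    by_contra hne
    rw [Finset.mem_coe, Finset.mem_sdiff] at hw hw'
    obtain ⟨a, ha, hna⟩ := h.exists_not_iff hIS hI hcard hw.1 hw.2 hw'.1 hne
    simp only [f, Prod.mk.injEq, decide_eq_decide] at heq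
    simp only [Finset.mem_insert, Finset.mem_singleton] at ha
    rcases ha with rfl | rfl
    exacts [hna heq.1, hna heq.2]
  have himg : (S \ {x, y}).image f ⊆ Finset.univ.erase (false, false) := by
    intro m hm
    obtain ⟨w, hw, rfl⟩ := Finset.mem_image.1 hm
    rw [Finset.mem_sdiff] at hw
    obtain ⟨a, ha, hna⟩ := h.exists_adj hIS hI hcard hw.1 hw.2
    simp only [Finset.mem_insert, Finset.mem_singleton] at ha
    rcases ha with rfl | rfl <;> simp [f, hna]
  have h1 := Finset.card_le_card himg
  rw [Finset.card_image_of_injOn hinj, Finset.card_sdiff_of_subset hIS, hIc,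
    Finset.card_erase_of_mem (Finset.mem_univ _), Finset.card_univ] at h1
  simp at h1
  omega

/-- Two disjoint edges `ww'`, `vv'` whose ends have the same neighbours in `{x, y}` give, with
`x` and `y`, a four-dimensional nonpositive subspace. -/
lemma SimpleGraph.NonposCodim.false_of_edges {S : Finset V} (h : G.NonposCodim S 6)
    (hS : S.card = 9) {x y : V} (hx : x ∈ S) (hy : y ∈ S) (hxy : x ≠ y) (hadj : ¬ G.Adj x y)
    {w w' v v' : V} (hw : w ∈ S \ {x, y}) (hw' : w' ∈ S \ {x, y}) (hv : v ∈ S \ {x, y})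
    (hv' : v' ∈ S \ {x, y}) (hww' : G.Adj w w') (hvv' : G.Adj v v') (hwv : w ≠ v) (hwv' : w ≠ v')
    (hw'v : w' ≠ v)
    (hxw : G.Adj x w ↔ G.Adj x w') (hyw : G.Adj y w ↔ G.Adj y w')
    (hxv : G.Adj x v ↔ G.Adj x v') (hyv : G.Adj y v ↔ G.Adj y v') : False := by
  rw [Finset.mem_sdiff] at hw hw' hv hv'
  have hIS : ({x, y} : Finset V) ⊆ S := by
    intro v hv
    simp only [Finset.mem_insert, Finset.mem_singleton] at hv
    rcases hv with rfl | rfl <;> assumption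
  have hI : ∀ a ∈ ({x, y} : Finset V), ∀ b ∈ ({x, y} : Finset V), ¬ G.Adj a b := by
    simp [hadj, G.adj_comm y x]
  have := h.card_le hIS hI
    ![Pi.single w 1 - Pi.single w' 1, Pi.single v 1 - Pi.single v' 1] ![w, v] ?_ ?_ ?_ ?_ ?_
  · rw [Finset.card_pair hxy] at this
    omega
  · rw [Fin.forall_fin_two]
    exact ⟨hw.2, hv.2⟩
  · simp only [Fin.forall_fin_two]
    simp [hww'.ne, hvv'.ne, hwv, hwv', hwv.symm, hw'v.symm]
  · rw [Fin.forall_fin_two]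
    exact ⟨sub_mem (single_mem_coordSubspace hw.1) (single_mem_coordSubspace hw'.1),
      sub_mem (single_mem_coordSubspace hv.1) (single_mem_coordSubspace hv'.1)⟩
  · intro a ha
    simp only [Finset.mem_insert, Finset.mem_singleton] at ha
    rw [Fin.forall_fin_two]
    rcases ha with rfl | rfl <;> simp [adjForm_single, hxw, hyw, hxv, hyv]
  · intro c
    simp only [Fin.sum_univ_two, Matrix.cons_val_zero, Matrix.cons_val_one, map_add,
      LinearMap.add_apply, map_smul, LinearMap.smul_apply, map_sub, LinearMap.sub_apply,
      adjForm_single, smul_eq_mul, hww', hvv', hww'.symm, hvv'.symm, G.irrefl, if_true, if_false,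
      G.adj_comm v w, G.adj_comm v w', G.adj_comm v' w, G.adj_comm v' w']
    split_ifs <;> nlinarith [sq_nonneg (c 0), sq_nonneg (c 1), sq_nonneg (c 0 - c 1),
      sq_nonneg (c 0 + c 1)]

/-- If there were no independent triple, then among any five vertices other than two nonadjacent
`x`, `y` there would be an edge whose ends have the same neighbours in `{x, y}`; seven vertices
then contain two disjoint such edges. -/
lemma SimpleGraph.NonposCodim.exists_triple {S : Finset V} (h : G.NonposCodim S 6)
    (hS : S.card = 9) : ∃ x ∈ S, ∃ y ∈ S, ∃ z ∈ S, x ≠ y ∧ x ≠ z ∧ y ≠ z ∧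
      ¬ G.Adj x y ∧ ¬ G.Adj x z ∧ ¬ G.Adj y z := by
  by_contra! hno
  obtain ⟨x, hx, y, hy, hxy, hadj⟩ := h.exists_not_adj (k := 4) (by omega) (by omega)
  have hIS : ({x, y} : Finset V) ⊆ S := by
    intro v hv
    simp only [Finset.mem_insert, Finset.mem_singleton] at hv
    rcases hv with rfl | rfl <;> assumption
  have hR : (S \ {x, y}).card = 7 := by
    rw [Finset.card_sdiff_of_subset hIS, Finset.card_pair hxy, hS]
  have key : ∀ T ⊆ S \ {x, y}, 5 ≤ T.card → ∃ w ∈ T, ∃ w' ∈ T, G.Adj w w' ∧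
      (G.Adj x w ↔ G.Adj x w') ∧ (G.Adj y w ↔ G.Adj y w') := by
    intro T hT hT5
    by_contra! hnone
    have hTS : ∀ w ∈ T, w ∈ S ∧ w ≠ x ∧ w ≠ y := by
      intro w hw
      have := hT hw
      simp only [Finset.mem_sdiff, Finset.mem_insert, Finset.mem_singleton, not_or] at this
      exact ⟨this.1, this.2.1, this.2.2⟩
    have c1 : (T.filter fun w => ¬ G.Adj x w).card ≤ 1 := by
      rw [Finset.card_le_one]
      intro w hw w' hw'
      rw [Finset.mem_filter] at hw hw'
      by_contra hne
      have hyw := hno x hx y hy w (hTS w hw.1).1 hxy (hTS w hw.1).2.1.symm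
        (hTS w hw.1).2.2.symm hadj hw.2
      have hyw' := hno x hx y hy w' (hTS w' hw'.1).1 hxy (hTS w' hw'.1).2.1.symm
        (hTS w' hw'.1).2.2.symm hadj hw'.2
      have h1 := hno x hx w (hTS w hw.1).1 w' (hTS w' hw'.1).1 (hTS w hw.1).2.1.symm
        (hTS w' hw'.1).2.1.symm hne hw.2 hw'.2
      have h2 := hnone w hw.1 w' hw'.1
      tauto
    have c2 : (T.filter fun w => ¬ G.Adj y w).card ≤ 1 := by
      rw [Finset.card_le_one]
      intro w hw w' hw'
      rw [Finset.mem_filter] at hw hw'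
      by_contra hne
      have hyw := hno x hx y hy w (hTS w hw.1).1 hxy (hTS w hw.1).2.1.symm
        (hTS w hw.1).2.2.symm hadj
      have hyw' := hno x hx y hy w' (hTS w' hw'.1).1 hxy (hTS w' hw'.1).2.1.symm
        (hTS w' hw'.1).2.2.symm hadj
      have h1 := hno y hy w (hTS w hw.1).1 w' (hTS w' hw'.1).1 (hTS w hw.1).2.2.symm
        (hTS w' hw'.1).2.2.symm hne hw.2 hw'.2
      have h2 := hnone w hw.1 w' hw'.1
      tauto
    have c3 : (T.filter fun w => G.Adj x w ∧ G.Adj y w).card ≤ 2 := by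
      by_contra! hlt
      obtain ⟨a, b, c, ha, hb, hc, hab, hac, hbc⟩ := Finset.two_lt_card_iff.1 hlt
      rw [Finset.mem_filter] at ha hb hc
      have h1 := hno a (hTS a ha.1).1 b (hTS b hb.1).1 c (hTS c hc.1).1 hab hac hbc
      have h2 := hnone a ha.1 b hb.1
      have h3 := hnone a ha.1 c hc.1
      have h4 := hnone b hb.1 c hc.1
      tauto
    have hcover : T ⊆ (T.filter fun w => ¬ G.Adj x w) ∪ (T.filter fun w => ¬ G.Adj y w) ∪
        (T.filter fun w => G.Adj x w ∧ G.Adj y w) := by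
      intro w hw
      simp only [Finset.mem_union, Finset.mem_filter]
      tauto
    have h1 := Finset.card_le_card hcover
    have h2 := Finset.card_union_le ((T.filter fun w => ¬ G.Adj x w) ∪
      (T.filter fun w => ¬ G.Adj y w)) (T.filter fun w => G.Adj x w ∧ G.Adj y w)
    have h3 := Finset.card_union_le (T.filter fun w => ¬ G.Adj x w)
      (T.filter fun w => ¬ G.Adj y w)
    omega
  obtain ⟨w, hw, w', hw', hww', hxw, hyw⟩ := key _ subset_rfl (by omega)
  have hsub : ({w, w'} : Finset V) ⊆ S \ {x, y} := by
    intro v hv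
    simp only [Finset.mem_insert, Finset.mem_singleton] at hv
    rcases hv with rfl | rfl <;> assumption
  obtain ⟨v, hv, v', hv', hvv', hxv, hyv⟩ := key ((S \ {x, y}) \ {w, w'}) Finset.sdiff_subset
    (by rw [Finset.card_sdiff_of_subset hsub, Finset.card_pair hww'.ne, hR])
  rw [Finset.mem_sdiff] at hv hv'
  simp only [Finset.mem_insert, Finset.mem_singleton, not_or] at hv hv'
  have hv1 := hv.1
  have hv1' := hv'.1
  exact h.false_of_edges hS hx hy hxy hadj hw hw' (by simpa using hv1) (by simpa using hv1') hww'
    hvv' (Ne.symm hv.2.1) (Ne.symm hv'.2.1) (Ne.symm hv.2.2) hxw hyw hxv hyv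

/-- Nine vertices, an independent triple `x`, `y`, `z`, and vertices with neighbourhoods
`{y}`, `{z}`, `{x, y}`, `{x, z}`, `{x, y, z}` in it: the edges forced by `adj_of_add_eq` give a
subdivided `K₃,₃`. -/
lemma SimpleGraph.NonposCodim.false_of_full {S : Finset V} (hG : G.IsPlanar)
    (h : G.NonposCodim S 6) (hS : S.card = 9) {I : Finset V} (hIS : I ⊆ S)
    (hI : ∀ a ∈ I, ∀ b ∈ I, ¬ G.Adj a b) (hIc : I.card = 3) {x y z : V} (hxyzI : I = {x, y, z}) {w₂ w₃ w₁₂ w₁₃ w₁₂₃ : V}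
    (m₂ : w₂ ∈ S \ I ∧ ¬ G.Adj x w₂ ∧ G.Adj y w₂ ∧ ¬ G.Adj z w₂)
    (m₃ : w₃ ∈ S \ I ∧ ¬ G.Adj x w₃ ∧ ¬ G.Adj y w₃ ∧ G.Adj z w₃)
    (m₁₂ : w₁₂ ∈ S \ I ∧ G.Adj x w₁₂ ∧ G.Adj y w₁₂ ∧ ¬ G.Adj z w₁₂)
    (m₁₃ : w₁₃ ∈ S \ I ∧ G.Adj x w₁₃ ∧ ¬ G.Adj y w₁₃ ∧ G.Adj z w₁₃)
    (m₁₂₃ : w₁₂₃ ∈ S \ I ∧ G.Adj x w₁₂₃ ∧ G.Adj y w₁₂₃ ∧ G.Adj z w₁₂₃) : False := by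
  subst hxyzI
  obtain ⟨d2, x2, y2, z2⟩ := m₂
  obtain ⟨d3, x3, y3, z3⟩ := m₃
  obtain ⟨d12, x12, y12, z12⟩ := m₁₂
  obtain ⟨d13, x13, y13, z13⟩ := m₁₃
  obtain ⟨d123, x123, y123, z123⟩ := m₁₂₃
  have hne : ∀ {a v w : V}, G.Adj a v → ¬ G.Adj a w → v ≠ w := by
    rintro a v w h1 h2 rfl
    exact h2 h1
  rw [Finset.mem_sdiff] at d2 d3 d12 d13 d123
  have hcard : S.card < ({x, y, z} : Finset V).card + 1 + 6 := by omega
  have e1 : G.Adj w₁₂ w₃ := h.adj_of_add_eq hIS hI hcard d12.1 d12.2 d3.1 d123.1 (hne x12 x3)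
    (hne z123 z12).symm (by simp [x12, x3, x123, y12, y3, y123, z12, z3, z123])
  have e2 : G.Adj w₁₃ w₂ := h.adj_of_add_eq hIS hI hcard d13.1 d13.2 d2.1 d123.1 (hne x13 x2)
    (hne y123 y13).symm (by simp [x13, x2, x123, y13, y2, y123, z13, z2, z123])
  have hxyz : x ≠ y ∧ x ≠ z ∧ y ≠ z := by
    refine ⟨?_, ?_, ?_⟩
    · rintro rfl
      exact y13 x13
    · rintro rfl
      exact z12 x12
    · rintro rfl
      exact z12 y12
  simp only [Finset.mem_insert, Finset.mem_singleton, not_or] at d2 d3 d12 d13 d123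
  refine hG.no_subdivided_K33 w₁₂₃ w₁₂ w₁₃ z y x w₃ w₂ ?_ z123.symm y123.symm x123.symm e1 z3.symm
    y12.symm x12.symm z13.symm e2 y2.symm x13.symm
  simp [hne z123 z12, hne y123 y13, hne x123 x3, hne x123 x2, hne y12 y13, hne x12 x3, hne x12 x2,
    hne x13 x3, hne x13 x2, hne z3 z2, d12, d13, d123, hxyz.1.symm, hxyz.2.1.symm, hxyz.2.2.symm,
    Ne.symm d3.2.1, Ne.symm d3.2.2.1, Ne.symm d3.2.2.2, Ne.symm d2.2.1, Ne.symm d2.2.2.1,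
    Ne.symm d2.2.2.2]

/-- Nine vertices, an independent triple `x`, `y`, `z`, and vertices with each of the six
neighbourhoods in it of size one or two: the forced edges again give a subdivided `K₃,₃`. -/
lemma SimpleGraph.NonposCodim.false_of_not_full {S : Finset V} (hG : G.IsPlanar)
    (h : G.NonposCodim S 6) (hS : S.card = 9) {x y z : V} (hIS : {x, y, z} ⊆ S)
    (hI : ∀ a ∈ ({x, y, z} : Finset V), ∀ b ∈ ({x, y, z} : Finset V), ¬ G.Adj a b)
    (hIc : ({x, y, z} : Finset V).card = 3) {w₁ w₂ w₃ w₁₂ w₁₃ w₂₃ : V}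
    (m₁ : w₁ ∈ S \ {x, y, z} ∧ G.Adj x w₁ ∧ ¬ G.Adj y w₁ ∧ ¬ G.Adj z w₁)
    (m₂ : w₂ ∈ S \ {x, y, z} ∧ ¬ G.Adj x w₂ ∧ G.Adj y w₂ ∧ ¬ G.Adj z w₂)
    (m₃ : w₃ ∈ S \ {x, y, z} ∧ ¬ G.Adj x w₃ ∧ ¬ G.Adj y w₃ ∧ G.Adj z w₃)
    (m₁₂ : w₁₂ ∈ S \ {x, y, z} ∧ G.Adj x w₁₂ ∧ G.Adj y w₁₂ ∧ ¬ G.Adj z w₁₂)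
    (m₁₃ : w₁₃ ∈ S \ {x, y, z} ∧ G.Adj x w₁₃ ∧ ¬ G.Adj y w₁₃ ∧ G.Adj z w₁₃)
    (m₂₃ : w₂₃ ∈ S \ {x, y, z} ∧ ¬ G.Adj x w₂₃ ∧ G.Adj y w₂₃ ∧ G.Adj z w₂₃) : False := by
  obtain ⟨d1, x1, y1, z1⟩ := m₁
  obtain ⟨d2, x2, y2, z2⟩ := m₂
  obtain ⟨d3, x3, y3, z3⟩ := m₃
  obtain ⟨d12, x12, y12, z12⟩ := m₁₂
  obtain ⟨d13, x13, y13, z13⟩ := m₁₃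
  obtain ⟨d23, x23, y23, z23⟩ := m₂₃
  have hne : ∀ {a v w : V}, G.Adj a v → ¬ G.Adj a w → v ≠ w := by
    rintro a v w h1 h2 rfl
    exact h2 h1
  rw [Finset.mem_sdiff] at d1 d2 d3 d12 d13 d23
  have hcard : S.card < ({x, y, z} : Finset V).card + 1 + 6 := by omega
  have e12 : G.Adj w₁ w₂ := h.adj_of_add_eq hIS hI hcard d1.1 d1.2 d2.1 d12.1 (hne x1 x2)
    (hne y12 y1).symm (by simp [x1, x2, x12, y1, y2, y12, z1, z2, z12])
  have e13 : G.Adj w₁ w₃ := h.adj_of_add_eq hIS hI hcard d1.1 d1.2 d3.1 d13.1 (hne x1 x3)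
    (hne z13 z1).symm (by simp [x1, x3, x13, y1, y3, y13, z1, z3, z13])
  have e23 : G.Adj w₃ w₂ := h.adj_of_add_eq hIS hI hcard d3.1 d3.2 d2.1 d23.1 (hne z3 z2)
    (hne y23 y3).symm (by simp [x2, x3, x23, y2, y3, y23, z2, z3, z23])
  obtain ⟨f1, f2⟩ : G.Adj w₁₂ w₃ ∧ G.Adj w₁₃ w₂ := h.adj_of_add_eq_add hIS hI hcard d12.1 d12.2
    d3.1 d13.1 d2.1 (hne x12 x3) (hne y12 y13) (hne x12 x2) e23
    (by simp [x12, x3, x13, x2, y12, y3, y13, y2, z12, z3, z13, z2])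
  have hxyz : x ≠ y ∧ x ≠ z ∧ y ≠ z := by
    refine ⟨?_, ?_, ?_⟩
    · rintro rfl
      exact y13 x13
    · rintro rfl
      exact z12 x12
    · rintro rfl
      exact z12 y12
  simp only [Finset.mem_insert, Finset.mem_singleton, not_or] at d1 d2 d3 d12 d13
  refine hG.no_subdivided_K33 w₁ w₁₂ w₁₃ w₂ w₃ x y z ?_ e12 e13 x1.symm y12.symm y2
    f1 x12.symm f2 z13.symm z3 x13.symm
  simp [(hne y12 y1).symm, (hne z13 z1).symm, hne x1 x2, hne x1 x3, hne y12 y13, hne x12 x2,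
    hne x12 x3, hne x13 x2, hne x13 x3, (hne z3 z2).symm, d1, d2, d3, d12, d13, hxyz]

/-- The six vertices outside an independent triple have distinct nonempty neighbourhoods in it,
so at most one of the seven possible neighbourhoods is missing. -/
lemma SimpleGraph.NonposCodim.false_of_card_eq_nine {S : Finset V} (hG : G.IsPlanar)
    (h : G.NonposCodim S 6) (hS : S.card = 9) : False := by
  obtain ⟨x, hx, y, hy, z, hz, hxy, hxz, hyz, axy, axz, ayz⟩ := h.exists_triple hS
  have hIS : ({x, y, z} : Finset V) ⊆ S := by
    intro v hv
    simp only [Finset.mem_insert, Finset.mem_singleton] at hv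
    rcases hv with rfl | rfl | rfl <;> assumption
  have hI : ∀ a ∈ ({x, y, z} : Finset V), ∀ b ∈ ({x, y, z} : Finset V), ¬ G.Adj a b := by
    simp [axy, axz, ayz, G.adj_comm y x, G.adj_comm z x, G.adj_comm z y]
  have hIc : ({x, y, z} : Finset V).card = 3 := Finset.card_eq_three.2 ⟨x, y, z, hxy, hxz, hyz, rfl⟩
  have hcard : S.card < ({x, y, z} : Finset V).card + 1 + 6 := by omega
  let f : V → Bool × Bool × Bool :=
    fun w => (decide (G.Adj x w), decide (G.Adj y w), decide (G.Adj z w))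
  have hinj : Set.InjOn f (S \ {x, y, z} : Finset V) := by
    intro w hw w' hw' heq
    by_contra hne
    rw [Finset.mem_coe, Finset.mem_sdiff] at hw hw'
    obtain ⟨a, ha, hna⟩ := h.exists_not_iff hIS hI hcard hw.1 hw.2 hw'.1 hne
    simp only [f, Prod.mk.injEq, decide_eq_decide] at heq
    simp only [Finset.mem_insert, Finset.mem_singleton] at ha
    rcases ha with rfl | rfl | rfl
    exacts [hna heq.1, hna heq.2.1, hna heq.2.2]
  let P : Bool × Bool × Bool → Prop := fun m => ∃ w, w ∈ S \ {x, y, z} ∧ f w = m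
  have hmiss : ∀ m m' : Bool × Bool × Bool, m ≠ m' → m ≠ (false, false, false) →
      m' ≠ (false, false, false) →
      P m ∨ P m' := by
    intro m m' hmm' hm hm'
    by_contra hno
    simp only [P, not_or, not_exists, not_and] at hno
    have himg : (S \ {x, y, z}).image f ⊆ Finset.univ \ {(false, false, false), m, m'} := by
      intro a ha
      obtain ⟨w, hw, rfl⟩ := Finset.mem_image.1 ha
      have h1 := hno.1 w hw
      have h2 := hno.2 w hw
      rw [Finset.mem_sdiff] at hw
      obtain ⟨a, ha, hna⟩ := h.exists_adj hIS hI hcard hw.1 hw.2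
      simp only [Finset.mem_sdiff, Finset.mem_univ, true_and, Finset.mem_insert,
        Finset.mem_singleton, not_or]
      refine ⟨?_, h1, h2⟩
      simp only [Finset.mem_insert, Finset.mem_singleton] at ha
      rcases ha with rfl | rfl | rfl <;> simp [f, hna]
    have h1 := Finset.card_le_card himg
    rw [Finset.card_image_of_injOn hinj, Finset.card_sdiff_of_subset hIS, hIc, hS,
      Finset.card_sdiff_of_subset (Finset.subset_univ _), Finset.card_univ,
      Finset.card_eq_three.2 ⟨_, _, _, hm.symm, hm'.symm, hmm', rfl⟩] at h1
    simp at h1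
  have hadjP : ∀ {w m₁ m₂ m₃}, w ∈ S \ {x, y, z} ∧ f w = (m₁, m₂, m₃) →
      w ∈ S \ {x, y, z} ∧ (G.Adj x w ↔ m₁ = true) ∧ (G.Adj y w ↔ m₂ = true) ∧
        (G.Adj z w ↔ m₃ = true) := by
    rintro w m₁ m₂ m₃ ⟨hw, hf⟩
    simp only [f, Prod.mk.injEq] at hf
    obtain ⟨rfl, rfl, rfl⟩ := hf
    simpa using hw
  by_cases hfull : P (true, true, true)
  · obtain ⟨w₁₂₃, m₁₂₃⟩ := hfull
    have get : ∀ m m' n, ¬ (P m ∧ P m') → n ≠ m → n ≠ m' → n ≠ (false, false, false) →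
        m ≠ (false, false, false) → m' ≠ (false, false, false) → P n := by
      intro m m' n hmm' h1 h2 h3 h4 h5
      by_contra hn
      exact hmm' ⟨(hmiss n m h1 h3 h4).resolve_left hn, (hmiss n m' h2 h3 h5).resolve_left hn⟩
    -- a complementary pair of neighbourhoods contains the missing one; the other four are used
    by_cases hA : P (false, true, false) ∧ P (true, false, true)
    · by_cases hB : P (false, false, true) ∧ P (true, true, false)
      · obtain ⟨⟨w₂, m₂⟩, ⟨w₁₃, m₁₃⟩⟩ := hA
        obtain ⟨⟨w₃, m₃⟩, ⟨w₁₂, m₁₂⟩⟩ := hB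
        have m₂ := hadjP m₂
        have m₃ := hadjP m₃
        have m₁₂ := hadjP m₁₂
        have m₁₃ := hadjP m₁₃
        have m₁₂₃ := hadjP m₁₂₃
        simp only [Bool.false_eq_true, iff_false, iff_true] at m₂ m₃ m₁₂ m₁₃ m₁₂₃
        exact h.false_of_full hG hS hIS hI hIc rfl m₂ m₃ m₁₂ m₁₃ m₁₂₃
      · obtain ⟨w₁, m₁⟩ := get _ _ (true, false, false) hB (by simp) (by simp) (by simp) (by simp)
          (by simp)
        obtain ⟨w₂₃, m₂₃⟩ := get _ _ (false, true, true) hB (by simp) (by simp) (by simp) (by simp)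
          (by simp)
        obtain ⟨⟨w₂, m₂⟩, ⟨w₁₃, m₁₃⟩⟩ := hA
        have m₁ := hadjP m₁
        have m₂ := hadjP m₂
        have m₁₃ := hadjP m₁₃
        have m₂₃ := hadjP m₂₃
        have m₁₂₃ := hadjP m₁₂₃
        simp only [Bool.false_eq_true, iff_false, iff_true] at m₁ m₂ m₁₃ m₂₃ m₁₂₃
        exact h.false_of_full hG hS hIS hI hIc (x := z) (y := x) (z := y)
          (by ext a; simp only [Finset.mem_insert, Finset.mem_singleton]; tauto)
          ⟨m₁.1, m₁.2.2.2, m₁.2.1, m₁.2.2.1⟩ ⟨m₂.1, m₂.2.2.2, m₂.2.1, m₂.2.2.1⟩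
          ⟨m₁₃.1, m₁₃.2.2.2, m₁₃.2.1, m₁₃.2.2.1⟩ ⟨m₂₃.1, m₂₃.2.2.2, m₂₃.2.1, m₂₃.2.2.1⟩
          ⟨m₁₂₃.1, m₁₂₃.2.2.2, m₁₂₃.2.1, m₁₂₃.2.2.1⟩
    · obtain ⟨w₁, m₁⟩ := get _ _ (true, false, false) hA (by simp) (by simp) (by simp) (by simp)
        (by simp)
      obtain ⟨w₃, m₃⟩ := get _ _ (false, false, true) hA (by simp) (by simp) (by simp) (by simp)
        (by simp)
      obtain ⟨w₁₂, m₁₂⟩ := get _ _ (true, true, false) hA (by simp) (by simp) (by simp) (by simp)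
        (by simp)
      obtain ⟨w₂₃, m₂₃⟩ := get _ _ (false, true, true) hA (by simp) (by simp) (by simp) (by simp)
        (by simp)
      have m₁ := hadjP m₁
      have m₃ := hadjP m₃
      have m₁₂ := hadjP m₁₂
      have m₂₃ := hadjP m₂₃
      have m₁₂₃ := hadjP m₁₂₃
      simp only [Bool.false_eq_true, iff_false, iff_true] at m₁ m₃ m₁₂ m₂₃ m₁₂₃
      exact h.false_of_full hG hS hIS hI hIc (x := y) (y := x) (z := z)
        (by ext a; simp only [Finset.mem_insert, Finset.mem_singleton]; tauto)
        ⟨m₁.1, m₁.2.2.1, m₁.2.1, m₁.2.2.2⟩ ⟨m₃.1, m₃.2.2.1, m₃.2.1, m₃.2.2.2⟩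
        ⟨m₁₂.1, m₁₂.2.2.1, m₁₂.2.1, m₁₂.2.2.2⟩ ⟨m₂₃.1, m₂₃.2.2.1, m₂₃.2.1, m₂₃.2.2.2⟩
        ⟨m₁₂₃.1, m₁₂₃.2.2.1, m₁₂₃.2.1, m₁₂₃.2.2.2⟩
  · have hp : ∀ m, m ≠ (true, true, true) → m ≠ (false, false, false) → P m := fun m hm hm0 =>
      (hmiss m (true, true, true) hm hm0 (by simp)).resolve_right hfull
    obtain ⟨w₁, m₁⟩ := hp (true, false, false) (by simp) (by simp)
    obtain ⟨w₂, m₂⟩ := hp (false, true, false) (by simp) (by simp)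
    obtain ⟨w₃, m₃⟩ := hp (false, false, true) (by simp) (by simp)
    obtain ⟨w₁₂, m₁₂⟩ := hp (true, true, false) (by simp) (by simp)
    obtain ⟨w₁₃, m₁₃⟩ := hp (true, false, true) (by simp) (by simp)
    obtain ⟨w₂₃, m₂₃⟩ := hp (false, true, true) (by simp) (by simp)
    have m₁ := hadjP m₁
    have m₂ := hadjP m₂
    have m₃ := hadjP m₃
    have m₁₂ := hadjP m₁₂
    have m₁₃ := hadjP m₁₃
    have m₂₃ := hadjP m₂₃
    simp only [Bool.false_eq_true, iff_false, iff_true] at m₁ m₂ m₃ m₁₂ m₁₃ m₂₃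
    exact h.false_of_not_full hG hS hIS hI hIc m₁ m₂ m₃ m₁₂ m₁₃ m₂₃

end adjForm_s5

theorem stmt5 {V : Type*} [Finite V] (G : SimpleGraph V) (hplanar : G.IsPlanar)
    (hneg : G.negInertia ≤ 3) : G.posInertia ≤ 5 := by
  by_contra! hpos
  let := Fintype.ofFinite V
  let := Classical.decEq V
  let : DecidableRel G.Adj := Classical.decRel _
  obtain ⟨S, hS6, hS9, hS⟩ := SimpleGraph.exists_nonposCodim (G := G) (p := 6) (q := 3) hpos hneg
  have := hS.eight_lt hS6
  exact hS.false_of_card_eq_nine hplanar (by omega)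
end
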